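/- arXiv:1604.05267 — 3 statements merged into one kernel-verified Lean document; each statement's English description precedes it below -/
import Mathlib

section
/- Let k ≥ 2 be an integer and f : (0,∞) → [0,∞). Then f is k-Stieltjes (f ∈ S_k) if and only if there exist a real number a ≥ 0 and a nonnegative Borel measure μ on [0,∞) with ∫_{[0,∞)} (1+t)^{-1} μ(dt) < ∞ such that f(x) = a + ∫_{[0,∞)} Φ_{k-1}(x,t) μ(dt) for every x > 0. -/
open Set MeasureTheory Filter

noncomputable def Pk (k : ℕ) (x : ℝ) : ℝ :=
  ∑ n ∈ Finset.range (k + 1), ((2 * k).choose (n + k) : ℝ) * (-x) ^ n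

noncomputable def Pkhat (k : ℕ) (x : ℝ) : ℝ :=
  Pk k x - ((2 * k).choose k : ℝ)

/-- The kernel `Φ_k(x,t)`. -/
noncomputable def Phi (k : ℕ) (x t : ℝ) : ℝ :=
  x⁻¹ * (if t ≤ x then Pk k (t / x) else -Pkhat k (x / t))

/-- The function `ψ_k`. -/
noncomputable def psiK (k : ℕ) (y : ℝ) : ℝ :=
  if 1 ≤ y then Pk k y⁻¹ else -Pkhat k y

/-- `f` is a `k`-Stieltjes function on `(0,∞)` (for `k ≥ 2`). -/
def IsStieltjesK (k : ℕ) (f : ℝ → ℝ) : Prop :=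
  (∀ x > 0, 0 ≤ f x) ∧
  ContDiffOn ℝ (2 * k - 3 : ℕ) f (Ioi 0) ∧
  (∀ n, 1 ≤ n → n ≤ k - 1 → ∀ x > 0,
    0 ≤ (-1 : ℝ) ^ (n - 1) * iteratedDeriv (2 * n - 1) (fun y => y ^ n * f y) x) ∧
  ConvexOn ℝ (Ioi 0)
    (fun x => (-1 : ℝ) ^ (k - 1) * iteratedDeriv (2 * k - 3) (fun y => y ^ k * f y) x)

/-- `g` is `k`-monotone on the open interval `I`. -/
def KMonotoneOn (k : ℕ) (g : ℝ → ℝ) (I : Set ℝ) : Prop :=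
  if k = 1 then (∀ x ∈ I, 0 ≤ g x) ∧ AntitoneOn g I
  else
    ContDiffOn ℝ (k - 2 : ℕ) g I ∧
    ∀ n ≤ k - 2,
      (∀ x ∈ I, 0 ≤ (-1 : ℝ) ^ n * iteratedDeriv n g x) ∧
      AntitoneOn (fun x => (-1 : ℝ) ^ n * iteratedDeriv n g x) I ∧
      ConvexOn ℝ I (fun x => (-1 : ℝ) ^ n * iteratedDeriv n g x)

/-- `v(w) = (w + √(w²−4))/2`. -/
noncomputable def vOf (w : ℝ) : ℝ := (w + Real.sqrt (w ^ 2 - 4)) / 2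

/-- `F_u(w) = f(uv) f(u/v)`. -/
noncomputable def Fu (f : ℝ → ℝ) (u w : ℝ) : ℝ := f (u * vOf w) * f (u / vOf w)

/-- `f` is `k`-hyperbolically monotone. -/
def IsHMk (k : ℕ) (f : ℝ → ℝ) : Prop :=
  (∀ x > 0, 0 ≤ f x) ∧ ∀ u > 0, KMonotoneOn k (Fu f u) (Ioi 2)

/-- `f` is power regular `k`-hyperbolically monotone. -/
def IsPRHMk (k : ℕ) (f : ℝ → ℝ) : Prop :=
  ∀ p > 0, IsHMk k (fun x => f x ^ p)

/-- `ψ_f(x) = -x (log f)'(x)`. -/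
noncomputable def psiF (f : ℝ → ℝ) (x : ℝ) : ℝ := -x * deriv (fun y => Real.log (f y)) x

/-- `Δ_u(f)`. -/
noncomputable def DeltaU (f : ℝ → ℝ) (u w : ℝ) : ℝ :=
  (psiF f (u * vOf w) - psiF f (u / vOf w)) / (vOf w - (vOf w)⁻¹)

/-- `Δ_{k,u}`. -/
noncomputable def DeltaKU (k : ℕ) (u w : ℝ) : ℝ :=
  (psiK k (u * vOf w) - psiK k (u / vOf w)) / (vOf w - (vOf w)⁻¹)



open Topology ENNReal in
lemma lint_Ioc {φ : ℝ → ℝ} {a b : ℝ} (hab : a ≤ b) (hφ : ∀ x, 0 ≤ φ x)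
    (hi : IntervalIntegrable φ volume a b) :
    ∫⁻ x in Ioc a b, ENNReal.ofReal (φ x) = ENNReal.ofReal (∫ x in a..b, φ x) := by
  rw [intervalIntegral.integral_of_le hab, ofReal_integral_eq_lintegral_ofReal]
  · exact (intervalIntegrable_iff_integrableOn_Ioc_of_le hab).1 hi
  · exact Eventually.of_forall hφ

open Topology ENNReal in
lemma lint_Iic {h φ : ℝ → ℝ} (hφ : ∀ x, 0 ≤ φ x)
    (hi : ∀ a b, IntervalIntegrable φ volume a b)
    (hh : ∀ a b, a ≤ b → h b - h a = ∫ x in a..b, φ x) {c : ℝ}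
    (hc : Tendsto h atBot (𝓝 c)) (s : ℝ) :
    ∫⁻ x in Iic s, ENNReal.ofReal (φ x) = ENNReal.ofReal (h s - c) := by
  have hm : AEMeasurable (fun x => ENNReal.ofReal (φ x)) (volume.restrict (Iic s)) := by
    have : LocallyIntegrable φ volume := by
      rw [locallyIntegrable_iff]
      intro K hK
      obtain ⟨a, b, hab⟩ := bddBelow_bddAbove_iff_subset_Icc.1 ⟨hK.bddBelow, hK.bddAbove⟩
      rcases le_or_gt a b with h1 | h1
      · exact ((intervalIntegrable_iff_integrableOn_Icc_of_le h1 enorm_ne_top).1 (hi a b)).mono_set hab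
      · rw [Icc_eq_empty (not_le.2 h1)] at hab
        rw [subset_empty_iff.1 hab]; exact integrableOn_empty
    exact this.aestronglyMeasurable.aemeasurable.ennreal_ofReal.restrict
  refine (aecover_Ioi (μ := volume.restrict (Iic s)) (tendsto_id (α := ℝ) (x := atBot))).lintegral_eq_of_tendsto _ hm ?_
  have h1 : Tendsto (fun a => ENNReal.ofReal (h s - h a)) atBot (𝓝 (ENNReal.ofReal (h s - c))) :=
    ENNReal.tendsto_ofReal (tendsto_const_nhds.sub hc)
  refine h1.congr' ?_
  filter_upwards [eventually_le_atBot s] with a ha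
  rw [hh a s ha, Measure.restrict_restrict measurableSet_Ioi, ← lint_Ioc ha hφ (hi a s)]
  rfl

open Topology ENNReal in
lemma fub (m : ℝ) (hm : 0 < m) (σ : Measure ℝ) [SFinite σ] (s : ℝ) :
    ∫⁻ r in Iic s, ENNReal.ofReal (Real.exp (m * r)) * σ (Ioi r)
      = ∫⁻ r, ENNReal.ofReal (Real.exp (m * min s r) / m) ∂σ := by
  have e1 : ∀ r, ENNReal.ofReal (Real.exp (m * r)) * σ (Ioi r)
      = ∫⁻ t, (Ioi r).indicator (fun _ => ENNReal.ofReal (Real.exp (m * r))) t ∂σ := by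
    intro r
    rw [lintegral_indicator measurableSet_Ioi]; simp
  simp_rw [e1]
  rw [lintegral_lintegral_swap]
  · refine lintegral_congr fun t => ?_
    have e2 : ∀ r, (Ioi r).indicator (fun _ => ENNReal.ofReal (Real.exp (m * r))) t
        = (Iio t).indicator (fun r => ENNReal.ofReal (Real.exp (m * r))) r := by
      intro r; simp [indicator]
    simp_rw [e2]
    rw [lintegral_indicator measurableSet_Iio, Measure.restrict_restrict measurableSet_Iio,
      Measure.restrict_congr_set (Filter.EventuallyEq.inter (Iio_ae_eq_Iic (μ := volume) (a := t)) (ae_eq_refl (Iic s))), Iic_inter_Iic,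
      ← integral_exp_mul_Iic hm, min_comm,
      ofReal_integral_eq_lintegral_ofReal]
    · exact integrableOn_exp_mul_Iic hm _
    · exact Eventually.of_forall fun x => (Real.exp_pos _).le
  · have : (Function.uncurry fun (r t : ℝ) => (Ioi r).indicator (fun _ => ENNReal.ofReal (Real.exp (m * r))) t)
      = {p : ℝ × ℝ | p.1 < p.2}.indicator (fun p => ENNReal.ofReal (Real.exp (m * p.1))) := by
      ext ⟨r, t⟩; simp [Function.uncurry, indicator]
    rw [this]
    refine Measurable.aemeasurable ?_
    refine Measurable.indicator (by fun_prop) (measurableSet_lt measurable_fst measurable_snd)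

open Topology ENNReal in
lemma meas_Ioi {R : ℝ → ℝ} {σ : Measure ℝ} {b : ℝ}
    (hσ : ∀ x y, x ≤ y → σ (Ioc x y) = ENNReal.ofReal (R x - R y))
    (hb : Tendsto R atTop (𝓝 b)) (r : ℝ) : σ (Ioi r) = ENNReal.ofReal (R r - b) := by
  have h1 : Tendsto (fun n : ℝ => σ (Ioc r n)) atTop (𝓝 (σ (⋃ n, Ioc r n))) :=
    tendsto_measure_iUnion_atTop (fun x y h => Ioc_subset_Ioc_right h)
  rw [iUnion_Ioc_right] at h1
  have h2 : Tendsto (fun a => ENNReal.ofReal (R r - R a)) atTop (𝓝 (ENNReal.ofReal (R r - b))) :=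
    ENNReal.tendsto_ofReal (tendsto_const_nhds.sub hb)
  refine tendsto_nhds_unique h1 (h2.congr' ?_)
  filter_upwards [eventually_ge_atTop r] with a ha
  rw [hσ r a ha]

lemma anti_ii {R : ℝ → ℝ} (hR : Antitone R) (m : ℝ) (a b : ℝ) :
    IntervalIntegrable (fun s => Real.exp (m * s) * R s) volume a b :=
  (hR.intervalIntegrable).continuousOn_mul (by fun_prop)

open Topology ENNReal in
lemma core (m : ℝ) (hm : 0 < m) {h R : ℝ → ℝ} (hR : Antitone R)
    (hint : ∀ a b, a ≤ b → h b - h a = ∫ s in a..b, Real.exp (m * s) * R s)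
    (σ : Measure ℝ) [SFinite σ]
    (hσ : ∀ x y, x ≤ y → σ (Ioc x y) = ENNReal.ofReal (R x - R y))
    {b c : ℝ} (hb : Tendsto R atTop (𝓝 b)) (hb0 : 0 ≤ b) (hc : Tendsto h atBot (𝓝 c)) (hc0 : 0 ≤ c)
    (s : ℝ) :
    c ≤ h s ∧ ENNReal.ofReal (h s) = ENNReal.ofReal c + ENNReal.ofReal (b / m * Real.exp (m * s))
      + ∫⁻ r, ENNReal.ofReal (Real.exp (m * min s r) / m) ∂σ := by
  have hRb : ∀ r, b ≤ R r := fun r => hR.le_of_tendsto hb r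
  have hR0 : ∀ r, 0 ≤ R r := fun r => hb0.trans (hRb r)
  have hφ : ∀ r, 0 ≤ Real.exp (m * r) * R r := fun r => mul_nonneg (Real.exp_pos _).le (hR0 r)
  have hmono : Monotone h := by
    intro x y hxy
    have := hint x y hxy
    have h2 : 0 ≤ ∫ s in x..y, Real.exp (m * s) * R s :=
      intervalIntegral.integral_nonneg hxy fun r _ => hφ r
    linarith
  have hcs : c ≤ h s := hmono.le_of_tendsto hc s
  refine ⟨hcs, ?_⟩
  have h1 := lint_Iic hφ (fun x y => anti_ii hR m x y) hint hc s
  have h2 : ENNReal.ofReal (h s) = ENNReal.ofReal c + ENNReal.ofReal (h s - c) := by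
    rw [← ENNReal.ofReal_add hc0 (by linarith)]; congr 1; ring
  rw [h2, ← h1, add_assoc, ← fub m hm]
  congr 1
  have e : ∀ r, ENNReal.ofReal (Real.exp (m * r) * R r)
      = ENNReal.ofReal b * ENNReal.ofReal (Real.exp (m * r)) + ENNReal.ofReal (Real.exp (m * r)) * σ (Ioi r) := by
    intro r
    rw [meas_Ioi hσ hb, ← ENNReal.ofReal_mul hb0, ← ENNReal.ofReal_mul (Real.exp_pos _).le,
      ← ENNReal.ofReal_add (mul_nonneg hb0 (Real.exp_pos _).le)
        (mul_nonneg (Real.exp_pos _).le (sub_nonneg.2 (hRb r)))]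
    congr 1; ring
  simp_rw [e]
  rw [lintegral_add_left (by fun_prop), lintegral_const_mul _ (by fun_prop)]
  congr 1
  rw [← ofReal_integral_eq_lintegral_ofReal (integrableOn_exp_mul_Iic hm _)
    (Eventually.of_forall fun x => (Real.exp_pos _).le), integral_exp_mul_Iic hm,
    ← ENNReal.ofReal_mul hb0]
  congr 1; ring


noncomputable def Kn (n : ℕ) (s r : ℝ) : ℝ := Real.exp (-(n * |s - r|)) / (2 * n)

lemma Kn_nonneg (n : ℕ) (s r : ℝ) : 0 ≤ Kn n s r := by unfold Kn; positivity

lemma Kn_cont (n : ℕ) : Continuous (fun p : ℝ × ℝ => Kn n p.1 p.2) := by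
  unfold Kn; fun_prop

lemma Kn_meas (n : ℕ) (s : ℝ) : Measurable (fun r => ENNReal.ofReal (Kn n s r)) := by
  unfold Kn; fun_prop

lemma Kn_eq (n : ℕ) (s r : ℝ) : Real.exp (-(n * s)) * (Real.exp (2 * n * min s r) / (2 * n))
    * Real.exp (-(n * r)) = Kn n s r := by
  unfold Kn
  rw [mul_div_assoc', div_mul_eq_mul_div, ← Real.exp_add, ← Real.exp_add]
  congr 2
  rcases le_total s r with h | h
  · rw [min_eq_left h, abs_of_nonpos (by linarith)]; ring
  · rw [min_eq_right h, abs_of_nonneg (by linarith)]; ring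

open Topology ENNReal in
lemma core2 (n : ℕ) (hn : 1 ≤ n) {g R : ℝ → ℝ} (hR : Antitone R)
    (hint : ∀ a b, a ≤ b → Real.exp (n * b) * g b - Real.exp (n * a) * g a
      = ∫ s in a..b, Real.exp (2 * n * s) * R s)
    (ν : Measure ℝ) [SFinite ν]
    (hν : ∀ x y, x ≤ y → ∫⁻ r in Ioc x y, ENNReal.ofReal (Real.exp (-(n * r))) ∂ν
      = ENNReal.ofReal (R x - R y))
    {b c : ℝ} (hb : Tendsto R atTop (𝓝 b)) (hb0 : 0 ≤ b)
    (hc : Tendsto (fun s => Real.exp (n * s) * g s) atBot (𝓝 c)) (hc0 : 0 ≤ c)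
    (s : ℝ) :
    0 ≤ g s ∧ ENNReal.ofReal (g s) = ENNReal.ofReal (c * Real.exp (-(n * s)))
      + ENNReal.ofReal (b / (2 * n) * Real.exp (n * s))
      + ∫⁻ r, ENNReal.ofReal (Kn n s r) ∂ν := by
  have hn' : (0 : ℝ) < 2 * n := by positivity
  have hd : Measurable (fun r : ℝ => ENNReal.ofReal (Real.exp (-(n * r)))) := by fun_prop
  obtain ⟨h1, h2⟩ := core (2 * n) hn' hR hint (ν.withDensity (fun r => ENNReal.ofReal (Real.exp (-(n * r)))))
    (fun x y hxy => by rw [withDensity_apply _ measurableSet_Ioc, hν x y hxy]) hb hb0 hc hc0 s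
  have hg : 0 ≤ g s := by
    have := hc0.trans h1
    exact nonneg_of_mul_nonneg_right this (Real.exp_pos _)
  refine ⟨hg, ?_⟩
  have e0 : g s = Real.exp (-(n * s)) * (Real.exp (n * s) * g s) := by
    rw [← mul_assoc, ← Real.exp_add]; simp
  rw [e0, ENNReal.ofReal_mul (Real.exp_pos _).le, h2, mul_add, mul_add,
    ← ENNReal.ofReal_mul (Real.exp_pos _).le, ← ENNReal.ofReal_mul (Real.exp_pos _).le,
    lintegral_withDensity_eq_lintegral_mul _ hd (by fun_prop), ← lintegral_const_mul _ (by fun_prop)]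
  congr 2
  · rw [mul_comm]
  · congr 1
    rw [mul_left_comm, ← Real.exp_add]; congr 2; ring
  · funext r
    rw [Pi.mul_apply, ← ENNReal.ofReal_mul (Real.exp_pos _).le, ← ENNReal.ofReal_mul (Real.exp_pos _).le,
      ← Kn_eq]
    congr 1; ring

/-! kernel functions -/

noncomputable def Sn (n : ℕ) (y : ℝ) : ℝ :=
  ∑ j ∈ Finset.range (n + 1), ((2 * n).choose (j + n) : ℝ) * (-1) ^ j * Real.exp (-(j * y))
noncomputable def Sn1 (n : ℕ) (y : ℝ) : ℝ :=
  ∑ j ∈ Finset.range (n + 1), ((2 * n).choose (j + n) : ℝ) * (-1) ^ j * (-j * Real.exp (-(j * y)))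
noncomputable def Sn2 (n : ℕ) (y : ℝ) : ℝ :=
  ∑ j ∈ Finset.range (n + 1), ((2 * n).choose (j + n) : ℝ) * (-1) ^ j * (j ^ 2 * Real.exp (-(j * y)))

lemma Sn_deriv (n : ℕ) (y : ℝ) : HasDerivAt (Sn n) (Sn1 n y) y := by
  unfold Sn Sn1
  refine HasDerivAt.fun_sum fun j _ => ?_
  refine HasDerivAt.const_mul _ ?_
  have := (((hasDerivAt_id y).const_mul (j : ℝ)).neg).exp
  refine this.congr_deriv ?_
  simp only [Pi.neg_apply, id]; ring

lemma Sn1_deriv (n : ℕ) (y : ℝ) : HasDerivAt (Sn1 n) (Sn2 n y) y := by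
  unfold Sn1 Sn2
  refine HasDerivAt.fun_sum fun j _ => ?_
  refine HasDerivAt.const_mul _ ?_
  have := ((((hasDerivAt_id y).const_mul (j : ℝ)).neg).exp).const_mul (-j : ℝ)
  refine this.congr_deriv ?_
  simp only [Pi.neg_apply, id]; ring

lemma choose_rec (n j : ℕ) (hj : j ≤ n) :
    (((n + 1 : ℕ) : ℝ) ^ 2 - j ^ 2) * ((2 * (n + 1)).choose (j + (n + 1)) : ℝ)
      = (2 * n + 2) * (2 * n + 1) * ((2 * n).choose (j + n) : ℝ) := by
  obtain ⟨d, rfl⟩ := Nat.exists_eq_add_of_le hj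
  rw [Nat.cast_choose ℝ (by omega), Nat.cast_choose ℝ (by omega)]
  have e1 : 2 * (j + d + 1) - (j + (j + d + 1)) = d + 1 := by omega
  have e2 : 2 * (j + d) - (j + (j + d)) = d := by omega
  have e3 : 2 * (j + d + 1) = (2 * (j + d) + 1) + 1 := by ring
  have e4 : j + (j + d + 1) = (j + (j + d)) + 1 := by ring
  rw [e1, e2, e3, e4, Nat.factorial_succ, Nat.factorial_succ, Nat.factorial_succ (j + (j + d)), Nat.factorial_succ d]
  have := Nat.factorial_pos (2 * (j + d))
  have := Nat.factorial_pos (j + (j + d))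
  have := Nat.factorial_pos d
  push_cast
  field_simp
  ring

lemma Sn_rec (n : ℕ) (y : ℝ) :
    ((n + 1 : ℕ) : ℝ) ^ 2 * Sn (n + 1) y - Sn2 (n + 1) y = (2 * n + 2) * (2 * n + 1) * Sn n y := by
  unfold Sn Sn2
  rw [Finset.mul_sum, Finset.mul_sum, ← Finset.sum_sub_distrib, Finset.sum_range_succ]
  rw [show ((n + 1 : ℕ) : ℝ) ^ 2 * (((2 * (n + 1)).choose (n + 1 + (n + 1)) : ℝ) * (-1) ^ (n + 1) * Real.exp (-((n + 1 : ℕ) * y)))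
     - ((2 * (n + 1)).choose (n + 1 + (n + 1)) : ℝ) * (-1) ^ (n + 1) * (((n + 1 : ℕ) : ℝ) ^ 2 * Real.exp (-((n + 1 : ℕ) * y))) = 0 by ring, add_zero]
  refine Finset.sum_congr rfl fun j hj => ?_
  have := choose_rec n j (by simp at hj; omega)
  linear_combination (-1) ^ j * Real.exp (-(j * y)) * this

lemma Sn_zero (n : ℕ) (hn : 1 ≤ n) : 2 * Sn n 0 = ((2 * n).choose n : ℝ) := by
  obtain ⟨n, rfl⟩ := Nat.exists_eq_add_of_le' hn
  have h := @Int.alternating_sum_range_choose_eq_choose (2 * n + 1) (n + 1)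
  have h2 : Sn (n + 1) 0 = ((2 * n + 1).choose (n + 1) : ℝ) := by
    unfold Sn
    rw [← Finset.sum_range_reflect]
    have h' : (∑ i ∈ Finset.range (n + 1 + 1), ((-1) ^ i * (2 * n + 1 + 1).choose i : ℝ)) = (-1) ^ (n + 1) * (2 * n + 1).choose (n + 1) := by
      exact_mod_cast h
    have : ((2 * n + 1).choose (n + 1) : ℝ) = (-1) ^ (n + 1) * ((-1) ^ (n + 1) * (2 * n + 1).choose (n + 1)) := by
      rw [← mul_assoc, ← mul_pow]; simp
    rw [this, ← h', Finset.mul_sum]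
    refine Finset.sum_congr rfl fun j hj => ?_
    have hj' : j ≤ n + 1 := by simp at hj; omega
    obtain ⟨d, hd⟩ := Nat.exists_eq_add_of_le hj'
    have e1 : n + 1 + 1 - 1 - j = d := by omega
    rw [e1]
    have e2 : (2 * (n + 1)).choose (d + (n + 1)) = (2 * n + 1 + 1).choose j := by
      rw [show 2 * n + 1 + 1 = 2 * (n + 1) by ring]
      exact Nat.choose_symm_of_eq_add (by omega)
    rw [e2, hd]
    simp only [mul_zero, neg_zero, Real.exp_zero, mul_one]
    rw [pow_add]
    have : ((-1 : ℝ) ^ j) * (-1) ^ j = 1 := by rw [← mul_pow]; simp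
    linear_combination (-(-1 : ℝ) ^ d * ((2 * n + 1 + 1).choose j : ℝ)) * this
  rw [h2]
  have := Nat.choose_succ_succ (2 * n + 1) n
  have e : (2 * n + 1).choose n = (2 * n + 1).choose (n + 1) := Nat.choose_symm_of_eq_add (by omega)
  rw [show 2 * (n + 1) = (2 * n + 1).succ by simp; ring, this, e]
  push_cast; ring


noncomputable def pn (n : ℕ) (y : ℝ) : ℝ := psiK n (Real.exp y) / ((2 * n).factorial : ℝ)
noncomputable def pd (n : ℕ) (y : ℝ) : ℝ := Sn1 n |y| / ((2 * n).factorial : ℝ)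
noncomputable def Cn (n : ℕ) : ℝ := ∑ j ∈ Finset.range (n + 1), ((2 * n).choose (j + n) : ℝ)
noncomputable def Cn1 (n : ℕ) : ℝ := ∑ j ∈ Finset.range (n + 1), ((2 * n).choose (j + n) : ℝ) * j

lemma Pk_Sn (n : ℕ) (y : ℝ) : Pk n (Real.exp (-y)) = Sn n y := by
  unfold Pk Sn
  refine Finset.sum_congr rfl fun j _ => ?_
  rw [neg_pow, ← Real.exp_nat_mul, mul_neg]; ring

lemma psiK_exp (n : ℕ) (y : ℝ) : psiK n (Real.exp y)
    = if 0 ≤ y then Sn n y else ((2 * n).choose n : ℝ) - Sn n (-y) := by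
  unfold psiK Pkhat
  have e2 : Pk n (Real.exp y) = Sn n (-y) := by rw [← Pk_Sn, neg_neg]
  rw [← Real.exp_neg, Pk_Sn, e2]
  simp only [Real.one_le_exp_iff]
  split_ifs <;> ring

lemma psiK_exp' (n : ℕ) (hn : 1 ≤ n) (y : ℝ) : psiK n (Real.exp y)
    = if y ≤ 0 then ((2 * n).choose n : ℝ) - Sn n (-y) else Sn n y := by
  rw [psiK_exp]
  rcases lt_trichotomy y 0 with h | h | h
  · rw [if_neg (by linarith), if_pos h.le]
  · subst h; have := Sn_zero n hn; simp; linarith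
  · rw [if_pos h.le, if_neg (by linarith)]

lemma Sn_cont (n : ℕ) : Continuous (Sn n) := by unfold Sn; fun_prop
lemma Sn1_cont (n : ℕ) : Continuous (Sn1 n) := by unfold Sn1; fun_prop

lemma pn_meas (n : ℕ) : Measurable (pn n) := by
  have : pn n = fun y => (if 0 ≤ y then Sn n y else ((2 * n).choose n : ℝ) - Sn n (-y)) / ((2 * n).factorial : ℝ) := by
    ext y; unfold pn; rw [psiK_exp]
  rw [this]
  have := (Sn_cont n).measurable
  exact (Measurable.ite measurableSet_Ici this (measurable_const.sub (this.comp measurable_neg))).div_const _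

lemma pn_cont (n : ℕ) (hn : 1 ≤ n) : Continuous (pn n) := by
  have : pn n = fun y => (if 0 ≤ y then Sn n y else ((2 * n).choose n : ℝ) - Sn n (-y)) / ((2 * n).factorial : ℝ) := by
    ext y; unfold pn; rw [psiK_exp]
  rw [this]
  have := (Sn_cont n)
  refine Continuous.div_const (Continuous.if_le this (by fun_prop) continuous_const continuous_id ?_) _
  intro x hx; simp only [id] at hx; subst hx
  have := Sn_zero n hn; simp; linarith

lemma pd_cont (n : ℕ) : Continuous (pd n) := by
  unfold pd; exact ((Sn1_cont n).comp continuous_abs).div_const _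

lemma pn_right (n : ℕ) (y : ℝ) : HasDerivWithinAt (pn n) (pd n y) (Ioi y) y := by
  unfold pn pd
  refine HasDerivWithinAt.div_const ?_ _
  rcases le_or_gt 0 y with h | h
  · rw [abs_of_nonneg h]
    refine (Sn_deriv n y).hasDerivWithinAt.congr ?_ ?_
    · intro x hx; rw [psiK_exp, if_pos (h.trans (le_of_lt hx))]
    · rw [psiK_exp, if_pos h]
  · rw [abs_of_neg h]
    have h1 : HasDerivAt (fun y => ((2 * n).choose n : ℝ) - Sn n (-y)) (Sn1 n (-y)) y := by
      have := ((Sn_deriv n (-y)).comp y (hasDerivAt_neg y)).const_sub ((2 * n).choose n : ℝ)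
      refine this.congr_deriv ?_; ring
    refine (h1.congr_of_eventuallyEq ?_).hasDerivWithinAt
    filter_upwards [Iio_mem_nhds h] with x hx
    rw [psiK_exp, if_neg (not_le.2 hx)]

lemma pd_right (n : ℕ) (y : ℝ) :
    HasDerivWithinAt (pd (n + 1)) (((n + 1 : ℕ) : ℝ) ^ 2 * pn (n + 1) y - pn n y) (Ioi y) y := by
  have hfac : (((2 * (n + 1)).factorial : ℕ) : ℝ) = (2 * n + 2) * (2 * n + 1) * ((2 * n).factorial : ℝ) := by
    rw [show 2 * (n + 1) = 2 * n + 1 + 1 by ring, Nat.factorial_succ, Nat.factorial_succ]; push_cast; ring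
  have hp := Nat.factorial_pos (2 * n)
  have hp' : ((2 * n).factorial : ℝ) ≠ 0 := by positivity
  have e : ((n + 1 : ℕ) : ℝ) ^ 2 * pn (n + 1) y - pn n y = (((n + 1 : ℕ) : ℝ) ^ 2 * psiK (n + 1) (Real.exp y)
      - (2 * n + 2) * (2 * n + 1) * psiK n (Real.exp y)) / ((2 * (n + 1)).factorial : ℝ) := by
    unfold pn; rw [hfac]; field_simp
  rw [e]
  unfold pd
  refine HasDerivWithinAt.div_const ?_ _
  rw [psiK_exp, psiK_exp]
  rcases le_or_gt 0 y with h | h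
  · rw [if_pos h, if_pos h]
    have h2 := (Sn1_deriv (n + 1) y).hasDerivWithinAt (s := Ioi y)
    have := Sn_rec n y
    refine (h2.congr_deriv (by linarith)).congr ?_ ?_
    · intro x hx; rw [abs_of_nonneg (h.trans (le_of_lt hx))]
    · rw [abs_of_nonneg h]
  · rw [if_neg (not_le.2 h), if_neg (not_le.2 h)]
    have h1 : HasDerivAt (fun y => Sn1 (n + 1) (-y)) (-Sn2 (n + 1) (-y)) y := by
      have := ((Sn1_deriv (n + 1) (-y)).comp y (hasDerivAt_neg y))
      refine this.congr_deriv ?_; ring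
    have h3 := choose_rec n 0 (by omega)
    have := Sn_rec n (-y)
    simp only [zero_add] at h3
    refine ((h1.congr_deriv ?_).congr_of_eventuallyEq ?_).hasDerivWithinAt
    · linear_combination this - h3
    · filter_upwards [Iio_mem_nhds h] with x hx
      rw [abs_of_neg hx]

lemma Cn_nonneg (n : ℕ) : 0 ≤ Cn n := by unfold Cn; positivity

lemma psiK_bound1 (n : ℕ) (y : ℝ) (hy : 0 ≤ y) : |Sn n y| ≤ Cn n := by
  unfold Sn Cn
  refine (Finset.abs_sum_le_sum_abs _ _).trans (Finset.sum_le_sum fun j _ => ?_)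
  rw [abs_mul, abs_mul, abs_pow]
  simp only [abs_neg, abs_one, one_pow, mul_one, Nat.abs_cast, Real.abs_exp]
  have : Real.exp (-(j * y)) ≤ 1 := by rw [Real.exp_le_one_iff]; have : 0 ≤ j * y := by positivity
                                       linarith
  have h0 : (0 : ℝ) ≤ ((2 * n).choose (j + n) : ℝ) := by positivity
  nlinarith

lemma psiK_bound2 (n : ℕ) (y : ℝ) (hy : 0 ≤ y) : |((2 * n).choose n : ℝ) - Sn n y| ≤ Cn n * Real.exp (-y) := by
  unfold Sn Cn
  rw [Finset.sum_range_succ']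
  simp only [pow_zero, zero_add, mul_one, Nat.cast_zero, zero_mul, neg_zero, Real.exp_zero]
  rw [show ∀ a b : ℝ, a - (b + a) = -b by intros; ring, abs_neg, Finset.sum_range_succ', add_mul]
  refine le_trans ((Finset.abs_sum_le_sum_abs _ _).trans ?_) (le_add_of_nonneg_right (by positivity))
  rw [Finset.sum_mul]
  refine Finset.sum_le_sum fun j _ => ?_
  rw [abs_mul, abs_mul, abs_pow]
  simp only [abs_neg, abs_one, one_pow, mul_one, Nat.abs_cast, Real.abs_exp]
  gcongr
  push_cast
  have : 0 ≤ j * y := by positivity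
  linarith

lemma pn_bound (n : ℕ) (y : ℝ) : |psiK n (Real.exp y)| ≤ Cn n * min 1 (Real.exp y) := by
  rw [psiK_exp]
  split_ifs with h
  · rw [min_eq_left (Real.one_le_exp h), mul_one]; exact psiK_bound1 n y h
  · rw [min_eq_right (Real.exp_le_one_iff.2 (by linarith))]
    have := psiK_bound2 n (-y) (by linarith)
    rwa [neg_neg] at this

lemma pn_bdd (n : ℕ) : ∃ C, ∀ y, |pn n y| ≤ C := by
  refine ⟨Cn n, fun y => ?_⟩
  unfold pn
  rw [abs_div, Nat.abs_cast]
  have h1 : (1 : ℝ) ≤ ((2 * n).factorial : ℝ) := by exact_mod_cast Nat.factorial_pos _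
  refine (div_le_self (abs_nonneg _) h1).trans ((pn_bound n y).trans ?_)
  exact mul_le_of_le_one_right (Cn_nonneg n) (min_le_left _ _)

lemma pd_bdd (n : ℕ) : ∃ C, ∀ y, |pd n y| ≤ C := by
  refine ⟨Cn1 n, fun y => ?_⟩
  unfold pd
  rw [abs_div, Nat.abs_cast]
  have h1 : (1 : ℝ) ≤ ((2 * n).factorial : ℝ) := by exact_mod_cast Nat.factorial_pos _
  refine (div_le_self (abs_nonneg _) h1).trans ?_
  unfold Sn1 Cn1
  refine (Finset.abs_sum_le_sum_abs _ _).trans (Finset.sum_le_sum fun j _ => ?_)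
  rw [abs_mul, abs_mul, abs_pow, abs_mul]
  simp only [abs_neg, abs_one, one_pow, mul_one, Nat.abs_cast, Real.abs_exp]
  have : Real.exp (-(j * |y|)) ≤ 1 := by rw [Real.exp_le_one_iff]; have : 0 ≤ j * |y| := by positivity
                                         linarith
  gcongr
  exact mul_le_of_le_one_right (by positivity) this

lemma pn_ii (n : ℕ) (a b : ℝ) : IntervalIntegrable (pn n) volume a b := by
  obtain ⟨C, hC⟩ := pn_bdd n
  rw [intervalIntegrable_iff]
  refine Measure.integrableOn_of_bounded (M := C) ?_ (pn_meas n).aestronglyMeasurable ?_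
  · simp
  · exact Eventually.of_forall fun y => hC y

open Topology ENNReal in
lemma pn_conv (n : ℕ) (h0 : ∀ y, 0 ≤ pn n y) (y : ℝ) : 0 ≤ pn (n + 1) y ∧
    ENNReal.ofReal (pn (n + 1) y) = ∫⁻ r, ENNReal.ofReal (Kn (n + 1) y r) * ENNReal.ofReal (pn n r) := by
  set N : ℝ := ((n + 1 : ℕ) : ℝ) with hN
  have hNp : 0 < N := by positivity
  set R : ℝ → ℝ := fun y => Real.exp (-(N * y)) * (N * pn (n + 1) y + pd (n + 1) y) with hR
  have hpc := pn_cont (n + 1) (by omega)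
  have hdc := pd_cont (n + 1)
  have hRc : Continuous R := by rw [hR]; fun_prop
  have hexp : ∀ c y : ℝ, HasDerivAt (fun y => Real.exp (c * y)) (Real.exp (c * y) * c) y := by
    intro c y
    have := ((hasDerivAt_id y).const_mul c).exp
    simpa using this
  have hRd : ∀ y, HasDerivWithinAt R (-(Real.exp (-(N * y)) * pn n y)) (Ioi y) y := by
    intro y
    have h1 := (hexp (-N) y).hasDerivWithinAt (s := Ioi y)
    have h2 := h1.mul (((pn_right (n + 1) y).const_mul N).add (pd_right n y))
    simp only [neg_mul] at h2
    refine h2.congr_deriv ?_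
    simp only [Pi.add_apply, ← hN]
    ring
  have hint2 : ∀ a b, a ≤ b → ∫ s in a..b, Real.exp (-(N * s)) * pn n s = R a - R b := by
    intro a b hab
    have := intervalIntegral.integral_eq_sub_of_hasDeriv_right_of_le hab hRc.continuousOn
      (fun x _ => hRd x) (((pn_ii n a b).continuousOn_mul (g := fun s => Real.exp (-(N * s))) (by fun_prop)).neg)
    rw [intervalIntegral.integral_neg] at this
    linarith
  have hnn : ∀ s, 0 ≤ Real.exp (-(N * s)) * pn n s := fun s => mul_nonneg (Real.exp_pos _).le (h0 s)
  have hRa : Antitone R := by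
    intro a b hab
    have := hint2 a b hab
    have h2 := intervalIntegral.integral_nonneg (μ := volume) hab fun r _ => hnn r
    linarith
  have hint : ∀ a b, a ≤ b → Real.exp (N * b) * pn (n + 1) b - Real.exp (N * a) * pn (n + 1) a
      = ∫ s in a..b, Real.exp (2 * N * s) * R s := by
    intro a b hab
    refine (intervalIntegral.integral_eq_sub_of_hasDeriv_right_of_le (f := fun s => Real.exp (N * s) * pn (n + 1) s)
      hab (by fun_prop) (fun x _ => ?_) ?_).symm
    · have h1 := (hexp N x).hasDerivWithinAt (s := Ioi x)
      refine (h1.mul (pn_right (n + 1) x)).congr_deriv ?_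
      simp only [hR]
      rw [← mul_assoc, ← Real.exp_add, show 2 * N * x + -(N * x) = N * x by ring]; ring
    · exact Continuous.intervalIntegrable (by fun_prop) _ _
  obtain ⟨C1, hC1⟩ := pn_bdd (n + 1)
  obtain ⟨C2, hC2⟩ := pd_bdd (n + 1)
  have hlim1 : Tendsto R atTop (𝓝 0) := by
    have hz : Tendsto (fun y : ℝ => Real.exp (-(N * y))) atTop (𝓝 0) := by
      refine Real.tendsto_exp_neg_atTop_nhds_zero.comp ?_
      exact tendsto_id.const_mul_atTop hNp
    refine hz.zero_mul_isBoundedUnder_le ?_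
    refine isBoundedUnder_of ⟨N * C1 + C2, fun y => ?_⟩
    simp only [Function.comp, Real.norm_eq_abs]
    refine (abs_add_le _ _).trans (add_le_add ?_ (hC2 y))
    rw [abs_mul, abs_of_pos hNp]; gcongr; exact hC1 y
  have hlim2 : Tendsto (fun s => Real.exp (N * s) * pn (n + 1) s) atBot (𝓝 0) := by
    have hz : Tendsto (fun y : ℝ => Real.exp (N * y)) atBot (𝓝 0) := by
      refine Real.tendsto_exp_atBot.comp ?_
      exact tendsto_id.const_mul_atBot hNp
    refine hz.zero_mul_isBoundedUnder_le ?_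
    exact isBoundedUnder_of ⟨C1, fun y => hC1 y⟩
  have hpm : Measurable (fun r => ENNReal.ofReal (pn n r)) := (pn_meas n).ennreal_ofReal
  have key := core2 (n + 1) (by omega) hRa hint (volume.withDensity fun r => ENNReal.ofReal (pn n r))
    (fun x y hxy => by
      rw [restrict_withDensity measurableSet_Ioc, lintegral_withDensity_eq_lintegral_mul _ hpm (by fun_prop), ← hint2 x y hxy,
        ← lint_Ioc hxy hnn]
      · refine lintegral_congr fun r => ?_
        rw [Pi.mul_apply, ENNReal.ofReal_mul (Real.exp_pos _).le, mul_comm]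
      · exact (pn_ii n x y).continuousOn_mul (g := fun s => Real.exp (-(N * s))) (by fun_prop)) hlim1 le_rfl hlim2 le_rfl y
  refine ⟨key.1, ?_⟩
  rw [key.2, lintegral_withDensity_eq_lintegral_mul _ hpm (Kn_meas _ _)]
  simp [mul_comm]

lemma pn_nonneg (n : ℕ) : ∀ y, 0 ≤ pn n y := by
  induction n with
  | zero =>
    intro y
    unfold pn; rw [psiK_exp]
    split_ifs <;> simp [Sn]
  | succ n ih => exact fun y => (pn_conv n ih y).1

lemma pn_rec (n : ℕ) (y : ℝ) : 
    ENNReal.ofReal (pn (n + 1) y) = ∫⁻ r, ENNReal.ofReal (Kn (n + 1) y r) * ENNReal.ofReal (pn n r) :=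
  (pn_conv n (pn_nonneg n) y).2

lemma pn_zero (y : ℝ) : pn 0 y = if 0 ≤ y then 1 else 0 := by
  unfold pn; rw [psiK_exp]; simp [Sn]

/-- convolution form -/
lemma pn_rec' (n : ℕ) (s r : ℝ) : 
    ENNReal.ofReal (pn (n + 1) (s - r)) = ∫⁻ q, ENNReal.ofReal (pn n (s - q)) * ENNReal.ofReal (Kn (n + 1) q r) := by
  rw [pn_rec, ← lintegral_sub_left_eq_self _ s]
  refine lintegral_congr fun q => ?_
  rw [mul_comm]
  congr 2
  unfold Kn; congr 4; congr 1; ring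

lemma pn_lower (n : ℕ) : ∃ c > 0, ∀ y, c * min 1 (Real.exp y) ≤ pn (n + 1) y := by
  induction n with
  | zero =>
    refine ⟨1/2, by norm_num, fun y => ?_⟩
    unfold pn; rw [psiK_exp]
    split_ifs with h
    · simp [Sn, Finset.sum_range_succ]
      have : Real.exp (-y) ≤ 1 := Real.exp_le_one_iff.2 (by linarith)
      have := min_le_left 1 (Real.exp y)
      linarith
    · simp [Sn, Finset.sum_range_succ]
      have := min_le_right 1 (Real.exp y)
      linarith
  | succ n ih =>
    obtain ⟨c, hc, h⟩ := ih
    refine ⟨c * (Real.exp (-((n + 1 + 1 : ℕ) : ℝ)) / (2 * ((n + 1 + 1 : ℕ) : ℝ))), by positivity, fun y => ?_⟩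
    have h1 := pn_rec (n + 1) y
    rw [← ENNReal.ofReal_le_ofReal_iff (pn_nonneg _ _), h1]
    calc _ = ∫⁻ r in Icc y (y + 1), ENNReal.ofReal (c * (Real.exp (-((n + 1 + 1 : ℕ) : ℝ)) / (2 * ((n + 1 + 1 : ℕ) : ℝ))) * min 1 (Real.exp y)) := by
            simp
      _ ≤ ∫⁻ r in Icc y (y + 1), ENNReal.ofReal (Kn (n + 1 + 1) y r) * ENNReal.ofReal (pn (n + 1) r) := by
            refine setLIntegral_mono' measurableSet_Icc fun r hr => ?_
            rw [← ENNReal.ofReal_mul (Kn_nonneg _ _ _)]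
            refine ENNReal.ofReal_le_ofReal ?_
            rw [mul_comm c, mul_assoc]
            refine mul_le_mul ?_ ?_ (by positivity) (Kn_nonneg _ _ _)
            · unfold Kn
              gcongr
              refine mul_le_of_le_one_right (by positivity) ?_
              rw [abs_le]; constructor <;> linarith [hr.1, hr.2]
            · refine le_trans ?_ (h r)
              gcongr
              exact hr.1
      _ ≤ _ := setLIntegral_le_lintegral _ _


lemma hasDerivAt_exp_mul (c y : ℝ) : HasDerivAt (fun y => Real.exp (c * y)) (Real.exp (c * y) * c) y := by
  have := ((hasDerivAt_id y).const_mul c).exp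
  simpa using this

lemma R_nonneg (m : ℝ) (hm : 0 < m) {h R : ℝ → ℝ} (hh : ∀ s, 0 ≤ h s) (hR : Antitone R)
    (hint : ∀ a b, a ≤ b → h b - h a = ∫ s in a..b, Real.exp (m * s) * R s) (s : ℝ) : 0 ≤ R s := by
  by_contra hneg
  push Not at hneg
  have h1 : ∀ t, s ≤ t → h t - h s ≤ (t - s) * (Real.exp (m * s) * R s) := by
    intro t ht
    rw [hint s t ht]
    have : ∫ r in s..t, Real.exp (m * r) * R r ≤ ∫ r in s..t, Real.exp (m * s) * R s := by
      refine intervalIntegral.integral_mono_on ht (anti_ii hR m s t) (by simp) ?_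
      intro x hx
      have e1 : Real.exp (m * s) ≤ Real.exp (m * x) := by
        apply Real.exp_le_exp.2; exact mul_le_mul_of_nonneg_left hx.1 hm.le
      have e2 := hR hx.1
      have e3 := Real.exp_pos (m * s)
      nlinarith
    rw [intervalIntegral.integral_const, smul_eq_mul] at this
    exact this
  set d := -(Real.exp (m * s) * R s) with hd
  have hdp : 0 < d := by
    have := Real.exp_pos (m * s)
    rw [hd]; nlinarith
  have h2 := h1 (s + (h s + 1) / d) (by have := hh s; have : 0 ≤ (h s + 1) / d := by positivity
                                        linarith)
  have h3 := hh (s + (h s + 1) / d)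
  have h4 : (s + (h s + 1) / d - s) * (Real.exp (m * s) * R s) = -(h s + 1) := by
    rw [show Real.exp (m * s) * R s = -d by rw [hd]; ring]
    field_simp
    ring
  linarith

open Topology in
lemma step_core (n : ℕ) (hn : 1 ≤ n) {g R : ℝ → ℝ} (hg : ∀ s, 0 ≤ g s) (hR : Antitone R)
    (hint : ∀ a b, a ≤ b → Real.exp (n * b) * g b - Real.exp (n * a) * g a
      = ∫ s in a..b, Real.exp (2 * n * s) * R s)
    (ν : Measure ℝ) [SFinite ν]
    (hν : ∀ x y, x ≤ y → ∫⁻ r in Ioc x y, ENNReal.ofReal (Real.exp (-(n * r))) ∂ν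
      = ENNReal.ofReal (R x - R y)) :
    ∃ A B : ℝ, 0 ≤ A ∧ 0 ≤ B ∧ ∀ s, ENNReal.ofReal (g s) = ENNReal.ofReal (B * Real.exp (-(n * s)))
      + ENNReal.ofReal (A * Real.exp (n * s))
      + ∫⁻ r, ENNReal.ofReal (Kn n s r) ∂ν := by
  have hn' : (0 : ℝ) < 2 * n := by positivity
  have hh : ∀ s, 0 ≤ Real.exp (n * s) * g s := fun s => mul_nonneg (Real.exp_pos _).le (hg s)
  have hR0 : ∀ s, 0 ≤ R s := R_nonneg (2 * n) hn' (h := fun s => Real.exp (n * s) * g s) hh hR hint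
  have hmono : Monotone (fun s => Real.exp (n * s) * g s) := by
    intro x y hxy
    have := hint x y hxy
    have h2 : 0 ≤ ∫ s in x..y, Real.exp (2 * n * s) * R s :=
      intervalIntegral.integral_nonneg hxy fun r _ => mul_nonneg (Real.exp_pos _).le (hR0 r)
    simp only; linarith
  have hb := tendsto_atTop_ciInf hR ⟨0, by rintro _ ⟨s, rfl⟩; exact hR0 s⟩
  have hc := tendsto_atBot_ciInf hmono ⟨0, by rintro _ ⟨s, rfl⟩; exact hh s⟩
  have hb0 : 0 ≤ ⨅ i, R i := le_ciInf hR0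
  have hc0 := le_ciInf hh
  refine ⟨_, _, ?_, hc0, fun s => (core2 n hn hR hint ν hν hb hb0 hc hc0 s).2⟩
  positivity

lemma step_smooth (n : ℕ) (hn : 1 ≤ n) {g g' G : ℝ → ℝ} (hg : ∀ s, 0 ≤ g s) (hG : ∀ s, 0 ≤ G s)
    (hGc : Continuous G) (h1 : ∀ s, HasDerivAt g (g' s) s)
    (h2 : ∀ s, HasDerivAt g' (n ^ 2 * g s - G s) s) :
    ∃ A B : ℝ, 0 ≤ A ∧ 0 ≤ B ∧ ∀ s, ENNReal.ofReal (g s) = ENNReal.ofReal (B * Real.exp (-(n * s)))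
      + ENNReal.ofReal (A * Real.exp (n * s))
      + ∫⁻ r, ENNReal.ofReal (Kn n s r) * ENNReal.ofReal (G r) := by
  set R : ℝ → ℝ := fun y => Real.exp (-(n * y)) * (n * g y + g' y) with hR
  have hgc : Continuous g := continuous_iff_continuousAt.2 fun s => (h1 s).continuousAt
  have hgc' : Continuous g' := continuous_iff_continuousAt.2 fun s => (h2 s).continuousAt
  have hRd : ∀ y, HasDerivAt R (-(Real.exp (-(n * y)) * G y)) y := by
    intro y
    have h3 := (hasDerivAt_exp_mul (-n) y).mul (((h1 y).const_mul (n : ℝ)).add (h2 y))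
    simp only [neg_mul] at h3
    refine h3.congr_deriv ?_
    simp only [Pi.add_apply]
    ring
  have hint2 : ∀ a b : ℝ, ∫ s in a..b, Real.exp (-(n * s)) * G s = R a - R b := by
    intro a b
    have := intervalIntegral.integral_eq_sub_of_hasDerivAt (a := a) (b := b)
      (fun x _ => hRd x) (Continuous.intervalIntegrable (by fun_prop) _ _)
    rw [intervalIntegral.integral_neg] at this
    linarith
  have hnn : ∀ s, 0 ≤ Real.exp (-(n * s)) * G s := fun s => mul_nonneg (Real.exp_pos _).le (hG s)
  have hRa : Antitone R := by
    intro a b hab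
    have := hint2 a b
    have h2 := intervalIntegral.integral_nonneg (μ := volume) hab fun r _ => hnn r
    linarith
  have hint : ∀ a b, a ≤ b → Real.exp (n * b) * g b - Real.exp (n * a) * g a
      = ∫ s in a..b, Real.exp (2 * n * s) * R s := by
    intro a b hab
    refine (intervalIntegral.integral_eq_sub_of_hasDerivAt (f := fun s => Real.exp (n * s) * g s)
      (fun x _ => ?_) ?_).symm
    · refine ((hasDerivAt_exp_mul n x).mul (h1 x)).congr_deriv ?_
      simp only [hR]
      rw [← mul_assoc, ← Real.exp_add, show 2 * n * x + -(n * x) = n * x by ring]; ring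
    · exact Continuous.intervalIntegrable (by fun_prop) _ _
  have hpm : Measurable (fun r => ENNReal.ofReal (G r)) := by fun_prop
  obtain ⟨A, B, hA, hB, h⟩ := step_core n hn hg hRa hint (volume.withDensity fun r => ENNReal.ofReal (G r)) 
    (fun x y hxy => by
      rw [restrict_withDensity measurableSet_Ioc, lintegral_withDensity_eq_lintegral_mul _ hpm (by fun_prop), ← hint2 x y,
        ← lint_Ioc hxy hnn]
      · refine lintegral_congr fun r => ?_
        rw [Pi.mul_apply, ENNReal.ofReal_mul (Real.exp_pos _).le, mul_comm]
      · exact Continuous.intervalIntegrable (by fun_prop) _ _)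
  refine ⟨A, B, hA, hB, fun s => ?_⟩
  rw [h s, lintegral_withDensity_eq_lintegral_mul _ hpm (Kn_meas _ _)]
  simp [mul_comm]

lemma step_last (n : ℕ) (hn : 1 ≤ n) {g R : ℝ → ℝ} (hg : ∀ s, 0 ≤ g s) (hR : Antitone R)
    (hint : ∀ a b, a ≤ b → Real.exp (n * b) * g b - Real.exp (n * a) * g a
      = ∫ s in a..b, Real.exp (2 * n * s) * R s) :
    ∃ (ν : Measure ℝ), SFinite ν ∧ 
    ∃ A B : ℝ, 0 ≤ A ∧ 0 ≤ B ∧ ∀ s, ENNReal.ofReal (g s) = ENNReal.ofReal (B * Real.exp (-(n * s)))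
      + ENNReal.ofReal (A * Real.exp (n * s))
      + ∫⁻ r, ENNReal.ofReal (Kn n s r) ∂ν := by
  have hm : Monotone (fun s => - R s) := fun a b hab => neg_le_neg (hR hab)
  set F := hm.stieltjesFunction with hF
  have hae : ∀ᵐ s, - F s = R s := by
    have : {x | ¬ ContinuousAt (fun s => -R s) x}.Countable := hm.countable_not_continuousAt
    have h2 : ∀ᵐ x, x ∉ {x | ¬ ContinuousAt (fun s => -R s) x} := this.ae_notMem volume
    filter_upwards [h2] with x hx
    have hx := not_not.1 hx
    rw [hF, hm.stieltjesFunction_eq, (hx.continuousWithinAt).rightLim_eq]; ring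
  have hR' : Antitone (fun s => - F s) := fun a b hab => neg_le_neg (F.mono hab)
  have hd : Measurable (fun r : ℝ => ENNReal.ofReal (Real.exp (n * r))) := by fun_prop
  refine ⟨F.measure.withDensity (fun r => ENNReal.ofReal (Real.exp (n * r))), inferInstance, ?_⟩
  refine step_core n hn hg hR' ?_ _ ?_
  · intro a b hab
    rw [hint a b hab]
    refine intervalIntegral.integral_congr_ae ?_
    filter_upwards [hae] with x hx _
    rw [hx]
  · intro x y hxy
    rw [restrict_withDensity measurableSet_Ioc, lintegral_withDensity_eq_lintegral_mul _ hd (by fun_prop)]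
    have : ((fun r : ℝ => ENNReal.ofReal (Real.exp (n * r))) * fun r => ENNReal.ofReal (Real.exp (-(n * r)))) = fun _ => 1 := by
      ext r
      rw [Pi.mul_apply, ← ENNReal.ofReal_mul (Real.exp_pos _).le, ← Real.exp_add]; simp
    rw [this]
    simp only [lintegral_const, one_mul, Measure.restrict_apply_univ]
    rw [F.measure_Ioc]; congr 1; ring

/-- concavity to integral -/
lemma concave_to_int (N : ℕ) (hN : 1 ≤ N) {U V Q : ℝ → ℝ} (hU : ∀ x > 0, HasDerivAt U (V x) x)
    (hV : ContinuousOn V (Ioi 0))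
    (hQ : ∀ x > 0, Q x = x * V x + (2 * N - 1) * U x) (hc : ConcaveOn ℝ (Ioi 0) Q) :
    ∃ R : ℝ → ℝ, Antitone R ∧ ∀ a b, a ≤ b →
      Real.exp (2 * N * b) * V (Real.exp b) - Real.exp (2 * N * a) * V (Real.exp a)
      = ∫ s in a..b, Real.exp (2 * N * s) * R s := by
  have hcv : ConvexOn ℝ (Ioi 0) (-Q) := hc.neg
  set D : ℝ → ℝ := fun x => derivWithin (-Q) (Ioi x) x with hD
  have hDd : ∀ x > 0, HasDerivWithinAt (-Q) (D x) (Ioi x) x := fun x hx =>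
    hcv.hasDerivWithinAt_rightDeriv_of_mem_interior (by rwa [interior_Ioi])
  have hDm : MonotoneOn D (Ioi 0) := by
    have := hcv.monotoneOn_rightDeriv
    rwa [interior_Ioi] at this
  have hRa : Antitone (fun s => - D (Real.exp s)) := fun a b hab =>
    neg_le_neg (hDm (Real.exp_pos a) (Real.exp_pos b) (Real.exp_le_exp.2 hab))
  refine ⟨fun s => - D (Real.exp s), hRa, ?_⟩
  intro a b hab
  have hVc : Continuous (fun s => V (Real.exp s)) := 
    continuousOn_univ.1 (hV.comp Real.continuous_exp.continuousOn fun x _ => Real.exp_pos x)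
  refine (intervalIntegral.integral_eq_sub_of_hasDeriv_right_of_le (f := fun s => Real.exp (2 * N * s) * V (Real.exp s))
    hab (((by fun_prop : Continuous fun s : ℝ => Real.exp (2 * N * s)).mul hVc).continuousOn) (fun s _ => ?_) (anti_ii hRa _ _ _)).symm
  have he : 0 < Real.exp s := Real.exp_pos s
  -- right derivative of V at e^s
  have h1 : HasDerivWithinAt (fun s => (- Q) (Real.exp s)) (D (Real.exp s) * Real.exp s) (Ioi s) s :=
    (hDd _ he).comp s (Real.hasDerivAt_exp s).hasDerivWithinAt (fun x hx => Real.exp_lt_exp.2 hx)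
  have h2 : HasDerivAt (fun s => U (Real.exp s)) (V (Real.exp s) * Real.exp s) s :=
    (hU _ he).comp s (Real.hasDerivAt_exp s)
  have h3 : HasDerivWithinAt (fun s => Real.exp ((2 * N - 1) * s) * (-((- Q) (Real.exp s)) - (2 * N - 1) * U (Real.exp s))) 
     (Real.exp ((2 * N - 1) * s) * (2 * N - 1) * (-((- Q) (Real.exp s)) - (2 * N - 1) * U (Real.exp s))
      + Real.exp ((2 * N - 1) * s) * (-(D (Real.exp s) * Real.exp s) - (2 * N - 1) * (V (Real.exp s) * Real.exp s))) (Ioi s) s :=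
    (hasDerivAt_exp_mul (2 * N - 1) s).hasDerivWithinAt.mul (h1.neg.sub (h2.hasDerivWithinAt.const_mul (2 * N - 1 : ℝ)))
  have e0 : ∀ s, Real.exp (2 * N * s) * V (Real.exp s) = 
      Real.exp ((2 * N - 1) * s) * (-((- Q) (Real.exp s)) - (2 * N - 1) * U (Real.exp s)) := by
    intro s
    rw [Pi.neg_apply, hQ _ (Real.exp_pos s), show 2 * N * s = (2 * N - 1) * s + s by ring, Real.exp_add]
    ring
  refine (h3.congr_deriv ?_).congr (fun x _ => e0 x) (e0 s)
  rw [Pi.neg_apply, hQ _ he, show 2 * N * s = (2 * N - 1) * s + s by ring, Real.exp_add]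
  ring

lemma int_to_concave (N : ℕ) {U V Q : ℝ → ℝ} (hU : ∀ x > 0, HasDerivAt U (V x) x)
    (hQ : ∀ x > 0, Q x = x * V x + (2 * N - 1) * U x) {R : ℝ → ℝ} (hR : Antitone R)
    (hV : Continuous fun s => V (Real.exp s))
    (hd : ∀ s, HasDerivWithinAt (fun s => Real.exp (2 * N * s) * V (Real.exp s)) (Real.exp (2 * N * s) * R s) (Ioi s) s) :
    ConcaveOn ℝ (Ioi 0) Q := by
  -- right derivative of Q at x is R (log x)
  have hV' : ContinuousOn V (Ioi 0) := by
    have : ContinuousOn (fun x => V (Real.exp (Real.log x))) (Ioi 0) :=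
      hV.comp_continuousOn (Real.continuousOn_log.mono fun x hx => ne_of_gt hx)
    refine this.congr fun x hx => ?_
    simp only; rw [Real.exp_log hx]
  have hUc : ContinuousOn U (Ioi 0) := fun x hx => (hU x hx).continuousAt.continuousWithinAt
  have hQc : ContinuousOn Q (Ioi 0) := by
    refine ContinuousOn.congr (f := fun x => x * V x + (2 * N - 1) * U x) ?_ hQ
    fun_prop
  have hQd : ∀ x > 0, HasDerivWithinAt Q (R (Real.log x)) (Ioi x) x := by
    intro x hx
    have hlog : HasDerivWithinAt Real.log (x⁻¹) (Ioi x) x := (Real.hasDerivAt_log hx.ne').hasDerivWithinAt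
    have h1 := (hd (Real.log x)).comp x hlog (fun y hy => Real.log_lt_log hx hy)
    have h0 : HasDerivAt (fun y : ℝ => y * Real.exp (-(2 * N) * Real.log y)) 
        (1 * Real.exp (-(2 * N) * Real.log x) + x * (Real.exp (-(2 * N) * Real.log x) * (-(2 * N)) * x⁻¹)) x := 
      (hasDerivAt_id x).mul ((hasDerivAt_exp_mul (-(2 * N)) (Real.log x)).comp x (Real.hasDerivAt_log hx.ne'))
    have h2 := (h0.hasDerivWithinAt (s := Ioi x)).mul h1
    have h3 := h2.add (((hU x hx).hasDerivWithinAt (s := Ioi x)).const_mul (2 * N - 1 : ℝ))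
    have e : ∀ y > 0, Q y = y * Real.exp (-(2 * N) * Real.log y) * (Real.exp (2 * N * Real.log y) * V (Real.exp (Real.log y))) + (2 * N - 1) * U y := by
      intro y hy
      rw [hQ y hy, Real.exp_log hy]
      have : Real.exp (-(2 * N) * Real.log y) * Real.exp (2 * N * Real.log y) = 1 := by rw [← Real.exp_add]; simp
      linear_combination -y * V y * this
    refine (h3.congr_deriv ?_).congr (fun y hy => e y (hx.trans hy)) (e x hx)
    have : Real.exp (-(2 * N) * Real.log x) * Real.exp (2 * N * Real.log x) = 1 := by rw [← Real.exp_add]; simp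
    have hxx : x * x⁻¹ = 1 := by field_simp
    simp only [Function.comp, Real.exp_log hx]
    linear_combination (V x + R (Real.log x) - 2 * N * V x) * this + (Real.exp (-(2 * N) * Real.log x) * Real.exp (2 * N * Real.log x) * (R (Real.log x) - 2 * N * V x)) * hxx
  have hRl : AntitoneOn (fun x => R (Real.log x)) (Ioi 0) := fun x hx y hy hxy =>
    hR (Real.log_le_log hx hxy)
  have hii : ∀ x y, 0 < x → x ≤ y → IntervalIntegrable (fun x => R (Real.log x)) volume x y := by
    intro x y hx hxy
    refine (hRl.mono ?_).intervalIntegrable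
    rw [uIcc_of_le hxy]; exact fun z hz => lt_of_lt_of_le hx hz.1
  have hint : ∀ x y, 0 < x → x ≤ y → Q y - Q x = ∫ t in x..y, R (Real.log t) := by
    intro x y hx hxy
    refine (intervalIntegral.integral_eq_sub_of_hasDeriv_right_of_le hxy (hQc.mono fun z hz => lt_of_lt_of_le hx hz.1)
      (fun z hz => hQd z (hx.trans hz.1)) (hii x y hx hxy)).symm
  refine concaveOn_of_slope_anti_adjacent (convex_Ioi 0) ?_
  intro x y z hx hz hxy hyz
  have hx : 0 < x := hx
  have hy : 0 < y := hx.trans hxy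
  have b1 : Q z - Q y ≤ (z - y) * R (Real.log y) := by
    rw [hint y z hy hyz.le, ← smul_eq_mul, ← intervalIntegral.integral_const]
    refine intervalIntegral.integral_mono_on hyz.le (hii y z hy hyz.le) (by simp) ?_
    intro t ht; exact hRl hy (lt_of_lt_of_le hy ht.1) ht.1
  have b2 : (y - x) * R (Real.log y) ≤ Q y - Q x := by
    rw [hint x y hx hxy.le, ← smul_eq_mul, ← intervalIntegral.integral_const]
    refine intervalIntegral.integral_mono_on hxy.le (by simp) (hii x y hx hxy.le) ?_
    intro t ht; exact hRl (lt_of_lt_of_le hx ht.1) hy ht.2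
  refine le_trans (b := R (Real.log y)) ?_ ?_
  · rw [div_le_iff₀ (by linarith)]; linarith
  · rw [le_div_iff₀ (by linarith)]; linarith


lemma it_hasDeriv {m j : ℕ} {w : ℝ → ℝ} (hw : ContDiffOn ℝ m w (Ioi 0)) (hj : j < m) {x : ℝ} (hx : 0 < x) :
    HasDerivAt (iteratedDeriv j w) (iteratedDeriv (j+1) w x) x := by
  rw [iteratedDeriv_succ]
  apply DifferentiableAt.hasDerivAt
  have h1 := (hw.differentiableOn_iteratedDerivWithin (m := j) (by exact_mod_cast hj) (uniqueDiffOn_Ioi 0)) x hx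
  have h2 := h1.differentiableAt (Ioi_mem_nhds hx)
  refine h2.congr_of_eventuallyEq ?_
  filter_upwards [Ioi_mem_nhds hx] with y hy
  exact (iteratedDerivWithin_of_isOpen isOpen_Ioi hy).symm

lemma it_cont {m j : ℕ} {w : ℝ → ℝ} (hw : ContDiffOn ℝ m w (Ioi 0)) (hj : j ≤ m) :
    ContinuousOn (iteratedDeriv j w) (Ioi 0) := by
  have h1 := hw.continuousOn_iteratedDerivWithin (m := j) (by exact_mod_cast hj) (uniqueDiffOn_Ioi 0)
  exact h1.congr fun y hy => (iteratedDerivWithin_of_isOpen isOpen_Ioi hy).symm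

lemma it_mul {m : ℕ} {w : ℝ → ℝ} (hw : ContDiffOn ℝ m w (Ioi 0)) (j : ℕ) (hj : j + 1 ≤ m) : ∀ x > 0, 
    iteratedDeriv (j+1) (fun y => y * w y) x = x * iteratedDeriv (j+1) w x + (j+1) * iteratedDeriv j w x := by
  induction j with
  | zero =>
    intro x hx
    have h := it_hasDeriv hw (j := 0) hj hx
    rw [iteratedDeriv_zero] at h
    rw [iteratedDeriv_one]
    refine ((hasDerivAt_id x).mul h).deriv.trans ?_
    simp; ring
  | succ j ih =>
    intro x hx
    rw [iteratedDeriv_succ]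
    have e : iteratedDeriv (j+1) (fun y => y * w y) =ᶠ[nhds x] fun x => x * iteratedDeriv (j+1) w x + (j+1) * iteratedDeriv j w x := by
      filter_upwards [Ioi_mem_nhds hx] with y hy
      exact ih (by omega) y hy
    rw [e.deriv_eq]
    have h1 := it_hasDeriv hw (j := j+1) (by omega) hx
    have h2 := it_hasDeriv hw (j := j) (by omega) hx
    refine (((hasDerivAt_id x).mul h1).add (h2.const_mul ((j:ℝ)+1))).deriv.trans ?_
    push_cast
    simp; ring

noncomputable def gg (f : ℝ → ℝ) (p : ℕ) (s : ℝ) : ℝ :=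
  (-1) ^ p * (Real.exp ((p + 1 : ℕ) * s) * iteratedDeriv (2 * p + 1) (fun y => y ^ (p + 1) * f y) (Real.exp s))

lemma cd_w {m n : ℕ} {f : ℝ → ℝ} (hf : ContDiffOn ℝ m f (Ioi 0)) : ContDiffOn ℝ m (fun y => y ^ n * f y) (Ioi 0) :=
  (contDiff_id.pow n).contDiffOn.mul hf

lemma T1 {m : ℕ} {f : ℝ → ℝ} (hf : ContDiffOn ℝ m f (Ioi 0)) (hm : 1 ≤ m) (s : ℝ) :
    HasDerivAt (fun s => Real.exp s * f (Real.exp s)) (gg f 0 s) s := by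
  have h := it_hasDeriv (cd_w (n := 1) hf) (j := 0) hm (Real.exp_pos s)
  rw [iteratedDeriv_zero] at h
  have h2 := h.comp s (Real.hasDerivAt_exp s)
  simp only [Function.comp_def, pow_one] at h2
  refine h2.congr_deriv ?_
  simp [gg]; ring

lemma gg_cont {m p : ℕ} {f : ℝ → ℝ} (hf : ContDiffOn ℝ m f (Ioi 0)) (hm : 2 * p + 1 ≤ m) : Continuous (gg f p) := by
  have h := it_cont (cd_w (n := p+1) hf) hm
  have : Continuous (fun s => iteratedDeriv (2 * p + 1) (fun y => y ^ (p + 1) * f y) (Real.exp s)) :=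
    continuousOn_univ.1 (h.comp Real.continuous_exp.continuousOn fun x _ => Real.exp_pos x)
  unfold gg
  fun_prop

lemma T2 {m p : ℕ} {f : ℝ → ℝ} (hf : ContDiffOn ℝ m f (Ioi 0)) (hm : 2 * p + 3 ≤ m) :
    ∃ g' : ℝ → ℝ, (∀ s, HasDerivAt (gg f p) (g' s) s) ∧ 
      ∀ s, HasDerivAt g' ((p + 1 : ℕ) ^ 2 * gg f p s - gg f (p + 1) s) s := by
  have hw := cd_w (n := p + 1) hf
  set w : ℝ → ℝ := fun y => y ^ (p + 1) * f y with hwd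
  have hgp : gg f p = fun s => (-1) ^ p * (Real.exp ((p + 1 : ℕ) * s) * iteratedDeriv (2 * p + 1) w (Real.exp s)) := rfl
  have h1 : ∀ s, HasDerivAt (gg f p) ((-1) ^ p * (Real.exp ((p + 1 : ℕ) * s) * (p + 1 : ℕ) * iteratedDeriv (2 * p + 1) w (Real.exp s)
      + Real.exp ((p + 1 : ℕ) * s) * (iteratedDeriv (2 * p + 2) w (Real.exp s) * Real.exp s))) s := fun s => by
    rw [hgp]
    exact ((hasDerivAt_exp_mul _ s).mul ((it_hasDeriv hw (j := 2 * p + 1) (by omega) (Real.exp_pos s)).comp s (Real.hasDerivAt_exp s))).const_mul _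
  refine ⟨_, h1, fun s => ?_⟩
  have a1 := (it_hasDeriv hw (j := 2 * p + 1) (by omega) (Real.exp_pos s)).comp s (Real.hasDerivAt_exp s)
  have a2 := (it_hasDeriv hw (j := 2 * p + 2) (by omega) (Real.exp_pos s)).comp s (Real.hasDerivAt_exp s)
  have a3 := hasDerivAt_exp_mul ((p + 1 : ℕ) : ℝ) s
  have := (((a3.mul_const ((p + 1 : ℕ) : ℝ)).mul a1).add (a3.mul (a2.mul (Real.hasDerivAt_exp s)))).const_mul ((-1 : ℝ) ^ p)
  refine this.congr_deriv ?_
  have e2 : gg f (p + 1) s = (-1) ^ (p+1) * (Real.exp ((p + 2 : ℕ) * s) * (Real.exp s * iteratedDeriv (2 * p + 3) w (Real.exp s) 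
    + (2 * p + 3) * iteratedDeriv (2 * p + 2) w (Real.exp s))) := by
    have := it_mul hw (2 * p + 2) hm _ (Real.exp_pos s)
    simp only [gg]
    rw [show (fun y => y ^ (p + 1 + 1) * f y) = fun y => y * w y by ext y; simp only [hwd]; ring, 
      show 2 * (p + 1) + 1 = 2 * p + 2 + 1 by ring, this]
    push_cast; ring
  rw [e2, hgp, show ((p + 2 : ℕ) : ℝ) * s = (p + 1 : ℕ) * s + s by push_cast; ring, Real.exp_add, pow_succ]
  simp only [Function.comp_apply, Pi.mul_apply]
  push_cast
  ring

lemma T3 {p : ℕ} {f : ℝ → ℝ} (hf : ContDiffOn ℝ (2 * p + 1 : ℕ) f (Ioi 0)) :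
    ∃ U V : ℝ → ℝ, (∀ x > 0, HasDerivAt U (V x) x) ∧ ContinuousOn V (Ioi 0) ∧ 
      (∀ s, gg f p s = Real.exp ((p + 1 : ℕ) * s) * V (Real.exp s)) ∧
      ∀ x > 0, (-1 : ℝ) ^ (p + 1) * iteratedDeriv (2 * p + 1) (fun y => y ^ (p + 2) * f y) x
        = - (x * V x + (2 * (p + 1 : ℕ) - 1) * U x) := by
  have hw := cd_w (n := p + 1) hf
  set w : ℝ → ℝ := fun y => y ^ (p + 1) * f y with hwd
  refine ⟨fun x => (-1) ^ p * iteratedDeriv (2 * p) w x, fun x => (-1) ^ p * iteratedDeriv (2 * p + 1) w x, ?_, ?_, ?_, ?_⟩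
  · intro x hx
    exact (it_hasDeriv hw (by omega) hx).const_mul _
  · exact continuousOn_const.mul (it_cont hw le_rfl)
  · intro s
    simp only [gg]; ring
  · intro x hx
    have := it_mul hw (2 * p) le_rfl x hx
    rw [show (fun y => y ^ (p + 2) * f y) = fun y => y * w y by ext y; simp only [hwd]; ring, this]
    push_cast; ring


lemma pn_chain (p : ℕ) (σ : Measure ℝ) [SFinite σ] (s : ℝ) :
    ∫⁻ q, ENNReal.ofReal (pn p (s - q)) * (∫⁻ r, ENNReal.ofReal (Kn (p + 1) q r) ∂σ)
      = ∫⁻ r, ENNReal.ofReal (pn (p + 1) (s - r)) ∂σ := by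
  have hp := pn_meas p
  have hK : Measurable (fun z : ℝ × ℝ => Kn (p + 1) z.1 z.2) := (Kn_cont (p + 1)).measurable
  simp_rw [pn_rec']
  rw [lintegral_lintegral_swap]
  · refine lintegral_congr fun q => ?_
    rw [lintegral_const_mul _ (Kn_meas _ _)]
  · suffices H : Measurable (fun z : ℝ × ℝ => ENNReal.ofReal (pn p (s - z.2)) * ENNReal.ofReal (Kn (p + 1) z.2 z.1)) from H.aemeasurable
    have m1 : Measurable (fun z : ℝ × ℝ => ENNReal.ofReal (pn p (s - z.2))) := 
      (hp.comp (measurable_const.sub measurable_snd)).ennreal_ofReal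
    have m2 : Measurable (fun z : ℝ × ℝ => ENNReal.ofReal (Kn (p + 1) z.2 z.1)) :=
      (hK.comp measurable_swap).ennreal_ofReal
    exact m1.mul m2

/-- a positive constant on a half line is not integrable -/
lemma kill {σ : Measure ℝ} {S : Set ℝ} (hS : MeasurableSet S) (hσ : σ S = ⊤) {φ : ℝ → ENNReal} {A : ℝ} (hA : 0 ≤ A)
    (h : ∫⁻ r, φ r ∂σ ≠ ⊤) (hl : ∀ r ∈ S, ENNReal.ofReal A ≤ φ r) : A = 0 := by
  by_contra hne
  have hA' : 0 < A := lt_of_le_of_ne hA (Ne.symm hne)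
  apply h
  have : ∫⁻ r in S, ENNReal.ofReal A ∂σ ≤ ∫⁻ r, φ r ∂σ := 
    (setLIntegral_mono' hS hl).trans (setLIntegral_le_lintegral S φ)
  rw [lintegral_const, Measure.restrict_apply_univ, hσ, ENNReal.mul_top (by simpa using hA')] at this
  exact top_le_iff.1 this

lemma chain_step (p : ℕ) {u : ℝ → ℝ} {C : ℝ → ENNReal} {g : ℝ → ℝ} (hg : Continuous g) (σ : Measure ℝ) [SFinite σ]
    (hI : ∀ s, ENNReal.ofReal (u s) = C s + ∫⁻ r, ENNReal.ofReal (pn (p + 1) (s - r)) 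
      ∂(volume.withDensity fun r => ENNReal.ofReal (g r)))
    {A B : ℝ} (hA : 0 ≤ A) (hB : 0 ≤ B)
    (h : ∀ s, ENNReal.ofReal (g s) = ENNReal.ofReal (B * Real.exp (-((p + 2 : ℕ) * s)))
      + ENNReal.ofReal (A * Real.exp ((p + 2 : ℕ) * s)) + ∫⁻ r, ENNReal.ofReal (Kn (p + 2) s r) ∂σ) :
    ∀ s, ENNReal.ofReal (u s) = C s + ∫⁻ r, ENNReal.ofReal (pn (p + 2) (s - r)) ∂σ := by
  have hpm : ∀ s, Measurable fun r => ENNReal.ofReal (pn (p + 1) (s - r)) := fun s =>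
    ((pn_meas _).comp (measurable_const.sub measurable_id)).ennreal_ofReal
  have hgm : Measurable fun r => ENNReal.ofReal (g r) := hg.measurable.ennreal_ofReal
  have hI' : ∀ s, ENNReal.ofReal (u s) = C s + ∫⁻ r, ENNReal.ofReal (pn (p + 1) (s - r)) * ENNReal.ofReal (g r) := by
    intro s
    rw [hI s, lintegral_withDensity_eq_lintegral_mul _ hgm (hpm s)]
    simp [mul_comm]
  obtain ⟨c, hc, hcp⟩ := pn_lower p
  have hfin : ∫⁻ r, ENNReal.ofReal (pn (p + 1) (0 - r)) * ENNReal.ofReal (g r) ≠ ⊤ := by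
    intro htop
    have := hI' 0
    rw [htop] at this
    simp at this
  have hB0 : c * B = 0 := by
    refine kill (S := Iic 0) measurableSet_Iic (by simp) (by positivity) hfin fun r hr => ?_
    have hr : r ≤ 0 := hr
    rw [ENNReal.ofReal_mul hc.le]
    refine mul_le_mul' (ENNReal.ofReal_le_ofReal ?_) ?_
    · refine le_trans ?_ (hcp _)
      rw [min_eq_left (by rw [Real.one_le_exp_iff]; linarith), mul_one]
    · rw [h r, add_assoc]
      refine le_trans (ENNReal.ofReal_le_ofReal ?_) le_self_add
      refine le_mul_of_one_le_right hB ?_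
      rw [Real.one_le_exp_iff]
      have : 0 ≤ ((p + 2 : ℕ) : ℝ) := by positivity
      nlinarith
  have hA0 : c * A = 0 := by
    refine kill (S := Ici 0) measurableSet_Ici (by simp) (by positivity) hfin fun r hr => ?_
    have hr : 0 ≤ r := hr
    have e : c * A ≤ (c * Real.exp (-r)) * (A * Real.exp ((p + 2 : ℕ) * r)) := by
      have : (c * Real.exp (-r)) * (A * Real.exp ((p + 2 : ℕ) * r)) = c * A * (Real.exp ((p + 1 : ℕ) * r)) := by
        rw [show ((p + 2 : ℕ) : ℝ) * r = (p + 1 : ℕ) * r + r by push_cast; ring, Real.exp_add, Real.exp_neg]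
        have := (Real.exp_pos r).ne'
        field_simp
      rw [this]
      refine le_mul_of_one_le_right (by positivity) ?_
      rw [Real.one_le_exp_iff]; positivity
    refine (ENNReal.ofReal_le_ofReal e).trans ?_
    rw [ENNReal.ofReal_mul (by positivity)]
    refine mul_le_mul' (ENNReal.ofReal_le_ofReal ?_) ?_
    · refine le_trans ?_ (hcp _)
      rw [min_eq_right (by rw [Real.exp_le_one_iff]; linarith), zero_sub]
    · rw [h r, add_comm (ENNReal.ofReal _), add_assoc]
      exact le_self_add
  have hA1 : A = 0 := (mul_eq_zero.1 hA0).resolve_left hc.ne'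
  have hB1 : B = 0 := (mul_eq_zero.1 hB0).resolve_left hc.ne'
  intro s
  rw [hI' s, ← pn_chain (p + 1)]
  congr 1
  refine lintegral_congr fun r => ?_
  rw [h r, hA1, hB1]
  simp

lemma chain_zero {u : ℝ → ℝ} {c : ℝ} {g : ℝ → ℝ} (σ : Measure ℝ) [SFinite σ]
    (hI : ∀ s, ENNReal.ofReal (u s) = ENNReal.ofReal c + ∫⁻ r in Iic s, ENNReal.ofReal (g r))
    {A B : ℝ} (hA : 0 ≤ A) (hB : 0 ≤ B)
    (h : ∀ s, ENNReal.ofReal (g s) = ENNReal.ofReal (B * Real.exp (-((1 : ℕ) * s)))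
      + ENNReal.ofReal (A * Real.exp ((1 : ℕ) * s)) + ∫⁻ r, ENNReal.ofReal (Kn 1 s r) ∂σ) :
    ∀ s, ENNReal.ofReal (u s) = (ENNReal.ofReal c + ENNReal.ofReal (A * Real.exp s)) + 
      ∫⁻ r, ENNReal.ofReal (pn 1 (s - r)) ∂σ := by
  have hfin : ∫⁻ r in Iic (0:ℝ), ENNReal.ofReal (g r) ≠ ⊤ := by
    intro htop
    have := hI 0
    rw [htop] at this
    simp at this
  have hB0 : B = 0 := by
    refine kill (S := Iic 0) measurableSet_Iic (by simp) (by positivity) hfin fun r hr => ?_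
    have hr : r ≤ 0 := hr
    rw [h r, add_assoc]
    refine le_trans (ENNReal.ofReal_le_ofReal ?_) le_self_add
    refine le_mul_of_one_le_right hB ?_
    rw [Real.one_le_exp_iff]
    simp [hr]
  intro s
  have e1 : ∫⁻ r in Iic s, ENNReal.ofReal (A * Real.exp r) = ENNReal.ofReal (A * Real.exp s) := by
    have := lint_Iic (h := fun s => A * Real.exp s) (φ := fun s => A * Real.exp s) (c := 0) (fun x => by positivity)
      (fun a b => Continuous.intervalIntegrable (by fun_prop) _ _) (fun a b _ => by
        simp [mul_sub]) (by simpa using Real.tendsto_exp_atBot.const_mul A) s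
    simpa using this
  rw [hI s, ← pn_chain 0, ← lintegral_indicator measurableSet_Iic, add_assoc]
  congr 1
  rw [← e1, ← lintegral_indicator measurableSet_Iic, ← lintegral_add_left ((by fun_prop : Measurable fun r => ENNReal.ofReal (A * Real.exp r)).indicator measurableSet_Iic)]
  refine lintegral_congr fun r => ?_
  rw [pn_zero]
  by_cases hr : r ≤ s
  · rw [indicator_of_mem (by exact hr), indicator_of_mem (by exact hr), if_pos (by linarith), h r, hB0]
    simp
  · rw [indicator_of_notMem (by exact hr), indicator_of_notMem (by exact hr), if_neg (by linarith)]
    simp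

open Topology in
/-- forward direction, log scale -/
lemma forward (p : ℕ) {f : ℝ → ℝ} (hf : IsStieltjesK (p + 2) f) :
    ∃ (c A : ℝ) (σ : Measure ℝ), 0 ≤ c ∧ 0 ≤ A ∧ SFinite σ ∧ ∀ s, 
      ENNReal.ofReal (Real.exp s * f (Real.exp s)) = (ENNReal.ofReal c + ENNReal.ofReal (A * Real.exp s)) + 
      ∫⁻ r, ENNReal.ofReal (pn (p + 1) (s - r)) ∂σ := by
  obtain ⟨hf0, hf1, hf2, hf3⟩ := hf
  rw [show 2 * (p + 2) - 3 = 2 * p + 1 by omega] at hf1 hf3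
  have hgn : ∀ q ≤ p, ∀ s, 0 ≤ gg f q s := by
    intro q hq s
    have := hf2 (q + 1) (by omega) (by omega) _ (Real.exp_pos s)
    rw [show 2 * (q + 1) - 1 = 2 * q + 1 by omega, show q + 1 - 1 = q by omega] at this
    unfold gg
    have h2 := mul_nonneg (Real.exp_pos ((q + 1 : ℕ) * s)).le this
    linarith
  have hgc : ∀ q ≤ p, Continuous (gg f q) := fun q hq => gg_cont hf1 (by omega)
  -- uniform expansions
  have hex : ∀ q ≤ p, ∃ σ : Measure ℝ, SFinite σ ∧ (q < p → σ = volume.withDensity fun r => ENNReal.ofReal (gg f (q+1) r)) ∧ 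
      ∃ A B : ℝ, 0 ≤ A ∧ 0 ≤ B ∧ ∀ s, ENNReal.ofReal (gg f q s) = ENNReal.ofReal (B * Real.exp (-((q + 1 : ℕ) * s)))
      + ENNReal.ofReal (A * Real.exp ((q + 1 : ℕ) * s)) + ∫⁻ r, ENNReal.ofReal (Kn (q + 1) s r) ∂σ := by
    intro q hq
    rcases hq.lt_or_eq with hlt | rfl
    · obtain ⟨g', h1, h2⟩ := T2 (p := q) hf1 (by omega)
      obtain ⟨A, B, hA, hB, h⟩ := step_smooth (q + 1) (by omega) (hgn q hq) (hgn (q + 1) hlt) (hgc (q + 1) hlt) h1 h2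
      refine ⟨volume.withDensity fun r => ENNReal.ofReal (gg f (q+1) r), inferInstance, fun _ => rfl, A, B, hA, hB, fun s => ?_⟩
      rw [h s, lintegral_withDensity_eq_lintegral_mul _ (hgc (q+1) hlt).measurable.ennreal_ofReal (Kn_meas _ _)]
      simp [mul_comm]
    · obtain ⟨U, V, hU, hV, hgV, hQ⟩ := T3 hf1
      obtain ⟨R, hR, hint⟩ := concave_to_int (q + 1) (by omega) (Q := fun x => x * V x + (2 * (q + 1 : ℕ) - 1) * U x) hU hV (fun _ _ => rfl) (by
        have := hf3.neg
        rw [show q + 2 - 1 = q + 1 by omega] at this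
        refine this.congr fun x hx => ?_
        rw [Pi.neg_apply, hQ x hx, neg_neg])
      obtain ⟨ν, hν, A, B, hA, hB, h⟩ := step_last (q + 1) (by omega) (hgn q hq) hR (fun a b hab => by
        rw [← hint a b hab, hgV, hgV, ← mul_assoc, ← mul_assoc, ← Real.exp_add, ← Real.exp_add]
        ring_nf)
      exact ⟨ν, hν, fun h => absurd h (lt_irrefl _), A, B, hA, hB, h⟩
  -- start
  have hud : ∀ s, HasDerivAt (fun s => Real.exp s * f (Real.exp s)) (gg f 0 s) s := T1 hf1 (by omega)
  have hun : ∀ s, 0 ≤ Real.exp s * f (Real.exp s) := fun s => mul_nonneg (Real.exp_pos s).le (hf0 _ (Real.exp_pos s))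
  have hint : ∀ a b, a ≤ b → Real.exp b * f (Real.exp b) - Real.exp a * f (Real.exp a) = ∫ x in a..b, gg f 0 x := by
    intro a b _
    exact (intervalIntegral.integral_eq_sub_of_hasDerivAt (fun x _ => hud x) ((hgc 0 (by omega)).intervalIntegrable _ _)).symm
  have hmono : Monotone (fun s => Real.exp s * f (Real.exp s)) := 
    monotone_of_hasDerivAt_nonneg hud (hgn 0 (by omega))
  obtain ⟨c, hc⟩ : ∃ c, Tendsto (fun s => Real.exp s * f (Real.exp s)) atBot (𝓝 c) := 
    ⟨_, tendsto_atBot_ciInf hmono ⟨0, by rintro _ ⟨s, rfl⟩; exact hun s⟩⟩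
  have hc0 : 0 ≤ c := ge_of_tendsto' hc hun
  have hI0 : ∀ s, ENNReal.ofReal (Real.exp s * f (Real.exp s)) = ENNReal.ofReal c + ∫⁻ r in Iic s, ENNReal.ofReal (gg f 0 r) := by
    intro s
    rw [lint_Iic (hgn 0 (by omega)) (fun a b => (hgc 0 (by omega)).intervalIntegrable _ _) hint hc s, ← ENNReal.ofReal_add hc0]
    · ring_nf
    · exact sub_nonneg.2 (hmono.le_of_tendsto hc s)
  choose σ hσ1 hσ2 A B hA hB hσ using hex
  refine ⟨c, A 0 (by omega), σ p le_rfl, hc0, hA 0 _, hσ1 p _, ?_⟩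
  have main : ∀ q (hq : q ≤ p), ∀ s, 
      ENNReal.ofReal (Real.exp s * f (Real.exp s)) = (ENNReal.ofReal c + ENNReal.ofReal (A 0 (by omega) * Real.exp s)) + 
      ∫⁻ r, ENNReal.ofReal (pn (q + 1) (s - r)) ∂(σ q hq) := by
    intro q
    induction q with
    | zero => 
      intro hq
      have := hσ1 0 hq
      exact chain_zero (σ 0 hq) hI0 (hA 0 hq) (hB 0 hq) (hσ 0 hq)
    | succ q ih =>
      intro hq
      have := hσ1 (q + 1) hq
      refine chain_step q (hgc (q + 1) hq) (σ (q + 1) hq) ?_ (hA _ hq) (hB _ hq) (hσ (q + 1) hq)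
      have h := ih (by omega)
      rw [hσ2 q (by omega) (by omega)] at h
      exact h
  exact main p le_rfl


lemma Phi_zero (n : ℕ) {x : ℝ} (hx : 0 < x) : Phi n x 0 = x⁻¹ * ((2 * n).choose n : ℝ) := by
  unfold Phi
  rw [if_pos hx.le]
  unfold Pk
  rw [Finset.sum_eq_single 0]
  · simp
  · intro b _ hb; simp [hb]
  · simp

lemma Phi_psi (n : ℕ) {x t : ℝ} (hx : 0 < x) (ht : 0 < t) : Phi n x t = x⁻¹ * psiK n (x / t) := by
  unfold Phi psiK
  rw [inv_div]
  by_cases h : t ≤ x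
  · rw [if_pos h, if_pos ((one_le_div ht).2 h)]
  · rw [if_neg h, if_neg (by rw [one_le_div ht]; exact h)]

lemma Phi_exp (n : ℕ) (s r : ℝ) : 
    Phi n (Real.exp s) (Real.exp r) = Real.exp (-s) * (((2 * n).factorial : ℝ) * pn n (s - r)) := by
  rw [Phi_psi n (Real.exp_pos s) (Real.exp_pos r), ← Real.exp_sub, ← Real.exp_neg]
  unfold pn
  have : ((2 * n).factorial : ℝ) ≠ 0 := by positivity
  field_simp

lemma Phi_nonneg (n : ℕ) {x t : ℝ} (hx : 0 < x) (ht : 0 ≤ t) : 0 ≤ Phi n x t := by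
  rcases ht.eq_or_lt with rfl | ht
  · rw [Phi_zero n hx]; positivity
  · rw [← Real.exp_log hx, ← Real.exp_log ht, Phi_exp]
    have := pn_nonneg n (Real.log x - Real.log t)
    positivity

lemma Phi_meas (n : ℕ) (x : ℝ) : Measurable (fun t => Phi n x t) := by
  unfold Phi Pkhat Pk
  refine measurable_const.mul (Measurable.ite measurableSet_Iic ?_ ?_)
  · fun_prop
  · fun_prop

lemma Phi_upper (n : ℕ) {x t : ℝ} (hx : 0 < x) (ht : 0 ≤ t) : Phi n x t ≤ x⁻¹ * Cn n * (1 + x) * (1 + t)⁻¹ := by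
  have hC := Cn_nonneg n
  rcases ht.eq_or_lt with rfl | ht
  · rw [Phi_zero n hx, mul_assoc, mul_assoc]
    refine mul_le_mul_of_nonneg_left ?_ (by positivity)
    have : ((2 * n).choose n : ℝ) ≤ Cn n := by
      unfold Cn
      have := Finset.single_le_sum (f := fun j => ((2 * n).choose (j + n) : ℝ)) (s := Finset.range (n + 1)) (fun i _ => by positivity) (Finset.mem_range.2 (Nat.succ_pos n))
      simpa using this
    have h2 : (1:ℝ) ≤ (1 + x) * (1 + 0)⁻¹ := by norm_num; exact hx.le
    nlinarith
  · rw [Phi_psi n hx ht, mul_assoc, mul_assoc]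
    refine mul_le_mul_of_nonneg_left ?_ (by positivity)
    have h1 := pn_bound n (Real.log (x / t))
    rw [Real.exp_log (by positivity)] at h1
    refine (le_abs_self _).trans (h1.trans ?_)
    refine mul_le_mul_of_nonneg_left ?_ hC
    rw [← div_eq_mul_inv, le_div_iff₀ (by positivity)]
    rcases le_total t x with h | h
    · have := min_le_left 1 (x / t)
      nlinarith
    · have := min_le_right 1 (x / t)
      have h3 : x / t * t = x := by field_simp
      have h4 : x / t ≤ 1 := (div_le_one ht).2 h
      nlinarith

lemma Phi_lower (p : ℕ) : ∃ c > 0, ∀ t ≥ 0, c * (1 + t)⁻¹ ≤ Phi (p + 1) 1 t := by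
  obtain ⟨c, hc, h⟩ := pn_lower p
  refine ⟨min c 1, by positivity, fun t ht => ?_⟩
  rcases ht.eq_or_lt with rfl | ht
  · rw [Phi_zero _ one_pos]
    have : (1 : ℝ) ≤ ((2 * (p + 1)).choose (p + 1) : ℝ) := by 
      exact_mod_cast Nat.choose_pos (by omega)
    have h2 := min_le_right c 1
    rw [add_zero, inv_one, mul_one, one_mul]; exact h2.trans this
  · have e := Phi_exp (p + 1) 0 (Real.log t)
    rw [Real.exp_zero, Real.exp_log ht] at e
    rw [e]
    have h1 := h (0 - Real.log t)
    rw [zero_sub, Real.exp_neg, Real.exp_log ht] at h1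
    have h2 : (1 : ℝ) ≤ ((2 * (p + 1)).factorial : ℝ) := by exact_mod_cast Nat.factorial_pos _
    have h3 : (1 + t)⁻¹ ≤ min 1 t⁻¹ := by
      refine le_min ?_ ?_
      · exact inv_le_one_of_one_le₀ (by linarith)
      · exact inv_anti₀ ht (by linarith)
    have h4 := pn_nonneg (p + 1) (-Real.log t)
    have h5 : 0 ≤ (1 + t)⁻¹ := by positivity
    have h6 : min c 1 * (1 + t)⁻¹ ≤ c * min 1 t⁻¹ := mul_le_mul (min_le_left _ _) h3 h5 hc.le
    rw [neg_zero, Real.exp_zero, one_mul, zero_sub]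
    nlinarith

lemma ae_nonneg_of {μ : Measure ℝ} (h : μ (Iio 0) = 0) : ∀ᵐ t ∂μ, 0 ≤ t := by
  rw [ae_iff]; simp only [not_le]; exact h

lemma forward_final (p : ℕ) {f : ℝ → ℝ} (hf : IsStieltjesK (p + 2) f) :
      ∃ (a : ℝ) (μ : Measure ℝ), 0 ≤ a ∧ μ (Iio 0) = 0 ∧
        (∫⁻ t, ENNReal.ofReal ((1 + t)⁻¹) ∂μ) < ⊤ ∧
        ∀ x > 0, f x = a + ∫ t, Phi (p + 1) x t ∂μ := by
  obtain ⟨c, A, σ, hc, hA, hσ, h⟩ := forward p hf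
  have hf0 := hf.1
  set N := p + 1 with hN
  have hch : (0 : ℝ) < ((2 * N).choose N : ℝ) := by exact_mod_cast Nat.choose_pos (by omega)
  set μ : Measure ℝ := ENNReal.ofReal (c / ((2 * N).choose N : ℝ)) • Measure.dirac 0 
    + ENNReal.ofReal (((2 * N).factorial : ℝ)⁻¹) • σ.map Real.exp with hμ
  have hμ0 : μ (Iio 0) = 0 := by
    rw [hμ, Measure.add_apply, Measure.smul_apply, Measure.smul_apply, Measure.map_apply Real.measurable_exp measurableSet_Iio]
    have : Real.exp ⁻¹' Iio 0 = ∅ := by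
      ext r; simp [Real.exp_nonneg, (Real.exp_pos r).le]
    rw [this]
    simp
  have hae := ae_nonneg_of hμ0
  have hl : ∀ x > 0, ∫⁻ t, ENNReal.ofReal (Phi N x t) ∂μ = ENNReal.ofReal x⁻¹ * (ENNReal.ofReal c 
      + ∫⁻ r, ENNReal.ofReal (pn N (Real.log x - r)) ∂σ) := by
    intro x hx
    have hm := (Phi_meas N x).ennreal_ofReal
    rw [hμ, lintegral_add_measure, lintegral_smul_measure, lintegral_smul_measure, lintegral_dirac' _ hm,
      lintegral_map hm Real.measurable_exp, Phi_zero N hx, mul_add (ENNReal.ofReal x⁻¹)]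
    simp only [smul_eq_mul]
    congr 1
    · rw [← ENNReal.ofReal_mul (by positivity), ← ENNReal.ofReal_mul (by positivity)]
      congr 1
      field_simp
    · have hpm : Measurable fun r => ENNReal.ofReal (pn N (Real.log x - r)) :=
        ((pn_meas _).comp (measurable_const.sub measurable_id)).ennreal_ofReal
      have e : ∀ r, ENNReal.ofReal (Phi N x (Real.exp r)) = (ENNReal.ofReal x⁻¹ * ENNReal.ofReal ((2 * N).factorial : ℝ)) * ENNReal.ofReal (pn N (Real.log x - r)) := by
        intro r
        have e := Phi_exp N (Real.log x) r
        rw [Real.exp_neg, Real.exp_log hx] at e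
        rw [e, ENNReal.ofReal_mul (by positivity), ENNReal.ofReal_mul (by positivity), mul_assoc]
      simp_rw [e]
      rw [lintegral_const_mul _ hpm, ← mul_assoc, ← mul_assoc, mul_comm (ENNReal.ofReal (_)⁻¹) (ENNReal.ofReal x⁻¹), mul_assoc (ENNReal.ofReal x⁻¹),
        ← ENNReal.ofReal_mul (by positivity), inv_mul_cancel₀ (by positivity)]
      simp
  have hF : ∀ x > 0, ENNReal.ofReal (f x) = ENNReal.ofReal A + ∫⁻ t, ENNReal.ofReal (Phi N x t) ∂μ := by
    intro x hx
    have h1 := h (Real.log x)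
    rw [Real.exp_log hx] at h1
    have h2 : ENNReal.ofReal (f x) = ENNReal.ofReal x⁻¹ * ENNReal.ofReal (x * f x) := by
      rw [← ENNReal.ofReal_mul (by positivity)]; congr 1; field_simp
    have h3 : ENNReal.ofReal A = ENNReal.ofReal x⁻¹ * ENNReal.ofReal (A * x) := by
      rw [← ENNReal.ofReal_mul (by positivity)]; congr 1; field_simp
    rw [h2, h3, hl x hx, h1]
    ring
  have hfin : ∀ x > 0, ∫⁻ t, ENNReal.ofReal (Phi N x t) ∂μ ≠ ⊤ := by
    intro x hx htop
    have := hF x hx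
    rw [htop] at this; simp at this
  refine ⟨A, μ, hA, hμ0, ?_, ?_⟩
  · obtain ⟨c', hc', hlow⟩ := Phi_lower p
    have h1 : ∫⁻ t, ENNReal.ofReal (c' * (1 + t)⁻¹) ∂μ ≤ ∫⁻ t, ENNReal.ofReal (Phi N 1 t) ∂μ := by
      refine lintegral_mono_ae ?_
      filter_upwards [hae] with t ht
      exact ENNReal.ofReal_le_ofReal (hlow t ht)
    have h2 := h1.trans_lt (hfin 1 one_pos).lt_top
    simp_rw [ENNReal.ofReal_mul hc'.le] at h2
    rw [lintegral_const_mul _ (by fun_prop)] at h2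
    by_contra hcon
    rw [not_lt, top_le_iff] at hcon
    rw [hcon, ENNReal.mul_top (by simpa using hc')] at h2
    exact lt_irrefl _ h2
  · intro x hx
    rw [integral_eq_lintegral_of_nonneg_ae (by filter_upwards [hae] with t ht using Phi_nonneg N hx ht) (Phi_meas N x).aestronglyMeasurable]
    have := congrArg ENNReal.toReal (hF x hx)
    rw [ENNReal.toReal_ofReal (hf0 x hx), ENNReal.toReal_add (by simp) (hfin x hx), ENNReal.toReal_ofReal hA] at this
    exact this


lemma Kn_le (n : ℕ) (s s' r : ℝ) : Kn n s r ≤ Real.exp (n * |s - s'|) * Kn n s' r := by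
  unfold Kn
  rw [← mul_div_assoc, ← Real.exp_add]
  refine div_le_div_of_nonneg_right (Real.exp_le_exp.2 ?_) (by positivity)
  have : |s' - r| ≤ |s - s'| + |s - r| := by
    rw [abs_sub_comm s s']; exact abs_sub_le _ _ _
  have hn : (0:ℝ) ≤ n := Nat.cast_nonneg n
  nlinarith

lemma Kn_fin (n : ℕ) {σ : Measure ℝ} {s : ℝ} (h : ∫⁻ r, ENNReal.ofReal (Kn n s r) ∂σ ≠ ⊤) (s' : ℝ) :
    ∫⁻ r, ENNReal.ofReal (Kn n s' r) ∂σ ≠ ⊤ := by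
  have : ∫⁻ r, ENNReal.ofReal (Kn n s' r) ∂σ ≤ ENNReal.ofReal (Real.exp (n * |s' - s|)) * ∫⁻ r, ENNReal.ofReal (Kn n s r) ∂σ := by
    rw [← lintegral_const_mul _ (Kn_meas n s)]
    refine lintegral_mono fun r => ?_
    rw [← ENNReal.ofReal_mul (Real.exp_pos _).le]
    exact ENNReal.ofReal_le_ofReal (Kn_le n s' s r)
  exact ne_top_of_le_ne_top (ENNReal.mul_ne_top (by simp) h) this

open Topology in
lemma reg (n : ℕ) (hn : 1 ≤ n) (σ : Measure ℝ) [SFinite σ] {s₀ : ℝ} (h0 : ∫⁻ r, ENNReal.ofReal (Kn n s₀ r) ∂σ ≠ ⊤) :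
    ∃ g R : ℝ → ℝ, (∀ s, 0 ≤ g s) ∧ (∀ s, ∫⁻ r, ENNReal.ofReal (Kn n s r) ∂σ = ENNReal.ofReal (g s)) ∧ Continuous g ∧ 
      Antitone R ∧ (∀ s, HasDerivWithinAt (fun s => Real.exp (n * s) * g s) (Real.exp (2 * n * s) * R s) (Ioi s) s) ∧
      (∀ a b, Real.exp (n * b) * g b - Real.exp (n * a) * g a = ∫ s in a..b, Real.exp (2 * n * s) * R s) ∧
      (∀ a b, a ≤ b → R a - R b = (∫⁻ r in Ioc a b, ENNReal.ofReal (Real.exp (-(n * r))) ∂σ).toReal) := by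
  have hn0 : (0 : ℝ) < n := by exact_mod_cast hn
  have hfin := Kn_fin n h0
  set σ' := σ.withDensity (fun r => ENNReal.ofReal (Real.exp (-(n * r)))) with hσ'
  have hd : Measurable (fun r : ℝ => ENNReal.ofReal (Real.exp (-(n * r)))) := by fun_prop
  have hσIoc : ∀ a b, σ' (Ioc a b) = ∫⁻ r in Ioc a b, ENNReal.ofReal (Real.exp (-(n * r))) ∂σ := fun a b => 
    withDensity_apply _ measurableSet_Ioc
  have hIoi : ∀ r, σ' (Ioi r) ≠ ⊤ := by
    intro r
    rw [hσ', withDensity_apply _ measurableSet_Ioi]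
    have : ∫⁻ a in Ioi r, ENNReal.ofReal (Real.exp (-(n * a))) ∂σ ≤ ∫⁻ a, ENNReal.ofReal (2 * n * Real.exp (-(n * r))) * ENNReal.ofReal (Kn n r a) ∂σ := by
      refine le_trans (setLIntegral_mono' measurableSet_Ioi fun a ha => ?_) (setLIntegral_le_lintegral (Ioi r) _)
      rw [← ENNReal.ofReal_mul (by positivity)]
      refine ENNReal.ofReal_le_ofReal (le_of_eq ?_)
      have ha : r < a := ha
      unfold Kn
      rw [abs_of_neg (by linarith)]
      rw [mul_div_assoc', mul_assoc, ← Real.exp_add]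
      field_simp
      ring_nf
    rw [lintegral_const_mul _ (Kn_meas n r)] at this
    exact ne_top_of_le_ne_top (ENNReal.mul_ne_top ENNReal.ofReal_ne_top (hfin r)) this
  set R : ℝ → ℝ := fun r => (σ' (Ioi r)).toReal with hR
  have hRa : Antitone R := fun a b hab => ENNReal.toReal_mono (hIoi a) (measure_mono (Ioi_subset_Ioi hab))
  have hRofR : ∀ r, σ' (Ioi r) = ENNReal.ofReal (R r) := fun r => (ENNReal.ofReal_toReal (hIoi r)).symm
  have hR0 : ∀ r, 0 ≤ R r := fun r => ENNReal.toReal_nonneg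
  have hRd : ∀ a b, a ≤ b → R a - R b = (σ' (Ioc a b)).toReal := by
    intro a b hab
    have : σ' (Ioi a) = σ' (Ioc a b) + σ' (Ioi b) := by
      rw [← measure_union (by rw [Set.disjoint_left]; intro x hx hx2; exact absurd hx2 (not_lt.2 hx.2)) measurableSet_Ioi, Ioc_union_Ioi_eq_Ioi hab]
    have hne : σ' (Ioc a b) ≠ ⊤ := ne_top_of_le_ne_top (hIoi a) (measure_mono Ioc_subset_Ioi_self)
    simp only [hR]
    rw [this, ENNReal.toReal_add hne (hIoi b)]; ring
  set g : ℝ → ℝ := fun s => (∫⁻ r, ENNReal.ofReal (Kn n s r) ∂σ).toReal with hg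
  have hgof : ∀ s, ∫⁻ r, ENNReal.ofReal (Kn n s r) ∂σ = ENNReal.ofReal (g s) := fun s => (ENNReal.ofReal_toReal (hfin s)).symm
  have hg0 : ∀ s, 0 ≤ g s := fun s => ENNReal.toReal_nonneg
  have hli : ∀ s, ∫⁻ r in Iic s, ENNReal.ofReal (Real.exp (2 * n * r) * R r) = ENNReal.ofReal (Real.exp (n * s) * g s) := by
    intro s
    have := fub (2 * n) (by positivity) σ' s
    rw [hσ', lintegral_withDensity_eq_lintegral_mul _ hd (by fun_prop), ← hσ'] at this
    rw [ENNReal.ofReal_mul (Real.exp_pos _).le, ← hgof, ← lintegral_const_mul _ (Kn_meas n s)]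
    refine Eq.trans (lintegral_congr fun r => ?_) (this.trans (lintegral_congr fun r => ?_))
    · rw [hRofR, ENNReal.ofReal_mul (Real.exp_pos _).le]
    · rw [Pi.mul_apply, ← ENNReal.ofReal_mul (Real.exp_pos _).le, ← ENNReal.ofReal_mul (Real.exp_pos _).le, ← Kn_eq, ← mul_assoc, ← mul_assoc,
        ← Real.exp_add]
      simp [mul_comm]
  have hmeas : Measurable (fun r => Real.exp (2 * n * r) * R r) := (by fun_prop : Measurable fun r : ℝ => Real.exp (2 * n * r)).mul hRa.measurable
  have hnn : ∀ r, 0 ≤ Real.exp (2 * n * r) * R r := fun r => mul_nonneg (Real.exp_pos _).le (hR0 r)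
  have hint : ∀ s, IntegrableOn (fun r => Real.exp (2 * n * r) * R r) (Iic s) := by
    intro s
    refine ⟨hmeas.aestronglyMeasurable, ?_⟩
    rw [hasFiniteIntegral_iff_ofReal (Eventually.of_forall hnn), hli s]
    simp
  have hval : ∀ s, Real.exp (n * s) * g s = ∫ r in Iic s, Real.exp (2 * n * r) * R r := by
    intro s
    rw [integral_eq_lintegral_of_nonneg_ae (Eventually.of_forall hnn) hmeas.aestronglyMeasurable, hli s, ENNReal.toReal_ofReal]
    exact mul_nonneg (Real.exp_pos _).le (hg0 s)
  have hdiff : ∀ a b, Real.exp (n * b) * g b - Real.exp (n * a) * g a = ∫ s in a..b, Real.exp (2 * n * s) * R s := by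
    intro a b
    rw [hval, hval, intervalIntegral.integral_Iic_sub_Iic (hint a) (hint b)]
  have hii : ∀ a b, IntervalIntegrable (fun r => Real.exp (2 * n * r) * R r) volume a b := fun a b => anti_ii hRa _ a b
  have heq : (fun s => Real.exp (n * s) * g s) = fun s => Real.exp (n * 0) * g 0 + ∫ s in (0:ℝ)..s, Real.exp (2 * n * s) * R s := by
    ext s; rw [← hdiff 0 s]; ring
  have hcont : Continuous (fun s => Real.exp (n * s) * g s) := by
    rw [heq]
    exact continuous_const.add (intervalIntegral.continuous_primitive hii 0)
  have hrc : ∀ s, ContinuousWithinAt R (Ioi s) s := by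
    intro s
    have h1 := tendsto_measure_biInter_gt (μ := σ') (s := fun r => Ioc s r) (a := s) (fun r _ => measurableSet_Ioc.nullMeasurableSet)
      (fun i j _ hij => Ioc_subset_Ioc_right hij) ⟨s + 1, by simp, ne_top_of_le_ne_top (hIoi s) (measure_mono Ioc_subset_Ioi_self)⟩
    have h2 : (⋂ r > s, Ioc s r) = ∅ := by
      ext x
      simp only [mem_iInter, mem_Ioc, mem_empty_iff_false, iff_false, not_forall]
      by_cases hx : s < x
      · exact ⟨(s + x) / 2, by linarith, by intro h; linarith [h.2]⟩
      · exact ⟨s + 1, by linarith, fun h => hx h.1⟩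
    rw [h2, measure_empty] at h1
    have h3 : Tendsto (fun r => R s - (σ' (Ioc s r)).toReal) (𝓝[>] s) (𝓝 (R s - 0)) :=
      tendsto_const_nhds.sub ((ENNReal.tendsto_toReal ENNReal.zero_ne_top).comp h1)
    rw [sub_zero] at h3
    refine h3.congr' ?_
    filter_upwards [self_mem_nhdsWithin] with r hr
    rw [← hRd s r (le_of_lt hr)]; ring
  refine ⟨g, R, hg0, hgof, ?_, hRa, ?_, hdiff, fun a b hab => by rw [hRd a b hab, hσIoc]⟩
  · have : g = fun s => Real.exp (-(n * s)) * (Real.exp (n * s) * g s) := by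
      ext s; rw [← mul_assoc, ← Real.exp_add]; simp
    rw [this]
    exact (by fun_prop : Continuous fun s : ℝ => Real.exp (-(n * s))).mul hcont
  · intro s
    rw [heq]
    refine HasDerivWithinAt.const_add _ ?_
    refine (intervalIntegral.integral_hasDerivWithinAt_right (hii 0 s) (s := Ici s) (t := Ioi s) ?_ ?_).mono Ioi_subset_Ici_self
    · exact hmeas.stronglyMeasurable.stronglyMeasurableAtFilter
    · exact (by fun_prop : Continuous fun r : ℝ => Real.exp (2 * n * r)).continuousWithinAt.mul (hrc s)

lemma reg_smooth (n : ℕ) (hn : 1 ≤ n) {g R G : ℝ → ℝ} (hG : Continuous G) (hG0 : ∀ s, 0 ≤ G s)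
    (hdiff : ∀ a b, Real.exp (n * b) * g b - Real.exp (n * a) * g a = ∫ s in a..b, Real.exp (2 * n * s) * R s)
    (hR : ∀ a b, a ≤ b → R a - R b = (∫⁻ r in Ioc a b, ENNReal.ofReal (Real.exp (-(n * r))) ∂(volume.withDensity fun r => ENNReal.ofReal (G r))).toReal) :
    ∃ g' : ℝ → ℝ, (∀ s, HasDerivAt g (g' s) s) ∧ ∀ s, HasDerivAt g' (n ^ 2 * g s - G s) s := by
  have hGm : Measurable (fun r => ENNReal.ofReal (G r)) := by fun_prop
  have hR1 : ∀ a b, a ≤ b → R a - R b = ∫ r in a..b, Real.exp (-(n * r)) * G r := by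
    intro a b hab
    have hnn : ∀ r, 0 ≤ Real.exp (-(n * r)) * G r := fun r => mul_nonneg (Real.exp_pos _).le (hG0 r)
    have hii : IntervalIntegrable (fun r => Real.exp (-(n * r)) * G r) volume a b := Continuous.intervalIntegrable (by fun_prop) _ _
    rw [hR a b hab, restrict_withDensity measurableSet_Ioc, lintegral_withDensity_eq_lintegral_mul _ hGm (by fun_prop)]
    have := lint_Ioc hab hnn hii
    rw [← ENNReal.toReal_ofReal (intervalIntegral.integral_nonneg hab fun r _ => hnn r), ← this]
    congr 1
    refine lintegral_congr fun r => ?_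
    rw [Pi.mul_apply, ENNReal.ofReal_mul (Real.exp_pos _).le, mul_comm]
  have hR2 : R = fun s => R 0 - ∫ r in (0:ℝ)..s, Real.exp (-(n * r)) * G r := by
    ext s
    rcases le_total 0 s with h | h
    · rw [← hR1 0 s h]; ring
    · rw [intervalIntegral.integral_symm, ← hR1 s 0 h]; ring
  have hRd : ∀ s, HasDerivAt R (-(Real.exp (-(n * s)) * G s)) s := by
    intro s
    rw [hR2]
    refine HasDerivAt.const_sub _ ?_
    exact intervalIntegral.integral_hasDerivAt_right (Continuous.intervalIntegrable (by fun_prop) _ _)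
      (Continuous.stronglyMeasurableAtFilter (by fun_prop) _ _) (Continuous.continuousAt (by fun_prop))
  have hRc : Continuous R := continuous_iff_continuousAt.2 fun s => (hRd s).continuousAt
  have hh : ∀ s, HasDerivAt (fun s => Real.exp (n * s) * g s) (Real.exp (2 * n * s) * R s) s := by
    intro s
    have heq : (fun s => Real.exp (n * s) * g s) = fun s => Real.exp (n * 0) * g 0 + ∫ s in (0:ℝ)..s, Real.exp (2 * n * s) * R s := by
      ext s; rw [← hdiff 0 s]; ring
    rw [heq]
    refine HasDerivAt.const_add _ ?_
    exact intervalIntegral.integral_hasDerivAt_right (Continuous.intervalIntegrable (by fun_prop) _ _)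
      (Continuous.stronglyMeasurableAtFilter (by fun_prop) _ _) (Continuous.continuousAt (by fun_prop))
  have hgeq : g = fun s => Real.exp (-n * s) * (Real.exp (n * s) * g s) := by
    ext s; rw [← mul_assoc, ← Real.exp_add]; simp
  have hg : ∀ s, HasDerivAt g (-n * g s + Real.exp (n * s) * R s) s := by
    intro s
    have := (hasDerivAt_exp_mul (-n) s).mul (hh s)
    rw [hgeq]
    refine this.congr_deriv ?_
    rw [← hgeq]
    have e1 : Real.exp (-n * s) * Real.exp (n * s) = 1 := by rw [← Real.exp_add]; simp
    have e2 : Real.exp (2 * n * s) = Real.exp (n * s) * Real.exp (n * s) := by rw [← Real.exp_add]; ring_nf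
    rw [e2]
    linear_combination (-n * g s + Real.exp (n * s) * R s) * e1
  refine ⟨_, hg, fun s => ?_⟩
  refine (((hg s).const_mul (-n : ℝ)).add ((hasDerivAt_exp_mul n s).mul (hRd s))).congr_deriv ?_
  have e1 : Real.exp (n * s) * Real.exp (-(n * s)) = 1 := by rw [← Real.exp_add]; simp
  linear_combination (- G s) * e1


lemma pn_pos (p : ℕ) {y : ℝ} (hy : 0 ≤ y) : 0 < pn p y := by
  cases p with
  | zero => rw [pn_zero, if_pos hy]; exact one_pos
  | succ p =>
    obtain ⟨c, hc, h⟩ := pn_lower p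
    exact lt_of_lt_of_le (by have := Real.exp_pos y; positivity) (h y)

lemma exists_fin (p : ℕ) (σ : Measure ℝ) [SFinite σ] (h : ∫⁻ r, ENNReal.ofReal (pn (p + 1) (0 - r)) ∂σ ≠ ⊤) :
    ∫⁻ r, ENNReal.ofReal (Kn (p + 1) 0 r) ∂σ ≠ ⊤ := by
  by_contra hcon
  have hall : ∀ q, ∫⁻ r, ENNReal.ofReal (Kn (p + 1) q r) ∂σ = ⊤ := by
    intro q
    by_contra hq
    exact Kn_fin (p + 1) hq 0 hcon
  rw [← pn_chain] at h
  have := kill (S := Iic 0) measurableSet_Iic (by simp) (zero_le_one' ℝ) h (fun r hr => by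
    rw [hall, ENNReal.mul_top]
    · exact le_top
    · have hr : r ≤ 0 := hr
      have := pn_pos p (y := 0 - r) (by linarith)
      simpa using this)
  exact one_ne_zero this

lemma back (p : ℕ) : ∀ (σ : Measure ℝ) [SFinite σ] (_ : ∀ s, ∫⁻ r, ENNReal.ofReal (pn (p + 1) (s - r)) ∂σ ≠ ⊤),
    ∃ (u : ℝ → ℝ) (g : ℕ → ℝ → ℝ) (R : ℝ → ℝ), (∀ s, 0 ≤ u s) ∧ 
      (∀ s, ∫⁻ r, ENNReal.ofReal (pn (p + 1) (s - r)) ∂σ = ENNReal.ofReal (u s)) ∧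
      (∀ q ≤ p, ∀ s, 0 ≤ g q s) ∧ (∀ q ≤ p, Continuous (g q)) ∧ (∀ s, HasDerivAt u (g 0 s) s) ∧
      (∀ q < p, ∃ g' : ℝ → ℝ, (∀ s, HasDerivAt (g q) (g' s) s) ∧ 
        ∀ s, HasDerivAt g' ((q + 1 : ℕ) ^ 2 * g q s - g (q + 1) s) s) ∧
      Antitone R ∧ 
      (∀ s, HasDerivWithinAt (fun s => Real.exp ((p + 1 : ℕ) * s) * g p s) (Real.exp (2 * (p + 1 : ℕ) * s) * R s) (Ioi s) s) ∧
      (∀ a b, Real.exp ((p + 1 : ℕ) * b) * g p b - Real.exp ((p + 1 : ℕ) * a) * g p a = ∫ s in a..b, Real.exp (2 * (p + 1 : ℕ) * s) * R s) ∧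
      (∀ a b, a ≤ b → R a - R b = (∫⁻ r in Ioc a b, ENNReal.ofReal (Real.exp (-((p + 1 : ℕ) * r))) ∂σ).toReal) := by
  induction p with
  | zero =>
    intro σ _ hfin
    obtain ⟨g, R, hg0, hgof, hgc, hRa, hder, hdiff, hRd⟩ := reg 1 le_rfl σ (exists_fin 0 σ (hfin 0))
    have hZ : ∀ s, ∫⁻ r, ENNReal.ofReal (pn 1 (s - r)) ∂σ = ∫⁻ r in Iic s, ENNReal.ofReal (g r) := by
      intro s
      rw [← pn_chain 0, ← lintegral_indicator measurableSet_Iic]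
      refine lintegral_congr fun r => ?_
      rw [pn_zero, hgof]
      by_cases hr : r ≤ s
      · rw [indicator_of_mem (by exact hr), if_pos (by linarith)]; simp
      · rw [indicator_of_notMem (by exact hr), if_neg (by linarith)]; simp
    have hint : ∀ s, IntegrableOn g (Iic s) := by
      intro s
      refine ⟨hgc.measurable.aestronglyMeasurable, ?_⟩
      rw [hasFiniteIntegral_iff_ofReal (Eventually.of_forall hg0), ← hZ s]
      exact (hfin s).lt_top
    refine ⟨fun s => ∫ r in Iic s, g r, fun _ => g, R, ?_, ?_, fun _ _ => hg0, fun _ _ => hgc, ?_, fun q hq => absurd hq (by omega), hRa, hder, hdiff, hRd⟩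
    · intro s
      exact integral_nonneg hg0
    · intro s
      rw [hZ s, ofReal_integral_eq_lintegral_ofReal (hint s) (Eventually.of_forall hg0)]
    · intro s
      have : (fun s => ∫ r in Iic s, g r) = fun s => (∫ r in Iic 0, g r) + ∫ r in (0:ℝ)..s, g r := by
        ext s
        rw [← intervalIntegral.integral_Iic_sub_Iic (hint 0) (hint s)]; ring
      rw [this]
      refine HasDerivAt.const_add _ ?_
      exact intervalIntegral.integral_hasDerivAt_right (hgc.intervalIntegrable _ _)
        (hgc.stronglyMeasurableAtFilter _ _) hgc.continuousAt
  | succ p ih =>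
    intro σ _ hfin
    obtain ⟨G, R, hG0, hGof, hGc, hRa, hder, hdiff, hRd⟩ := reg (p + 2) (by omega) σ (exists_fin (p + 1) σ (hfin 0))
    have hZ : ∀ s, ∫⁻ r, ENNReal.ofReal (pn (p + 1) (s - r)) ∂(volume.withDensity fun r => ENNReal.ofReal (G r)) 
        = ∫⁻ r, ENNReal.ofReal (pn (p + 2) (s - r)) ∂σ := by
      intro s
      have hpm : Measurable fun r => ENNReal.ofReal (pn (p + 1) (s - r)) :=
        ((pn_meas _).comp (measurable_const.sub measurable_id)).ennreal_ofReal
      rw [lintegral_withDensity_eq_lintegral_mul _ hGc.measurable.ennreal_ofReal hpm, ← pn_chain (p + 1)]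
      refine lintegral_congr fun r => ?_
      rw [Pi.mul_apply, hGof, mul_comm]
    obtain ⟨u, g, R', hu0, huof, hg0, hgc, hud, hode, -, -, hdiff', hRd'⟩ := ih (volume.withDensity fun r => ENNReal.ofReal (G r)) 
      (fun s => by rw [hZ s]; exact hfin s)
    obtain ⟨g', hg1, hg2⟩ := reg_smooth (p + 1) (by omega) hGc hG0 hdiff' hRd'
    refine ⟨u, fun q => if q = p + 1 then G else g q, R, hu0, fun s => by rw [← hZ s, huof s], ?_, ?_, ?_, ?_, hRa, ?_, ?_, hRd⟩
    · intro q hq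
      by_cases h : q = p + 1
      · simp only [if_pos h]; exact hG0
      · simp only [if_neg h]; exact hg0 q (by omega)
    · intro q hq
      by_cases h : q = p + 1
      · simp only [if_pos h]; exact hGc
      · simp only [if_neg h]; exact hgc q (by omega)
    · beta_reduce
      rw [if_neg (by omega)]; exact hud
    · intro q hq
      beta_reduce
      rw [if_neg (by omega)]
      by_cases h : q = p
      · subst h
        refine ⟨g', hg1, ?_⟩
        simpa using hg2
      · rw [if_neg (by omega)]
        exact hode q (by omega)
    · simp only [↓reduceIte]; exact hder
    · simp only [↓reduceIte]; exact hdiff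

lemma cd_step {g h : ℝ → ℝ} (hd : ∀ s, HasDerivAt g (h s) s) {i : ℕ} (hh : ContDiff ℝ i h) : ContDiff ℝ (i + 1 : ℕ) g := by
  have : deriv g = h := funext fun s => (hd s).deriv
  have h2 := (contDiff_succ_iff_deriv (n := (i : WithTop ℕ∞)) (f := g)).2 ⟨fun s => (hd s).differentiableAt, by simp, by rw [this]; exact hh⟩
  exact_mod_cast h2

lemma cd_ode {g g' G : ℝ → ℝ} {c : ℝ} (h1 : ∀ s, HasDerivAt g (g' s) s) (h2 : ∀ s, HasDerivAt g' (c * g s - G s) s)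
    {j : ℕ} (hG : ContDiff ℝ j G) : ContDiff ℝ (j + 2 : ℕ) g := by
  have : ∀ i ≤ j + 1, ContDiff ℝ i g ∧ ContDiff ℝ i g' := by
    intro i
    induction i with
    | zero => 
      intro _
      constructor
      · exact contDiff_zero.2 (continuous_iff_continuousAt.2 fun s => (h1 s).continuousAt)
      · exact contDiff_zero.2 (continuous_iff_continuousAt.2 fun s => (h2 s).continuousAt)
    | succ i ih =>
      intro hi
      obtain ⟨a, b⟩ := ih (by omega)
      refine ⟨cd_step h1 b, cd_step h2 ?_⟩
      exact (contDiff_const.mul a).sub (hG.of_le (by exact_mod_cast (by omega : i ≤ j)))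
  exact cd_step h1 (this (j + 1) le_rfl).2

lemma final_back (p : ℕ) {f : ℝ → ℝ} (hf : ∀ x > 0, 0 ≤ f x) {u : ℝ → ℝ} {g : ℕ → ℝ → ℝ} {R : ℝ → ℝ}
    (hu : ∀ s, u s = Real.exp s * f (Real.exp s)) 
    (hg0 : ∀ q ≤ p, ∀ s, 0 ≤ g q s) (hgc : Continuous (g p)) (hud : ∀ s, HasDerivAt u (g 0 s) s)
    (hode : ∀ q < p, ∃ g' : ℝ → ℝ, (∀ s, HasDerivAt (g q) (g' s) s) ∧ 
        ∀ s, HasDerivAt g' ((q + 1 : ℕ) ^ 2 * g q s - g (q + 1) s) s)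
    (hR : Antitone R)
    (hder : ∀ s, HasDerivWithinAt (fun s => Real.exp ((p + 1 : ℕ) * s) * g p s) (Real.exp (2 * (p + 1 : ℕ) * s) * R s) (Ioi s) s) :
    IsStieltjesK (p + 2) f := by
  have hcd : ∀ i ≤ p, ContDiff ℝ (2 * i : ℕ) (g (p - i)) := by
    intro i
    induction i with
    | zero => intro _; exact contDiff_zero.2 hgc
    | succ i ih =>
      intro hi
      obtain ⟨g', h1, h2⟩ := hode (p - (i + 1)) (by omega)
      have h := ih (by omega)
      rw [show p - (i + 1) + 1 = p - i by omega] at h2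
      exact cd_ode h1 h2 h
  have hucd : ContDiff ℝ (2 * p + 1 : ℕ) u := by
    have := hcd p le_rfl
    rw [Nat.sub_self] at this
    exact cd_step hud this
  have hfcd : ContDiffOn ℝ (2 * p + 1 : ℕ) f (Ioi 0) := by
    have h1 : ContDiffOn ℝ (2 * p + 1 : ℕ) (fun x => x⁻¹ * u (Real.log x)) (Ioi 0) := by
      refine ContDiffOn.mul ?_ ?_
      · exact contDiffOn_id.inv fun x hx => ne_of_gt hx
      · exact hucd.comp_contDiffOn (Real.contDiffOn_log.mono fun x hx => ne_of_gt hx)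
    refine h1.congr fun x hx => ?_
    have hx : 0 < x := hx
    rw [hu, Real.exp_log hx]; field_simp
  have hgg : ∀ q ≤ p, gg f q = g q := by
    intro q
    induction q with
    | zero =>
      intro _
      ext s
      have h1 := T1 hfcd (by omega) s
      have : u = fun s => Real.exp s * f (Real.exp s) := funext hu
      rw [← this] at h1
      exact h1.unique (hud s)
    | succ q ih =>
      intro hq
      have e := ih (by omega)
      obtain ⟨g', h1, h2⟩ := hode q (by omega)
      obtain ⟨g'', h3, h4⟩ := T2 (p := q) hfcd (by omega)
      rw [e] at h3 h4
      have e2 : g'' = g' := funext fun s => (h3 s).unique (h1 s)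
      rw [e2] at h4
      ext s
      have := (h4 s).unique (h2 s)
      linarith
  refine ⟨hf, ?_, ?_, ?_⟩
  · rw [show 2 * (p + 2) - 3 = 2 * p + 1 by omega]; exact hfcd
  · intro n hn1 hn2 x hx
    obtain ⟨q, rfl⟩ : ∃ q, n = q + 1 := ⟨n - 1, by omega⟩
    have h := hg0 q (by omega) (Real.log x)
    rw [← hgg q (by omega)] at h
    unfold gg at h
    rw [Real.exp_log hx, mul_left_comm] at h
    rw [show 2 * (q + 1) - 1 = 2 * q + 1 by omega, show q + 1 - 1 = q by omega]
    exact (mul_nonneg_iff_of_pos_left (Real.exp_pos _)).1 h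
  · rw [show 2 * (p + 2) - 3 = 2 * p + 1 by omega, show p + 2 - 1 = p + 1 by omega]
    obtain ⟨U, V, hU, hV, hgV, hQ⟩ := T3 hfcd
    have hc := int_to_concave (p + 1) (Q := fun x => x * V x + (2 * (p + 1 : ℕ) - 1) * U x) hU (fun _ _ => rfl) hR
      (continuousOn_univ.1 (hV.comp Real.continuous_exp.continuousOn fun x _ => Real.exp_pos x)) (fun s => by
        have : (fun s => Real.exp (2 * (p + 1 : ℕ) * s) * V (Real.exp s)) = fun s => Real.exp ((p + 1 : ℕ) * s) * g p s := by
          ext s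
          rw [← hgg p le_rfl, hgV, ← mul_assoc, ← Real.exp_add]
          ring_nf
        rw [this]
        exact hder s)
    refine hc.neg.congr fun x hx => ?_
    rw [hQ x hx]; rfl


lemma back_total (p : ℕ) {f : ℝ → ℝ} (hf : ∀ x > 0, 0 ≤ f x) (σ : Measure ℝ) [SFinite σ] 
    (hfin : ∀ s, ∫⁻ r, ENNReal.ofReal (pn (p + 1) (s - r)) ∂σ ≠ ⊤) {a c : ℝ} (ha : 0 ≤ a)
    (h : ∀ s, Real.exp s * f (Real.exp s) = a * Real.exp s + c + (∫⁻ r, ENNReal.ofReal (pn (p + 1) (s - r)) ∂σ).toReal) :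
    IsStieltjesK (p + 2) f := by
  obtain ⟨u, g, R, hu0, huof, hg0, hgc, hud, hode, hR, hder, -, -⟩ := back p σ hfin
  have hae : ∀ s, HasDerivAt (fun s => a * Real.exp s) (a * Real.exp s) s := fun s => (Real.hasDerivAt_exp s).const_mul a
  have hut : ∀ s, a * Real.exp s + c + u s = Real.exp s * f (Real.exp s) := by
    intro s; rw [h s, huof s, ENNReal.toReal_ofReal (hu0 s)]
  have hud' : ∀ s, HasDerivAt (fun s => a * Real.exp s + c + u s) (a * Real.exp s + g 0 s) s := fun s =>
    ((hae s).add_const c).add (hud s)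
  have hnn : ∀ q ≤ p, ∀ s, 0 ≤ (if q = 0 then a * Real.exp s + g q s else g q s) := by
    intro q hq s
    have := hg0 q hq s
    have := Real.exp_pos s
    split_ifs <;> positivity
  rcases Nat.eq_zero_or_pos p with rfl | hp
  · refine final_back 0 hf (u := fun s => a * Real.exp s + c + u s) (g := fun q s => if q = 0 then a * Real.exp s + g q s else g q s) 
      (R := fun s => R s + 2 * a) hut hnn ?_ ?_ (fun q hq => absurd hq (by omega)) (hR.add_const _) ?_
    · simp only [↓reduceIte]
      have := hgc 0 le_rfl
      fun_prop
    · simpa using hud'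
    · intro s
      simp only [↓reduceIte]
      have h1 := hder s
      have h2 : HasDerivAt (fun s => Real.exp (2 * s) * a) (Real.exp (2 * s) * 2 * a) s := (hasDerivAt_exp_mul 2 s).mul_const a
      refine ((h2.hasDerivWithinAt (s := Ioi s)).add h1).congr_deriv ?_ |>.congr (fun x _ => ?_) ?_
      · push_cast; ring_nf
      · simp only [Pi.add_apply]
        rw [show 2 * x = x + x by ring, Real.exp_add]; push_cast; ring_nf
      · simp only [Pi.add_apply]
        rw [show 2 * s = s + s by ring, Real.exp_add]; push_cast; ring_nf
  · refine final_back p hf (u := fun s => a * Real.exp s + c + u s) (g := fun q s => if q = 0 then a * Real.exp s + g q s else g q s) 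
      (R := R) hut hnn ?_ ?_ ?_ hR ?_
    · simp only [if_neg hp.ne']
      exact hgc p le_rfl
    · simpa using hud'
    · intro q hq
      obtain ⟨g', h1, h2⟩ := hode q hq
      by_cases hq0 : q = 0
      · subst hq0
        refine ⟨fun s => a * Real.exp s + g' s, fun s => ?_, fun s => ?_⟩
        · simp only [↓reduceIte]
          exact (hae s).add (h1 s)
        · refine ((hae s).add (h2 s)).congr_deriv ?_
          simp; ring
      · refine ⟨g', ?_, ?_⟩
        · simpa [hq0] using h1
        · simpa [hq0] using h2
    · simp only [if_neg hp.ne']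
      exact hder

lemma backward_final (p : ℕ) {f : ℝ → ℝ} (hf : ∀ x > 0, 0 ≤ f x) {a : ℝ} {μ : Measure ℝ} (ha : 0 ≤ a)
    (hμ0 : μ (Iio 0) = 0) (hμ : (∫⁻ t, ENNReal.ofReal ((1 + t)⁻¹) ∂μ) < ⊤)
    (h : ∀ x > 0, f x = a + ∫ t, Phi (p + 1) x t ∂μ) : IsStieltjesK (p + 2) f := by
  have hae := ae_nonneg_of hμ0
  set N := p + 1 with hN
  have hφm : Measurable (fun t : ℝ => ENNReal.ofReal ((1 + t)⁻¹)) := by fun_prop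
  have hSF : SFinite μ := by
    have h1 : IsFiniteMeasure (μ.withDensity fun t => ENNReal.ofReal ((1 + t)⁻¹)) := isFiniteMeasure_withDensity hμ.ne
    have h2 := withDensity_inv_same (μ := μ) hφm (by
      filter_upwards [hae] with t ht
      have : 0 < (1 + t)⁻¹ := by positivity
      simpa using this) (Eventually.of_forall fun t => ENNReal.ofReal_ne_top)
    rw [← h2]
    infer_instance
  have hfinP : ∀ x > 0, ∫⁻ t, ENNReal.ofReal (Phi N x t) ∂μ ≠ ⊤ := by
    intro x hx
    have : ∫⁻ t, ENNReal.ofReal (Phi N x t) ∂μ ≤ ∫⁻ t, ENNReal.ofReal (x⁻¹ * Cn N * (1 + x)) * ENNReal.ofReal ((1 + t)⁻¹) ∂μ := by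
      refine lintegral_mono_ae ?_
      filter_upwards [hae] with t ht
      have := Cn_nonneg N
      rw [← ENNReal.ofReal_mul (by positivity)]
      exact ENNReal.ofReal_le_ofReal (Phi_upper N hx ht)
    rw [lintegral_const_mul _ hφm] at this
    exact ne_top_of_le_ne_top (ENNReal.mul_ne_top ENNReal.ofReal_ne_top hμ.ne) this
  have hres : μ.restrict (Ici 0) = μ := Measure.restrict_eq_self_of_ae_mem hae
  have hsplit : ∀ F : ℝ → ENNReal, ∫⁻ t, F t ∂μ = F 0 * μ {0} + ∫⁻ t in Ioi 0, F t ∂μ := by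
    intro F
    conv_lhs => rw [← hres]
    rw [← Ioi_insert, insert_eq, lintegral_union measurableSet_Ioi (by simp), lintegral_singleton]
  have hm0 : μ {0} ≠ ⊤ := by
    have := hsplit (fun t => ENNReal.ofReal ((1 + t)⁻¹))
    simp only [add_zero, inv_one, ENNReal.ofReal_one, one_mul] at this
    rw [this] at hμ
    exact (lt_of_le_of_lt le_self_add hμ).ne
  set σ : Measure ℝ := ENNReal.ofReal ((2 * N).factorial : ℝ) • (μ.restrict (Ioi 0)).map Real.log with hσ
  have hfac : (0 : ℝ) < ((2 * N).factorial : ℝ) := by positivity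
  have hl : ∀ s, ∫⁻ t in Ioi 0, ENNReal.ofReal (Phi N (Real.exp s) t) ∂μ 
      = ENNReal.ofReal (Real.exp (-s)) * ∫⁻ r, ENNReal.ofReal (pn N (s - r)) ∂σ := by
    intro s
    have hpm : Measurable fun r => ENNReal.ofReal (pn N (s - r)) :=
      ((pn_meas _).comp (measurable_const.sub measurable_id)).ennreal_ofReal
    have hpl : Measurable fun t => ENNReal.ofReal (pn N (s - Real.log t)) := hpm.comp Real.measurable_log
    rw [hσ, lintegral_smul_measure, lintegral_map hpm Real.measurable_log, smul_eq_mul, ← mul_assoc,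
      ← lintegral_const_mul _ hpl]
    refine setLIntegral_congr_fun measurableSet_Ioi fun t ht => ?_
    have e := Phi_exp N s (Real.log t)
    rw [Real.exp_log ht] at e
    beta_reduce
    rw [e, ENNReal.ofReal_mul (Real.exp_pos _).le, ENNReal.ofReal_mul hfac.le, mul_assoc]
  have hfin : ∀ s, ∫⁻ r, ENNReal.ofReal (pn N (s - r)) ∂σ ≠ ⊤ := by
    intro s hs
    have h1 := hsplit (fun t => ENNReal.ofReal (Phi N (Real.exp s) t))
    rw [hl s, hs, ENNReal.mul_top (by simpa using Real.exp_pos (-s)), add_top] at h1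
    exact hfinP _ (Real.exp_pos s) h1
  refine back_total p hf σ hfin (a := a) (c := ((2 * N).choose N : ℝ) * (μ {0}).toReal) ha fun s => ?_
  have hx := Real.exp_pos s
  rw [h _ hx, integral_eq_lintegral_of_nonneg_ae (by filter_upwards [hae] with t ht using Phi_nonneg N hx ht) (Phi_meas N _).aestronglyMeasurable,
    hsplit, hl s, ENNReal.toReal_add (ENNReal.mul_ne_top ENNReal.ofReal_ne_top hm0) (ENNReal.mul_ne_top ENNReal.ofReal_ne_top (hfin s)),
    ENNReal.toReal_mul, ENNReal.toReal_mul, ENNReal.toReal_ofReal (Phi_nonneg N hx le_rfl), ENNReal.toReal_ofReal (Real.exp_pos _).le,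
    Phi_zero N hx, Real.exp_neg]
  field_simp
  ring

theorem stieltjes_finite_order_representation (k : ℕ) (hk : 2 ≤ k) (f : ℝ → ℝ)
    (hf : ∀ x > 0, 0 ≤ f x) :
    IsStieltjesK k f ↔
      ∃ (a : ℝ) (μ : Measure ℝ), 0 ≤ a ∧ μ (Iio 0) = 0 ∧
        (∫⁻ t, ENNReal.ofReal ((1 + t)⁻¹) ∂μ) < ⊤ ∧
        ∀ x > 0, f x = a + ∫ t, Phi (k - 1) x t ∂μ := by
  obtain ⟨p, rfl⟩ : ∃ p, k = p + 2 := ⟨k - 2, by omega⟩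
  rw [show p + 2 - 1 = p + 1 by omega]
  constructor
  · exact fun h => forward_final p h
  · rintro ⟨a, μ, ha, h0, h1, h2⟩
    exact backward_final p hf ha h0 h1 h2
end

section
/- For every integer k ≥ 1 and every t > 0, the function x ↦ Φ_k(x,t) on (0,∞) belongs to S_{k+1}, i.e. it is of class C^{2k−1}, satisfies (−1)^{n−1} d^{2n−1}/dx^{2n−1} ( x^n Φ_k(x,t) ) ≥ 0 on (0,∞) for n = 1,…,k, and x ↦ (−1)^k d^{2k−1}/dx^{2k−1} ( x^{k+1} Φ_k(x,t) ) is convex on (0,∞). -/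
open Set MeasureTheory Filter

noncomputable def bt (a b : ℕ) : ℝ := (a.factorial * b.factorial : ℝ) / ((a + b + 1).factorial : ℝ)

lemma bt_rec (a b : ℕ) : bt a b = bt (a+1) b + bt a (b+1) := by
  unfold bt
  have e1 : a + 1 + b + 1 = (a + b + 1) + 1 := by ring
  have e2 : a + (b + 1) + 1 = (a + b + 1) + 1 := by ring
  rw [e1, e2, Nat.factorial_succ (a+b+1), Nat.factorial_succ a, Nat.factorial_succ b]
  have := Nat.factorial_pos (a+b+1)
  have h : ((a+b+1).factorial : ℝ) ≠ 0 := by positivity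
  have h2 : (a + b + 1 + 1 : ℝ) ≠ 0 := by positivity
  push_cast
  field_simp
  ring

lemma T_rec (f : ℕ → ℝ) (y : ℝ) (N : ℕ) :
    ∑ j ∈ Finset.range (N + 2), ((N+1).choose j : ℝ) * (-y)^j * f j
    = ∑ j ∈ Finset.range (N + 1), (N.choose j : ℝ) * (-y)^j * f j
      - y * ∑ j ∈ Finset.range (N + 1), (N.choose j : ℝ) * (-y)^j * f (j+1) := by
  rw [Finset.sum_range_succ']
  have h : ∀ j ∈ Finset.range (N+1), ((N+1).choose (j+1) : ℝ) * (-y)^(j+1) * f (j+1)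
     = (-y) * ((N.choose j : ℝ) * (-y)^j * f (j+1)) + (N.choose (j+1) : ℝ) * (-y)^(j+1) * f (j+1) := by
    intro j _
    rw [Nat.choose_succ_succ]; push_cast; ring
  rw [Finset.sum_congr rfl h, Finset.sum_add_distrib, ← Finset.mul_sum]
  have h2 := Finset.sum_range_succ' (fun j => (N.choose j : ℝ) * (-y)^j * f j) (N+1)
  rw [Finset.sum_range_succ] at h2
  simp only [Nat.choose_succ_self] at h2
  simp at h2 ⊢
  linarith

lemma S_nonneg (y : ℝ) (hy : y ≤ 1) (N : ℕ) : ∀ a b : ℕ,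
    0 ≤ ∑ j ∈ Finset.range (N + 1), (N.choose j : ℝ) * (-y)^j * bt (a + j) b := by
  induction N with
  | zero => intro a b; simp [bt]; positivity
  | succ N ih =>
    intro a b
    rw [T_rec (fun j => bt (a+j) b)]
    have h : ∑ j ∈ Finset.range (N + 1), (N.choose j : ℝ) * (-y)^j * bt (a + j) b
       = ∑ j ∈ Finset.range (N + 1), (N.choose j : ℝ) * (-y)^j * bt (a + 1 + j) b
        + ∑ j ∈ Finset.range (N + 1), (N.choose j : ℝ) * (-y)^j * bt (a + j) (b+1) := by
      rw [← Finset.sum_add_distrib]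
      refine Finset.sum_congr rfl fun j _ => ?_
      rw [bt_rec (a+j) b, show a + j + 1 = a + 1 + j by ring]; ring
    have e : ∑ j ∈ Finset.range (N + 1), (N.choose j : ℝ) * (-y)^j * bt (a + (j + 1)) b
       = ∑ j ∈ Finset.range (N + 1), (N.choose j : ℝ) * (-y)^j * bt (a + 1 + j) b :=
      Finset.sum_congr rfl fun j _ => by rw [show a + (j+1) = a + 1 + j by ring]
    rw [e]
    have h1 := ih (a+1) b
    have h2 := ih a (b+1)
    nlinarith

/-- The polynomial `Q`, with `n = p+1`, `k = p+1+N`. -/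
lemma Q_nonneg (y : ℝ) (hy : y ≤ 1) (p N : ℕ) :
    0 ≤ ∑ j ∈ Finset.range (N + 1), ((2*(p+1+N)).choose (2*p+2+N+j) : ℝ) *
      ((j+2*p+1).factorial / j.factorial : ℝ) * (-y)^j := by
  have h := S_nonneg y hy N (2*p+1) N
  have h' : (0:ℝ) ≤ ((2*(p+1+N)).factorial / (N.factorial * N.factorial) : ℝ) *
    ∑ j ∈ Finset.range (N + 1), (N.choose j : ℝ) * (-y)^j * bt (2*p+1 + j) N :=
    mul_nonneg (div_nonneg (Nat.cast_nonneg _) (mul_nonneg (Nat.cast_nonneg _) (Nat.cast_nonneg _))) h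
  refine h'.trans_eq ?_
  rw [Finset.mul_sum]
  refine Finset.sum_congr rfl fun j hj => ?_
  have hj : j ≤ N := by simpa [Nat.lt_succ_iff] using hj
  rw [Nat.cast_choose ℝ hj, Nat.cast_choose ℝ (by omega : 2*p+2+N+j ≤ 2*(p+1+N))]
  rw [show 2*(p+1+N) - (2*p+2+N+j) = N - j by omega]
  unfold bt
  rw [show 2*p+1+j+N+1 = 2*p+2+N+j by ring, show 2*p+1+j = j+2*p+1 by ring]
  have f1 := Nat.factorial_ne_zero (N-j)
  have f2 := Nat.factorial_ne_zero N
  have f3 := Nat.factorial_ne_zero j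
  have f4 := Nat.factorial_ne_zero (2*p+2+N+j)
  have g1 : ((N-j).factorial : ℝ) ≠ 0 := by exact_mod_cast f1
  have g2 : (N.factorial : ℝ) ≠ 0 := by exact_mod_cast f2
  have g3 : (j.factorial : ℝ) ≠ 0 := by exact_mod_cast f3
  have g4 : ((2*p+2+N+j).factorial : ℝ) ≠ 0 := by exact_mod_cast f4
  generalize ((N-j).factorial : ℝ) = A1 at *
  generalize (N.factorial : ℝ) = A2 at *
  generalize (j.factorial : ℝ) = A3 at *
  generalize ((2*p+2+N+j).factorial : ℝ) = A4 at *
  generalize ((2*(p+1+N)).factorial : ℝ) = A5 at *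
  generalize ((j+2*p+1).factorial : ℝ) = A6 at *
  field_simp

noncomputable def rp (t x : ℝ) : ℝ := max (x - t) 0

lemma rp_deriv (t : ℝ) (n : ℕ) (x : ℝ) :
    HasDerivAt (fun x => rp t x ^ (n+2)) ((n+2 : ℕ) * rp t x ^ (n+1)) x := by
  unfold rp
  have hp : ∀ x, HasDerivAt (fun x : ℝ => (x - t) ^ (n+2)) ((n+2 : ℕ) * (x - t) ^ (n+1)) x := by
    intro x
    have h := HasDerivAt.fun_pow ((hasDerivAt_id x).sub_const t) (n+2)
    simpa using h
  rcases lt_trichotomy x t with h | h | h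
  · rw [max_eq_right (by linarith)]
    have : HasDerivAt (fun _ : ℝ => (0:ℝ)) 0 x := hasDerivAt_const _ _
    simp only [ne_eq, Nat.add_eq_zero_iff, one_ne_zero, and_false, not_false_eq_true, zero_pow, mul_zero]
    refine this.congr_of_eventuallyEq ?_
    filter_upwards [Iio_mem_nhds h] with y hy
    simp at hy
    rw [max_eq_right (by linarith)]; simp
  · subst h
    rw [← hasDerivWithinAt_univ, ← Iic_union_Ici (a := x)]
    refine HasDerivWithinAt.union ?_ ?_
    · simp only [sub_self, max_self, ne_eq, Nat.add_eq_zero_iff, one_ne_zero, and_false, not_false_eq_true, zero_pow, mul_zero]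
      refine (hasDerivWithinAt_const x (Iic x) (0:ℝ)).congr ?_ (by simp)
      intro y hy
      simp at hy
      rw [max_eq_right (by linarith)]; simp
    · have := (hp x).hasDerivWithinAt (s := Ici x)
      simp only [sub_self, max_self] at this ⊢
      refine this.congr ?_ (by simp)
      intro y hy
      simp at hy
      rw [max_eq_left (by linarith)]
  · rw [max_eq_left (by linarith)]
    refine (hp x).congr_of_eventuallyEq ?_
    filter_upwards [Ioi_mem_nhds h] with y hy
    simp at hy
    rw [max_eq_left (by linarith)]

lemma rp_contDiff (t : ℝ) (n : ℕ) : ContDiff ℝ n (fun x => rp t x ^ (n+1)) := by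
  induction n with
  | zero =>
    simp only [Nat.cast_zero, contDiff_zero]
    unfold rp; fun_prop
  | succ n ih =>
    push_cast
    rw [contDiff_succ_iff_deriv]
    refine ⟨fun x => (rp_deriv t n x).differentiableAt, by simp, ?_⟩
    rw [show deriv (fun x => rp t x ^ (n+1+1)) = fun x => (n+2 : ℕ) * rp t x ^ (n+1) from
      funext fun x => (rp_deriv t n x).deriv]
    exact contDiff_const.mul ih

lemma rp_iter (t : ℝ) (n : ℕ) : ∃ c : ℝ, 0 ≤ c ∧
    iteratedDeriv n (fun x => rp t x ^ (n+1)) = fun x => c * rp t x := by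
  induction n with
  | zero => exact ⟨1, by norm_num, by simp⟩
  | succ n ih =>
    obtain ⟨c, hc, h⟩ := ih
    refine ⟨(n+2:ℕ) * c, by positivity, ?_⟩
    rw [iteratedDeriv_succ', show deriv (fun x => rp t x ^ (n+1+1)) = fun x => (n+2 : ℕ) * rp t x ^ (n+1) from
      funext fun x => (rp_deriv t n x).deriv]
    ext x
    rw [iteratedDeriv_const_mul_field, h]
    ring

/-- left branch times x^(n) -/
lemma Phi_left (k n : ℕ) (t x : ℝ) (ht : 0 < t) (hx : 0 < x) (hxt : x < t) :
    x^n * Phi k x t = ∑ m ∈ Finset.range k, (((2*k).choose (m+1+k) : ℝ) * (-1)^m / t^(m+1)) * x^(n+m) := by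
  unfold Phi Pkhat Pk
  rw [if_neg (by linarith), Finset.sum_range_succ']
  simp only [pow_zero, zero_add, mul_one, add_sub_cancel_right]
  rw [← Finset.sum_neg_distrib, Finset.mul_sum, Finset.mul_sum]
  refine Finset.sum_congr rfl fun m _ => ?_
  rw [neg_pow, div_pow]
  field_simp
  ring

lemma Phi_right (k p : ℕ) (t x : ℝ) (ht : 0 < t) (hxt : t ≤ x) :
    x^(p+1) * Phi k x t = ∑ m ∈ Finset.range (k+1), (((2*k).choose (m+k) : ℝ) * (-t)^m) * x^((p:ℤ)-m) := by
  have hx : 0 < x := ht.trans_le hxt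
  unfold Phi Pk
  rw [if_pos hxt, Finset.mul_sum, Finset.mul_sum]
  refine Finset.sum_congr rfl fun m _ => ?_
  rw [zpow_sub₀ hx.ne', zpow_natCast, zpow_natCast, neg_pow, neg_pow t, div_pow]
  field_simp
  ring

lemma Phi_full (k : ℕ) (hk : 1 ≤ k) (t x : ℝ) (ht : 0 < t) (hx : 0 < x) :
    x^(k+1) * Phi k x t = ∑ m ∈ Finset.range k, (((2*k).choose (m+1+k) : ℝ) * (-1)^m / t^(m+1)) * x^(k+1+m)
      + (-1)^k / t^k * rp t x ^ (2*k) := by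
  rcases lt_or_ge x t with h | h
  · rw [Phi_left k (k+1) t x ht hx h]
    unfold rp
    rw [max_eq_right (by linarith)]
    rw [zero_pow (by omega)]; simp
  · rw [Phi_right k k t x ht h]
    unfold rp
    rw [max_eq_left (by linarith)]
    have hb := add_pow (-t) x (2*k)
    rw [show 2*k+1 = k + (k+1) by ring, Finset.sum_range_add, ← Finset.sum_range_reflect] at hb
    rw [show x - t = -t + x by ring, hb, mul_add, Finset.mul_sum, Finset.mul_sum, ← add_assoc, ← Finset.sum_add_distrib]
    rw [Finset.sum_eq_zero (s := Finset.range k), zero_add]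
    · refine Finset.sum_congr rfl fun m hm => ?_
      have hm : m ≤ k := by simpa [Nat.lt_succ_iff] using hm
      rw [show 2*k-(k+m) = k - m by omega, show (k:ℤ)-m = ((k-m:ℕ):ℤ) by omega, zpow_natCast, add_comm m k, pow_add (-t) k, neg_pow t k]
      have : ((-1:ℝ)^k)*(-1)^k = 1 := by rw [← mul_pow]; simp
      field_simp
      rw [mul_assoc, pow_two, this]; ring
    · intro m hm
      have hm : m < k := by simpa using hm
      rw [show 2*k - (k-1-m) = k+1+m by omega]
      rw [← Nat.choose_symm (by omega : k-1-m ≤ 2*k), show 2*k - (k-1-m) = m+1+k by omega]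
      obtain ⟨q, rfl⟩ : ∃ q, k = q + (m+1) := ⟨k-(m+1), by omega⟩
      rw [show q+(m+1)-1-m = q by omega, pow_add t, neg_pow t q, pow_add (-1:ℝ) q]
      have : ((-1:ℝ)^q)*(-1)^q = 1 := by rw [← mul_pow]; simp
      field_simp
      linear_combination (-(x^(q+(m+1)+1+m)) * (-1)^m * t^(q+m+1) * ((2*(q+(m+1))).choose (m+1+(q+(m+1))) : ℝ)) * this

lemma prod_neg (j q : ℕ) : ∏ i ∈ Finset.range q, ((((-1 - j : ℤ)) : ℝ) - i)
    = (-1)^q * ((j+q).factorial / j.factorial : ℝ) := by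
  induction q with
  | zero =>
    have : (j.factorial : ℝ) ≠ 0 := by exact_mod_cast Nat.factorial_ne_zero j
    simp [this]
  | succ q ih =>
    rw [Finset.prod_range_succ, ih, ← add_assoc, Nat.factorial_succ]
    push_cast
    ring

lemma left_case (p N : ℕ) (t x : ℝ) (ht : 0 < t) (hx : 0 < x) (hxt : x < t) :
    0 ≤ (-1 : ℝ)^p * iteratedDeriv (2*p+1) (fun y => y^(p+1) * Phi (p+1+N) y t) x := by
  have hev : (fun y => y^(p+1) * Phi (p+1+N) y t) =ᶠ[nhds x] fun y =>
      ∑ m ∈ Finset.range (p+1+N), (((2*(p+1+N)).choose (m+1+(p+1+N)) : ℝ) * (-1)^m / t^(m+1)) * y^(p+1+m) := by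
    filter_upwards [Ioo_mem_nhds hx hxt] with y hy
    exact Phi_left _ _ _ _ ht hy.1 hy.2
  rw [hev.iteratedDeriv_eq, iteratedDeriv_fun_sum (fun i _ => by fun_prop)]
  simp only [iteratedDeriv_const_mul_field, iteratedDeriv_pow]
  rw [show p+1+N = p + (N+1) by ring, Finset.sum_range_add, Finset.sum_eq_zero (s := Finset.range p), zero_add,
    ← show p+1+N = p + (N+1) by ring]
  · have hQ := Q_nonneg (x/t) (by rw [div_le_one ht]; exact hxt.le) p N
    have hQ' := mul_nonneg (inv_nonneg.2 (pow_nonneg ht.le (p+1))) hQ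
    refine hQ'.trans_eq ?_
    rw [Finset.mul_sum, Finset.mul_sum]
    refine Finset.sum_congr rfl fun j _ => ?_
    rw [show p+1+(p+j) - (2*p+1) = j by omega, show p+j+1+(p+1+N) = 2*p+2+N+j by ring,
      show p+1+(p+j) = j+2*p+1 by ring]
    have hd := Nat.factorial_mul_descFactorial (show 2*p+1 ≤ j+2*p+1 by omega)
    rw [show j+2*p+1-(2*p+1) = j by omega] at hd
    rw [← hd]
    have h0 : (j.factorial : ℝ) ≠ 0 := by exact_mod_cast Nat.factorial_ne_zero j
    have : ((-1:ℝ)^p)*(-1)^p = 1 := by rw [← mul_pow]; simp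
    push_cast
    rw [mul_div_cancel_left₀ _ h0, neg_pow, div_pow, pow_add (-1:ℝ) p j, show p+j+1 = p+1+j by ring, pow_add t (p+1) j]
    generalize (Nat.descFactorial (j+2*p+1) (2*p+1) : ℝ) = D
    generalize (Nat.choose (2*(p+1+N)) (2*p+2+N+j) : ℝ) = E
    have ht1 : t^(p+1) ≠ 0 := by positivity
    have ht2 : t^j ≠ 0 := by positivity
    calc _ = 1 * (E * D * (-1)^j * x^j * (t^(p+1))⁻¹ * (t^j)⁻¹) := by field_simp
      _ = _ := by rw [div_eq_mul_inv, mul_inv]; linear_combination (-(E * D * (-1)^j * x^j * (t^(p+1))⁻¹ * (t^j)⁻¹)) * this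
  · intro m hm
    have hm : m < p := by simpa using hm
    rw [Nat.descFactorial_eq_zero_iff_lt.2 (by omega)]
    simp

lemma zpow_cd (x : ℝ) (m : ℤ) (hx : x ≠ 0) (n : ℕ) : ContDiffAt ℝ n (fun y : ℝ => y^m) x := by
  rcases m with m | m
  · simp only [Int.ofNat_eq_natCast, zpow_natCast]; fun_prop
  · simp only [zpow_negSucc]
    exact ContDiffAt.inv (by fun_prop) (by positivity)

lemma right_case (p N : ℕ) (t x : ℝ) (ht : 0 < t) (hxt : t < x) :
    0 ≤ (-1 : ℝ)^p * iteratedDeriv (2*p+1) (fun y => y^(p+1) * Phi (p+1+N) y t) x := by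
  have hx : 0 < x := ht.trans hxt
  have hev : (fun y => y^(p+1) * Phi (p+1+N) y t) =ᶠ[nhds x] fun y =>
      ∑ m ∈ Finset.range (p+1+N+1), (((2*(p+1+N)).choose (m+(p+1+N)) : ℝ) * (-t)^m) * y^((p:ℤ)-m) := by
    filter_upwards [Ioi_mem_nhds hxt] with y hy
    exact Phi_right _ _ _ _ ht (le_of_lt hy)
  rw [hev.iteratedDeriv_eq, iteratedDeriv_fun_sum (fun i _ =>
    contDiffAt_const.mul (zpow_cd _ _ hx.ne' _))]
  simp only [iteratedDeriv_const_mul_field]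
  simp only [iteratedDeriv_eq_iterate, iter_deriv_zpow]
  rw [show p+1+N+1 = p+1 + (N+1) by ring, Finset.sum_range_add, Finset.sum_eq_zero (s := Finset.range (p+1)), zero_add]
  · have hQ := Q_nonneg (t/x) (by rw [div_le_one hx]; exact hxt.le) p N
    have hQ' := mul_nonneg (mul_nonneg (pow_nonneg ht.le (p+1)) (inv_nonneg.2 (pow_nonneg hx.le (2*p+2)))) hQ
    refine hQ'.trans_eq ?_
    rw [Finset.mul_sum, Finset.mul_sum]
    refine Finset.sum_congr rfl fun j _ => ?_
    rw [show (p:ℤ) - ((p+1+j : ℕ) : ℤ) = -1 - j by push_cast; ring, prod_neg,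
      show (-1 - (j:ℤ) - ((2*p+1 : ℕ):ℤ)) = -((2*p+2+j : ℕ) : ℤ) by push_cast; ring, zpow_neg, zpow_natCast,
      show p+1+j+(p+1+N) = 2*p+2+N+j by ring, show j+(2*p+1) = j+2*p+1 by ring]
    have : ((-1:ℝ)^p)*(-1)^p = 1 := by rw [← mul_pow]; simp
    have h3 : ((-1:ℝ)^(2*p+1)) = -1 := by rw [pow_succ, pow_mul]; simp
    rw [h3, neg_pow (t/x), div_pow, neg_pow t, pow_add (-1:ℝ) (p+1) j, pow_succ (-1:ℝ) p, pow_add t (p+1) j, pow_add x (2*p+2) j]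
    generalize ((j+2*p+1).factorial / j.factorial : ℝ) = D
    generalize (Nat.choose (2*(p+1+N)) (2*p+2+N+j) : ℝ) = E
    have ht1 : x^(2*p+2) ≠ 0 := by positivity
    have ht2 : x^j ≠ 0 := by positivity
    calc _ = 1 * (E * D * (-1)^j * t^(p+1) * t^j * (x^(2*p+2))⁻¹ * (x^j)⁻¹) := by field_simp
      _ = _ := by rw [mul_inv]; linear_combination (-(E * D * (-1)^j * t^(p+1) * t^j * (x^(2*p+2))⁻¹ * (x^j)⁻¹)) * this
  · intro m hm
    have hm : m < p+1 := by simpa using hm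
    rw [Finset.prod_eq_zero (i := p - m) (by simp; omega)]
    · simp
    · push_cast [Nat.cast_sub (show m ≤ p by omega)]; ring

lemma Phi_contDiffOn (k : ℕ) (hk : 1 ≤ k) (t : ℝ) (ht : 0 < t) :
    ContDiffOn ℝ (2 * k - 1 : ℕ) (fun x => Phi k x t) (Ioi 0) := by
  have hr := rp_contDiff t (2*k-1)
  rw [show 2*k-1+1 = 2*k by omega] at hr
  have h1 : ContDiffOn ℝ (2 * k - 1 : ℕ) (fun x : ℝ =>
     (∑ m ∈ Finset.range k, (((2*k).choose (m+1+k) : ℝ) * (-1)^m / t^(m+1)) * x^(k+1+m)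
      + (-1)^k / t^k * rp t x ^ (2*k)) / x^(k+1)) (Ioi 0) := by
    refine ContDiffOn.div ?_ (by fun_prop) ?_
    · refine ContDiff.contDiffOn ?_
      refine ContDiff.add (by fun_prop) (contDiff_const.mul hr)
    · intro x hx
      have : (0:ℝ) < x := hx
      positivity
  refine h1.congr ?_
  intro x hx
  have hx : (0:ℝ) < x := hx
  rw [← Phi_full k hk t x ht hx]
  field_simp

lemma Phi_mono (k : ℕ) (hk : 1 ≤ k) (t : ℝ) (ht : 0 < t) (n : ℕ) (hn : 1 ≤ n) (hnk : n ≤ k) (x : ℝ) (hx : 0 < x) :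
      0 ≤ (-1 : ℝ) ^ (n - 1) *
        iteratedDeriv (2 * n - 1) (fun y => y ^ n * Phi k y t) x := by
  have hc := Phi_contDiffOn k hk t ht
  obtain ⟨p, rfl⟩ : ∃ p, n = p+1 := ⟨n-1, by omega⟩
  obtain ⟨N, rfl⟩ : ∃ N, k = p+1+N := ⟨k-(p+1), by omega⟩
  rw [show 2*(p+1)-1 = 2*p+1 by omega, show p+1-1 = p by omega]
  rcases lt_trichotomy x t with h | h | h
  · exact left_case p N t x ht hx h
  · subst h
    have hf : ContDiffOn ℝ (2 * (p+1+N) - 1 : ℕ) (fun y => y^(p+1) * Phi (p+1+N) y x) (Ioi 0) :=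
      ContDiffOn.mul (by fun_prop) hc
    have hcont := hf.continuousOn_iteratedDerivWithin (m := 2*p+1) (by norm_cast; omega) (uniqueDiffOn_Ioi 0)
    have hcont2 : ContinuousOn (iteratedDeriv (2*p+1) (fun y => y^(p+1) * Phi (p+1+N) y x)) (Ioi 0) :=
      hcont.congr fun y hy => (iteratedDerivWithin_of_isOpen isOpen_Ioi hy).symm
    have hca := (hcont2.continuousAt (Ioi_mem_nhds hx)).const_mul ((-1:ℝ)^p)
    refine ge_of_tendsto (hca.tendsto.mono_left (nhdsWithin_le_nhds (s := Ioi x))) ?_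
    filter_upwards [self_mem_nhdsWithin] with y hy
    exact right_case p N x y ht hy
  · exact right_case p N t x ht h

lemma convexOn_sumK (s : Finset ℕ) (f : ℕ → ℝ → ℝ) (h : ∀ i ∈ s, ConvexOn ℝ (Ioi 0) (f i)) :
    ConvexOn ℝ (Ioi (0:ℝ)) (fun x => ∑ i ∈ s, f i x) := by
  classical
  induction s using Finset.induction_on with
  | empty => simpa using convexOn_const (0:ℝ) (convex_Ioi (0:ℝ))
  | insert a s ha ih =>
    simp only [Finset.sum_insert ha]
    exact (h a (by simp)).add (ih fun i hi => h i (by simp [hi]))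

lemma convex_mon (c : ℝ) (e : ℕ) (he : e ≤ 1) : ConvexOn ℝ (Ioi (0:ℝ)) (fun x => c * x^e) := by
  refine ⟨convex_Ioi 0, fun x _ y _ a b _ _ hab => le_of_eq ?_⟩
  interval_cases e
  · simp only [pow_zero, smul_eq_mul]; linear_combination (-c) * hab
  · simp only [smul_eq_mul]; ring

lemma Phi_conv (k : ℕ) (hk : 1 ≤ k) (t : ℝ) (ht : 0 < t) : ConvexOn ℝ (Ioi 0)
      (fun x => (-1 : ℝ) ^ k *
        iteratedDeriv (2 * k - 1) (fun y => y ^ (k + 1) * Phi k y t) x) := by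
  have hr := rp_contDiff t (2*k-1)
  obtain ⟨c, hc, hi⟩ := rp_iter t (2*k-1)
  rw [show 2*k-1+1 = 2*k by omega] at hr hi
  have h1 : ConvexOn ℝ (Ioi (0:ℝ)) (fun x => ∑ m ∈ Finset.range k,
      ((-1)^k * (((2*k).choose (m+1+k) : ℝ) * (-1)^m / t^(m+1)) * (k+1+m).descFactorial (2*k-1)) * x^(k+1+m-(2*k-1))) := by
    refine convexOn_sumK _ _ fun m hm => convex_mon _ _ ?_
    have : m < k := by simpa using hm
    omega
  have h2 : ConvexOn ℝ (Ioi (0:ℝ)) (fun x => (c / t^k) * rp t x) := by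
    have : ConvexOn ℝ (Ioi (0:ℝ)) (rp t) := by
      refine ConvexOn.sup (f := fun x => x - t) (g := fun _ => 0) ?_ (convexOn_const _ (convex_Ioi _))
      exact (convexOn_id (convex_Ioi 0)).sub (concaveOn_const _ (convex_Ioi 0))
    exact this.smul (show 0 ≤ c / t^k by positivity)
  refine (h1.add h2).congr ?_
  intro x hx
  have hx : (0:ℝ) < x := hx
  have hev : (fun y => y^(k+1) * Phi k y t) =ᶠ[nhds x] (fun y =>
      ∑ m ∈ Finset.range k, (((2*k).choose (m+1+k) : ℝ) * (-1)^m / t^(m+1)) * y^(k+1+m)) + 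
      (fun y => (-1)^k / t^k * rp t y ^ (2*k)) := by
    filter_upwards [Ioi_mem_nhds hx] with y hy
    exact Phi_full k hk t y ht hy
  simp only [Pi.add_apply]
  rw [hev.iteratedDeriv_eq, iteratedDeriv_add (by fun_prop) (contDiff_const.mul hr).contDiffAt,
    iteratedDeriv_fun_sum (fun i _ => by fun_prop)]
  simp only [iteratedDeriv_const_mul_field, iteratedDeriv_pow]
  rw [hi, mul_add, Finset.mul_sum]
  congr 1
  · refine Finset.sum_congr rfl fun m _ => by ring
  · have : ((-1:ℝ)^k)*(-1)^k = 1 := by rw [← mul_pow]; simp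
    linear_combination (-(c * rp t x / t^k)) * this

/-- Proposition 1: for every `k ≥ 1` and `t > 0`, the function
`x ↦ Φ_k(x,t)` belongs to `S_{k+1}`. -/
theorem phi_kernel_mem_stieltjesK (k : ℕ) (hk : 1 ≤ k) (t : ℝ) (ht : 0 < t) :
    ContDiffOn ℝ (2 * k - 1 : ℕ) (fun x => Phi k x t) (Ioi 0) ∧
    (∀ n, 1 ≤ n → n ≤ k → ∀ x > 0,
      0 ≤ (-1 : ℝ) ^ (n - 1) *
        iteratedDeriv (2 * n - 1) (fun y => y ^ n * Phi k y t) x) ∧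
    ConvexOn ℝ (Ioi 0)
      (fun x => (-1 : ℝ) ^ k *
        iteratedDeriv (2 * k - 1) (fun y => y ^ (k + 1) * Phi k y t) x) := by
  exact ⟨Phi_contDiffOn k hk t ht, fun n h1 h2 x hx => Phi_mono k hk t ht n h1 h2 x hx, Phi_conv k hk t ht⟩
end

section
/- Let k ≥ 2 be an integer and let f : (0,∞) → [0,∞) be smooth with (−1)^{n−1} d^{2n−1}/dx^{2n−1} ( x^n f(x) ) ≥ 0 on (0,∞) for every n = 1,…,k. Set g(x) = x f(x) and φ(x) = x^{2k−1} g^{(k)}(x). Then: (i) (−1)^n g^{(n+1)}(x) ≥ 0 for all x > 0 and n = 0,…,k−1 (so g' is (k−1)-monotone on (0,∞)); (ii) lim_{x→0+} φ^{(j)}(x) = 0 for every j = 0,…,k−3; (iii) the limit lim_{x→0+} (−1)^{k−1} φ^{(k−2)}(x) exists and is nonnegative. -/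
open Set MeasureTheory Filter

lemma sm_iter {f : ℝ → ℝ} (hf : ContDiffOn ℝ (⊤ : ℕ∞) f (Ioi 0)) (n : ℕ) :
    ContDiffOn ℝ (⊤ : ℕ∞) (iteratedDeriv n f) (Ioi 0) := by
  induction n with
  | zero => simpa using hf
  | succ n ih =>
    rw [iteratedDeriv_succ]
    exact ih.deriv_of_isOpen isOpen_Ioi (by simp)

lemma sm_at {f : ℝ → ℝ} (hf : ContDiffOn ℝ (⊤ : ℕ∞) f (Ioi 0)) {x : ℝ} (hx : 0 < x) (n : ℕ) :
    ContDiffAt ℝ n f x :=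
  (hf.contDiffAt (Ioi_mem_nhds hx)).of_le (by exact_mod_cast le_top)

lemma sm_hasDeriv {f : ℝ → ℝ} (hf : ContDiffOn ℝ (⊤ : ℕ∞) f (Ioi 0)) (n : ℕ) {x : ℝ}
    (hx : 0 < x) : HasDerivAt (iteratedDeriv n f) (iteratedDeriv (n + 1) f x) x := by
  rw [iteratedDeriv_succ]
  exact ((sm_at (sm_iter hf n) hx 1).differentiableAt (by simp)).hasDerivAt

lemma sm_mono {f : ℝ → ℝ} (hf : ContDiffOn ℝ (⊤ : ℕ∞) f (Ioi 0)) (n : ℕ)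
    (h : ∀ x > 0, 0 ≤ iteratedDeriv (n + 1) f x) : MonotoneOn (iteratedDeriv n f) (Ioi 0) := by
  refine monotoneOn_of_deriv_nonneg (convex_Ioi 0) (sm_iter hf n).continuousOn ?_ ?_
  · intro x hx
    rw [interior_Ioi] at hx
    exact (sm_hasDeriv hf n hx).differentiableAt.differentiableWithinAt
  · intro x hx
    rw [interior_Ioi] at hx
    rw [(sm_hasDeriv hf n hx).deriv]
    exact h x hx

lemma mean_point (j : ℕ) : ∃ C : ℝ, 0 ≤ C ∧ ∀ F : ℝ → ℝ, ContDiffOn ℝ (⊤ : ℕ∞) F (Ioi 0) →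
    ∀ a b M : ℝ, 0 < a → a < b → (∀ x ∈ Icc a b, |F x| ≤ M) →
    ∃ ξ ∈ Icc a b, |iteratedDeriv j F ξ| * (b - a) ^ j ≤ C * M := by
  induction j with
  | zero =>
    refine ⟨1, by norm_num, fun F _ a b M _ hab h => ⟨a, ⟨le_rfl, hab.le⟩, ?_⟩⟩
    simpa using h a ⟨le_rfl, hab.le⟩
  | succ j ih =>
    obtain ⟨C, hC, ih⟩ := ih
    refine ⟨3 ^ (j + 1) * (2 * C), by positivity, fun F hF a b M ha hab h => ?_⟩
    obtain ⟨l, hl⟩ : ∃ l, l = (b - a) / 3 := ⟨_, rfl⟩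
    have hl0 : 0 < l := by rw [hl]; linarith
    have hb : b = a + 3 * l := by rw [hl]; ring
    subst hb
    obtain ⟨p, hp, hp'⟩ := ih F hF a (a + l) M ha (by linarith)
      (fun x hx => h x ⟨hx.1, by linarith [hx.2]⟩)
    obtain ⟨q, hq, hq'⟩ := ih F hF (a + 2 * l) (a + 3 * l) M (by linarith) (by linarith)
      (fun x hx => h x ⟨by linarith [hx.1], by linarith [hx.2]⟩)
    have e1 : a + l - a = l := by ring
    have e2 : a + 3 * l - (a + 2 * l) = l := by ring
    have e3 : a + 3 * l - a = 3 * l := by ring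
    rw [e1] at hp'
    rw [e2] at hq'
    have hpq : l ≤ q - p := by linarith [hp.2, hq.1]
    obtain ⟨ξ, hξ, hs⟩ := exists_hasDerivAt_eq_slope (iteratedDeriv j F) (iteratedDeriv (j+1) F)
      (show p < q by linarith)
      ((sm_iter hF j).continuousOn.mono (fun x hx => lt_of_lt_of_le (by linarith [hp.1]) hx.1))
      (fun x hx => sm_hasDeriv hF j (by linarith [hp.1, hx.1]))
    refine ⟨ξ, ⟨by linarith [hp.1, hξ.1], by linarith [hq.2, hξ.2]⟩, ?_⟩
    rw [eq_div_iff (by linarith)] at hs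
    rw [e3, mul_pow]
    have h1 : |iteratedDeriv (j+1) F ξ| * l ≤ |iteratedDeriv j F p| + |iteratedDeriv j F q| := by
      calc |iteratedDeriv (j+1) F ξ| * l ≤ |iteratedDeriv (j+1) F ξ| * (q - p) := by gcongr
        _ = |iteratedDeriv j F q - iteratedDeriv j F p| := by
          rw [← hs, abs_mul, abs_of_pos (show 0 < q - p by linarith)]
        _ ≤ |iteratedDeriv j F q| + |iteratedDeriv j F p| := abs_sub _ _
        _ = _ := add_comm _ _
    have h2 : |iteratedDeriv (j+1) F ξ| * l ^ (j + 1) ≤ 2 * C * M := by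
      calc _ = (|iteratedDeriv (j+1) F ξ| * l) * l ^ j := by ring
        _ ≤ (|iteratedDeriv j F p| + |iteratedDeriv j F q|) * l ^ j := by gcongr
        _ ≤ _ := by linarith
    calc _ = 3 ^ (j+1) * (|iteratedDeriv (j+1) F ξ| * l ^ (j + 1)) := by ring
      _ ≤ 3 ^ (j+1) * (2 * C * M) := by gcongr
      _ = _ := by ring

def Sml (p j : ℕ) (F : ℝ → ℝ) : Prop :=
  ∀ ε > 0, ∀ᶠ x in nhdsWithin (0 : ℝ) (Ioi 0), |iteratedDeriv j F x| * x ^ j ≤ ε * x ^ p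

lemma ev_iff {P : ℝ → Prop} : (∀ᶠ x in nhdsWithin (0 : ℝ) (Ioi 0), P x) ↔
    ∃ δ > 0, ∀ x, 0 < x → x < δ → P x := by
  rw [Filter.Eventually, mem_nhdsGT_iff_exists_Ioo_subset]
  constructor
  · rintro ⟨u, hu, h⟩
    exact ⟨u, hu, fun x h0 h1 => h ⟨h0, h1⟩⟩
  · rintro ⟨u, hu, h⟩
    exact ⟨u, hu, fun x hx => h x hx.1 hx.2⟩

lemma sml_top {F : ℝ → ℝ} (hF : ContDiffOn ℝ (⊤ : ℕ∞) F (Ioi 0)) (p N : ℕ)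
    (hm : MonotoneOn (iteratedDeriv N F) (Ioi 0)) (h0 : Sml p 0 F) : Sml p N F := by
  intro ε hε
  obtain ⟨C, hC, hCm⟩ := mean_point N
  have hK : 0 < 2 ^ N * (C + 1) * 2 ^ p := by positivity
  obtain ⟨δ, hδ, h⟩ := ev_iff.1 (h0 (ε / (2 ^ N * (C + 1) * 2 ^ p)) (by positivity))
  set η := ε / (2 ^ N * (C + 1) * 2 ^ p) with hη
  have hη0 : 0 < η := by positivity
  refine ev_iff.2 ⟨δ / 2, by positivity, fun x hx hxd => ?_⟩
  have hb : ∀ y, 0 < y → y ≤ 2 * x → |F y| ≤ η * (2 * x) ^ p := by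
    intro y hy hyx
    have := h y hy (by linarith)
    simp only [iteratedDeriv_zero, pow_zero, mul_one] at this
    exact this.trans (by gcongr)
  obtain ⟨a, ha, ha'⟩ := hCm F hF (x / 2) x _ (by linarith) (by linarith)
    (fun y hy => hb y (by linarith [hy.1]) (by linarith [hy.2]))
  obtain ⟨b, hb1, hb'⟩ := hCm F hF x (2 * x) _ (by linarith) (by linarith)
    (fun y hy => hb y (by linarith [hy.1]) (by linarith [hy.2]))
  have e1 : x - x / 2 = x / 2 := by ring
  have e2 : 2 * x - x = x := by ring
  rw [e1, div_pow] at ha'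
  rw [e2] at hb'
  have hM : 0 ≤ C * (η * (2 * x) ^ p) := by positivity
  have ha2 : |iteratedDeriv N F a| * x ^ N ≤ 2 ^ N * (C * (η * (2 * x) ^ p)) := by
    calc _ = 2 ^ N * (|iteratedDeriv N F a| * (x ^ N / 2 ^ N)) := by field_simp
      _ ≤ _ := by gcongr
  have hb2 : |iteratedDeriv N F b| * x ^ N ≤ 2 ^ N * (C * (η * (2 * x) ^ p)) := by
    refine hb'.trans (le_mul_of_one_le_left hM (one_le_pow₀ (by norm_num)))
  have hax : iteratedDeriv N F a ≤ iteratedDeriv N F x :=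
    hm (show 0 < a by linarith [ha.1]) hx ha.2
  have hxb : iteratedDeriv N F x ≤ iteratedDeriv N F b :=
    hm hx (show 0 < b by linarith [hb1.1]) hb1.1
  have : |iteratedDeriv N F x| ≤ max |iteratedDeriv N F a| |iteratedDeriv N F b| :=
    abs_le_max_abs_abs hax hxb
  have hfin : 2 ^ N * (C * (η * (2 * x) ^ p)) ≤ ε * x ^ p := by
    have : ε = η * (2 ^ N * (C + 1) * 2 ^ p) := by rw [hη]; field_simp
    rw [this, mul_pow]
    have : 0 ≤ η * 2 ^ N * 2 ^ p * x ^ p := by positivity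
    nlinarith
  rcases le_max_iff.1 this with h | h
  · exact (mul_le_mul_of_nonneg_right h (by positivity)).trans (ha2.trans hfin)
  · exact (mul_le_mul_of_nonneg_right h (by positivity)).trans (hb2.trans hfin)

lemma sml_down {F : ℝ → ℝ} (hF : ContDiffOn ℝ (⊤ : ℕ∞) F (Ioi 0)) (p j : ℕ)
    (h0 : Sml p 0 F) (h1 : Sml p (j + 1) F) : Sml p j F := by
  intro ε hε
  obtain ⟨C, hC, hCm⟩ := mean_point j
  have hη0 : 0 < ε / ((C + 1) * 2 ^ p) := by positivity
  obtain ⟨δ, hδ, h⟩ := ev_iff.1 ((h0 _ hη0).and (h1 _ hη0))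
  set η := ε / ((C + 1) * 2 ^ p) with hη
  refine ev_iff.2 ⟨δ / 2, by positivity, fun x hx hxd => ?_⟩
  have hb : ∀ y ∈ Icc x (2 * x), |F y| ≤ η * (2 * x) ^ p := by
    intro y hy
    have hy0 : 0 < y := by linarith [hy.1]
    have := (h y hy0 (by linarith [hy.2])).1
    simp only [iteratedDeriv_zero, pow_zero, mul_one] at this
    have h2 := hy.2
    exact this.trans (by gcongr)
  have hb2 : ∀ y ∈ Icc x (2 * x), |iteratedDeriv (j+1) F y| * x ^ (j+1) ≤ η * (2 * x) ^ p := by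
    intro y hy
    have hy0 : 0 < y := by linarith [hy.1]
    have := (h y hy0 (by linarith [hy.2])).2
    have h2 := hy.2
    have h3 := hy.1
    calc _ ≤ |iteratedDeriv (j+1) F y| * y ^ (j+1) := by gcongr
      _ ≤ _ := this
      _ ≤ _ := by gcongr
  obtain ⟨b, hb1, hb'⟩ := hCm F hF x (2 * x) _ (by linarith) (by linarith) hb
  have e2 : 2 * x - x = x := by ring
  rw [e2] at hb'
  have hxI : x ∈ Icc x (2 * x) := ⟨le_rfl, by linarith⟩
  have hmv : |iteratedDeriv j F x - iteratedDeriv j F b| ≤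
      η * (2 * x) ^ p / x ^ (j + 1) * |x - b| := by
    have := (convex_Icc x (2 * x)).norm_image_sub_le_of_norm_hasDerivWithin_le
      (f := iteratedDeriv j F) (f' := iteratedDeriv (j+1) F) (C := η * (2 * x) ^ p / x ^ (j + 1))
      (fun y hy => (sm_hasDeriv hF j (by linarith [hy.1])).hasDerivWithinAt)
      (fun y hy => by
        rw [Real.norm_eq_abs, le_div_iff₀ (by positivity)]
        exact hb2 y hy) hb1 hxI
    simpa [Real.norm_eq_abs] using this
  have hxb : |x - b| ≤ x := by rw [abs_le]; constructor <;> linarith [hb1.1, hb1.2]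
  have hmv2 : |iteratedDeriv j F x - iteratedDeriv j F b| * x ^ j ≤ η * (2 * x) ^ p := by
    calc _ ≤ (η * (2 * x) ^ p / x ^ (j + 1) * x) * x ^ j := by
          gcongr
          exact hmv.trans (by gcongr)
      _ = _ := by field_simp; ring
  have h3 : |iteratedDeriv j F x| ≤ |iteratedDeriv j F b| +
      |iteratedDeriv j F x - iteratedDeriv j F b| := by
    have := abs_add_le (iteratedDeriv j F b) (iteratedDeriv j F x - iteratedDeriv j F b)
    simpa using this
  calc _ ≤ (|iteratedDeriv j F b| + |iteratedDeriv j F x - iteratedDeriv j F b|) * x ^ j := by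
        gcongr
    _ ≤ (C + 1) * (η * (2 * x) ^ p) := by linarith
    _ = ε * x ^ p := by rw [hη, mul_pow]; field_simp

lemma sml_all {F : ℝ → ℝ} (hF : ContDiffOn ℝ (⊤ : ℕ∞) F (Ioi 0)) (p N : ℕ)
    (hm : MonotoneOn (iteratedDeriv N F) (Ioi 0)) (h0 : Sml p 0 F) :
    ∀ j ≤ N, Sml p j F := by
  intro j hj
  induction hj using Nat.decreasingInduction with
  | self => exact sml_top hF p N hm h0
  | of_succ j hj ih => exact sml_down hF p j h0 ih

lemma iter_id_mul {H : ℝ → ℝ} (hH : ContDiffOn ℝ (⊤ : ℕ∞) H (Ioi 0)) (j : ℕ) :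
    ∀ x > 0, iteratedDeriv (j + 1) (fun y => y * H y) x =
      x * iteratedDeriv (j + 1) H x + (j + 1) * iteratedDeriv j H x := by
  have base : ∀ x > 0, HasDerivAt (fun y => y * H y)
      (x * iteratedDeriv 1 H x + H x) x := by
    intro x hx
    have h := (hasDerivAt_id x).mul (sm_hasDeriv hH 0 hx)
    refine HasDerivAt.congr_deriv h ?_
    simp; ring
  induction j with
  | zero =>
    intro x hx
    rw [zero_add, iteratedDeriv_one, (base x hx).deriv]
    simp
  | succ j ih =>
    intro x hx
    rw [iteratedDeriv_succ]
    have : iteratedDeriv (j + 1) (fun y => y * H y) =ᶠ[nhds x]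
        fun x => x * iteratedDeriv (j + 1) H x + (j + 1) * iteratedDeriv j H x := by
      filter_upwards [Ioi_mem_nhds hx] with y hy using ih y hy
    rw [this.deriv_eq]
    have h := ((hasDerivAt_id x).mul (sm_hasDeriv hH (j+1) hx)).add
      ((sm_hasDeriv hH j hx).const_mul ((j : ℝ) + 1))
    refine Eq.trans (h.deriv) ?_
    push_cast
    simp; ring

lemma sml_div {H : ℝ → ℝ} (hH : ContDiffOn ℝ (⊤ : ℕ∞) H (Ioi 0)) (p N : ℕ)
    (h : ∀ j ≤ N, Sml (p + 1) j (fun y => y * H y)) : ∀ j ≤ N, Sml p j H := by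
  intro j
  induction j with
  | zero =>
    intro hj ε hε
    filter_upwards [h 0 hj ε hε, self_mem_nhdsWithin] with x hx hx0
    have hx0 : 0 < x := hx0
    simp only [iteratedDeriv_zero, pow_zero, mul_one, abs_mul, abs_of_pos hx0, pow_succ] at hx ⊢
    refine le_of_mul_le_mul_left ?_ hx0
    linarith
  | succ j ih =>
    intro hj ε hε
    have ih := ih (by omega)
    filter_upwards [h (j+1) hj (ε / 2) (by positivity), ih (ε / (2 * (j + 1))) (by positivity),
      self_mem_nhdsWithin] with x hx hx1 hx0
    have hx0 : 0 < x := hx0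
    rw [iter_id_mul hH j x hx0] at hx
    have h1 : x * |iteratedDeriv (j+1) H x| ≤
        |x * iteratedDeriv (j + 1) H x + (j + 1) * iteratedDeriv j H x| +
        (j + 1) * |iteratedDeriv j H x| := by
      have := abs_sub (x * iteratedDeriv (j + 1) H x + (j + 1) * iteratedDeriv j H x)
        ((j + 1) * iteratedDeriv j H x)
      rw [add_sub_cancel_right, abs_mul, abs_of_pos hx0, abs_mul ((j : ℝ) + 1),
        abs_of_pos (show (0 : ℝ) < j + 1 by positivity)] at this
      exact this
    refine le_of_mul_le_mul_left ?_ hx0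
    have h2 : (j + 1) * |iteratedDeriv j H x| * x ^ (j + 1) ≤ ε / 2 * x ^ (p + 1) := by
      calc _ = (j + 1) * x * (|iteratedDeriv j H x| * x ^ j) := by ring
        _ ≤ (j + 1) * x * (ε / (2 * (j + 1)) * x ^ p) := by gcongr
        _ = _ := by field_simp; try ring
    calc _ = (x * |iteratedDeriv (j+1) H x|) * x ^ (j + 1) := by ring
      _ ≤ (|x * iteratedDeriv (j + 1) H x + (j + 1) * iteratedDeriv j H x| +
        (j + 1) * |iteratedDeriv j H x|) * x ^ (j + 1) := by gcongr
      _ ≤ ε * x ^ (p + 1) := by linarith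
      _ = _ := by ring

lemma sml_div_pow {H : ℝ → ℝ} (hH : ContDiffOn ℝ (⊤ : ℕ∞) H (Ioi 0)) (N m : ℕ)
    (h : ∀ j ≤ N, Sml m j (fun y => y ^ m * H y)) : ∀ j ≤ N, Sml 0 j H := by
  induction m with
  | zero => simpa using h
  | succ m ih =>
    apply ih
    have hs : ContDiffOn ℝ (⊤ : ℕ∞) (fun y => y ^ m * H y) (Ioi 0) :=
      (contDiff_id.pow m).contDiffOn.mul hH
    apply sml_div hs
    have e : (fun y => y * (y ^ m * H y)) = fun y => y ^ (m + 1) * H y := by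
      funext y; ring
    rw [e]
    exact h

/-- Leibniz formula at a positive point. -/
lemma leib {H : ℝ → ℝ} (hH : ContDiffOn ℝ (⊤ : ℕ∞) H (Ioi 0)) (r i : ℕ) {x : ℝ} (hx : 0 < x) :
    iteratedDeriv i (fun y => y ^ r * H y) x = ∑ l ∈ Finset.range (i + 1),
      (i.choose l : ℝ) * (r.descFactorial l * x ^ (r - l)) * iteratedDeriv (i - l) H x := by
  have hp : ContDiffAt ℝ i (fun y : ℝ => y ^ r) x := (contDiff_id.pow r).contDiffAt
  rw [iteratedDeriv_fun_mul hp (sm_at hH hx i)]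
  simp

lemma iter_iter (a b : ℕ) (G : ℝ → ℝ) :
    iteratedDeriv a (iteratedDeriv b G) = iteratedDeriv (a + b) G := by
  simp only [iteratedDeriv_eq_iterate, Function.iterate_add_apply]

lemma key_identity {G : ℝ → ℝ} (hG : ContDiffOn ℝ (⊤ : ℕ∞) G (Ioi 0)) (m : ℕ) {x : ℝ}
    (hx : 0 < x) :
    x ^ (m + 1) * iteratedDeriv (2 * m + 1) (fun y => y ^ m * G y) x =
      iteratedDeriv m (fun y => y ^ (2 * m + 1) * iteratedDeriv (m + 1) G y) x := by
  rw [leib hG m _ hx, leib (sm_iter hG (m + 1)) _ _ hx]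
  have hsub : Finset.range (m + 1) ⊆ Finset.range (2 * m + 1 + 1) :=
    Finset.range_subset_range.2 (by omega)
  rw [← Finset.sum_subset hsub, Finset.mul_sum]
  · refine Finset.sum_congr rfl fun l hl => ?_
    have hl' : l ≤ m := by simpa [Nat.lt_succ_iff] using hl
    rw [iter_iter, Nat.descFactorial_eq_factorial_mul_choose,
      Nat.descFactorial_eq_factorial_mul_choose]
    have e1 : m - l + (m + 1) = 2 * m + 1 - l := by omega
    have e2 : 2 * m + 1 - l = (m + 1) + (m - l) := by omega
    rw [e1, show x ^ (2 * m + 1 - l) = x ^ (m + 1) * x ^ (m - l) by rw [e2, pow_add]]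
    push_cast
    ring
  · intro l _ hl
    have hl' : m < l := by simpa using hl
    rw [Nat.descFactorial_eq_zero_iff_lt.2 hl']
    simp

lemma sml_tendsto {G : ℝ → ℝ} {j : ℕ} (h : Sml 0 j G) :
    Tendsto (fun x => x ^ j * iteratedDeriv j G x) (nhdsWithin 0 (Ioi 0)) (nhds 0) := by
  rw [Metric.tendsto_nhds]
  intro ε hε
  filter_upwards [h (ε / 2) (by positivity), self_mem_nhdsWithin] with x hx hx0
  have hx0 : 0 < x := hx0
  rw [Real.dist_eq, sub_zero, abs_mul, abs_of_pos (pow_pos hx0 j), mul_comm]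
  simp only [pow_zero, mul_one] at hx
  linarith

lemma phi_tendsto {G : ℝ → ℝ} (hG : ContDiffOn ℝ (⊤ : ℕ∞) G (Ioi 0)) (m : ℕ)
    (h : ∀ j ≤ 2 * m, Sml 0 j G) (i : ℕ) (hi : i < m) :
    Tendsto (iteratedDeriv i (fun y => y ^ (2 * m + 1) * iteratedDeriv (m + 1) G y))
      (nhdsWithin 0 (Ioi 0)) (nhds 0) := by
  have hT : Tendsto (fun x : ℝ => ∑ l ∈ Finset.range (i + 1),
      ((i.choose l : ℝ) * ((2 * m + 1).descFactorial l) * x ^ (m - i)) *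
        (x ^ (i - l + (m + 1)) * iteratedDeriv (i - l + (m + 1)) G x))
      (nhdsWithin 0 (Ioi 0)) (nhds 0) := by
    have e0 : ∑ l ∈ Finset.range (i + 1),
      ((i.choose l : ℝ) * ((2 * m + 1).descFactorial l) * (0:ℝ) ^ (m - i)) * 0 = 0 := by simp
    refine Tendsto.mono_right ?_ (le_of_eq (congrArg nhds e0))
    refine tendsto_finsetSum _ fun l _ => Tendsto.mul ?_ (sml_tendsto (h (i - l + (m + 1)) (by omega)))
    exact (Continuous.tendsto (by fun_prop) _).mono_left nhdsWithin_le_nhds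
  refine hT.congr' ?_
  filter_upwards [self_mem_nhdsWithin] with x hx
  rw [leib (sm_iter hG (m + 1)) _ _ hx]
  refine Finset.sum_congr rfl fun l hl => ?_
  have hl' : l ≤ i := by simpa [Nat.lt_succ_iff] using hl
  rw [iter_iter]
  have e2 : 2 * m + 1 - l = (m - i) + (i - l + (m + 1)) := by omega
  rw [e2, pow_add]
  ring

lemma core_s4 {g : ℝ → ℝ} (hg : ContDiffOn ℝ (⊤ : ℕ∞) g (Ioi 0)) (h0 : ∀ x > 0, 0 ≤ g x)
    (h1 : ∀ x > 0, 0 ≤ iteratedDeriv 1 g x) (m : ℕ)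
    (hW : ∀ x > 0, 0 ≤ (-1 : ℝ) ^ m * iteratedDeriv (2 * m + 1) (fun y => y ^ m * g y) x) :
    (∀ i < m, Tendsto (iteratedDeriv i (fun y => y ^ (2 * m + 1) * iteratedDeriv (m + 1) g y))
      (nhdsWithin 0 (Ioi 0)) (nhds 0)) ∧
    ∀ x > 0, 0 ≤ (-1 : ℝ) ^ m * iteratedDeriv (m + 1) g x := by
  obtain ⟨c, hc⟩ : ∃ c, Tendsto g (nhdsWithin 0 (Ioi 0)) (nhds c) := by
    have hm := sm_mono hg 0 h1
    rw [iteratedDeriv_zero] at hm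
    refine ⟨_, MonotoneOn.tendsto_nhdsGT hm ⟨0, ?_⟩⟩
    rintro _ ⟨x, hx, rfl⟩
    exact h0 x hx
  obtain ⟨G, hGdef⟩ : ∃ G : ℝ → ℝ, G = fun y => (-1 : ℝ) ^ m * (g y - c) := ⟨_, rfl⟩
  have hG : ContDiffOn ℝ (⊤ : ℕ∞) G (Ioi 0) := by
    rw [hGdef]
    exact contDiffOn_const.mul (hg.sub contDiffOn_const)
  have hGd : ∀ r, iteratedDeriv (r + 1) G = fun x => (-1 : ℝ) ^ m * iteratedDeriv (r + 1) g x := by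
    intro r
    have : deriv G = fun x => (-1 : ℝ) ^ m * deriv g x := by
      funext x
      rw [hGdef, deriv_const_mul_field, deriv_sub_const]
    funext x
    rw [iteratedDeriv_succ', iteratedDeriv_succ', this, iteratedDeriv_const_mul_field]
  have hphi : ∀ i x, iteratedDeriv i (fun y => y ^ (2 * m + 1) * iteratedDeriv (m + 1) G y) x =
      (-1 : ℝ) ^ m * iteratedDeriv i (fun y => y ^ (2 * m + 1) * iteratedDeriv (m + 1) g y) x := by
    intro i x
    rw [← iteratedDeriv_const_mul_field]
    congr 1
    funext y
    rw [hGd]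
    ring
  have hpos : ∀ x > 0,
      0 ≤ iteratedDeriv m (fun y => y ^ (2 * m + 1) * iteratedDeriv (m + 1) G y) x := by
    intro x hx
    rw [hphi, ← key_identity hg m hx]
    have := mul_nonneg (pow_pos hx (m + 1)).le (hW x hx)
    linarith
  have hFs : ContDiffOn ℝ (⊤ : ℕ∞) (fun y => y ^ m * G y) (Ioi 0) :=
    (contDiff_id.pow m).contDiffOn.mul hG
  have hmono : MonotoneOn (iteratedDeriv (2 * m) (fun y => y ^ m * G y)) (Ioi 0) := by
    refine sm_mono hFs _ fun x hx => ?_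
    have := hpos x hx
    rw [← key_identity hG m hx] at this
    exact nonneg_of_mul_nonneg_right this (pow_pos hx _)
  have hsml0 : Sml m 0 (fun y => y ^ m * G y) := by
    intro ε hε
    filter_upwards [Metric.tendsto_nhds.1 hc ε hε, self_mem_nhdsWithin] with x hx hx0
    have hx0 : 0 < x := hx0
    have hGx : |G x| ≤ ε := by
      rw [hGdef]
      simp only [abs_mul, abs_pow, abs_neg, abs_one, one_pow, one_mul]
      exact hx.le
    simp only [iteratedDeriv_zero, pow_zero, mul_one, abs_mul, abs_of_pos (pow_pos hx0 m)]
    rw [mul_comm]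
    gcongr
  have hall := sml_div_pow hG (2 * m) m (sml_all hFs m (2 * m) hmono hsml0)
  have hlim := phi_tendsto hG m hall
  have hsg : ((-1 : ℝ) ^ m) * (-1) ^ m = 1 := by rw [← mul_pow]; simp
  refine ⟨fun i hi => ?_, ?_⟩
  · have := (hlim i hi).const_mul ((-1 : ℝ) ^ m)
    rw [mul_zero] at this
    refine this.congr fun x => ?_
    rw [hphi, ← mul_assoc, hsg, one_mul]
  · have hphis : ContDiffOn ℝ (⊤ : ℕ∞)
        (fun y => y ^ (2 * m + 1) * iteratedDeriv (m + 1) G y) (Ioi 0) :=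
      (contDiff_id.pow (2 * m + 1)).contDiffOn.mul (sm_iter hG _)
    have hdown : ∀ i ≤ m, ∀ x > 0,
        0 ≤ iteratedDeriv i (fun y => y ^ (2 * m + 1) * iteratedDeriv (m + 1) G y) x := by
      intro i hi
      induction hi using Nat.decreasingInduction with
      | self => exact hpos
      | of_succ i hi ih =>
        intro x hx
        have hmo := sm_mono hphis i ih
        refine le_of_tendsto (hlim i hi) ?_
        filter_upwards [Ioo_mem_nhdsGT hx] with y hy
        exact hmo hy.1 hx hy.2.le
    intro x hx
    have := hdown 0 (Nat.zero_le _) x hx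
    rw [iteratedDeriv_zero, hGd] at this
    exact nonneg_of_mul_nonneg_right this (pow_pos hx _)

lemma kmono_aux {g : ℝ → ℝ} (hg : ContDiffOn ℝ (⊤ : ℕ∞) g (Ioi 0)) (n : ℕ)
    (h : ∀ x > 0, 0 ≤ (-1 : ℝ) ^ (n + 1) * iteratedDeriv (n + 2) g x) :
    AntitoneOn (fun x => (-1 : ℝ) ^ n * iteratedDeriv (n + 1) g x) (Ioi 0) := by
  have hd : ∀ x > 0, HasDerivAt (fun x => (-1 : ℝ) ^ n * iteratedDeriv (n + 1) g x)
      ((-1 : ℝ) ^ n * iteratedDeriv (n + 2) g x) x :=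
    fun x hx => (sm_hasDeriv hg (n + 1) hx).const_mul _
  refine antitoneOn_of_deriv_nonpos (convex_Ioi 0)
    (fun x hx => (hd x hx).continuousAt.continuousWithinAt) ?_ ?_
  · intro x hx
    rw [interior_Ioi] at hx
    exact (hd x hx).differentiableAt.differentiableWithinAt
  · intro x hx
    rw [interior_Ioi] at hx
    rw [(hd x hx).deriv]
    have := h x hx
    rw [pow_succ] at this
    linarith

lemma kconv_aux {g : ℝ → ℝ} (hg : ContDiffOn ℝ (⊤ : ℕ∞) g (Ioi 0)) (n : ℕ)
    (h : ∀ x > 0, 0 ≤ (-1 : ℝ) ^ (n + 2) * iteratedDeriv (n + 3) g x) :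
    ConvexOn ℝ (Ioi 0) (fun x => (-1 : ℝ) ^ n * iteratedDeriv (n + 1) g x) := by
  have hd : ∀ r, ∀ x > 0, HasDerivAt (fun x => (-1 : ℝ) ^ n * iteratedDeriv r g x)
      ((-1 : ℝ) ^ n * iteratedDeriv (r + 1) g x) x :=
    fun r x hx => (sm_hasDeriv hg r hx).const_mul _
  refine convexOn_of_hasDerivWithinAt2_nonneg (convex_Ioi 0)
    (f' := fun x => (-1 : ℝ) ^ n * iteratedDeriv (n + 2) g x)
    (f'' := fun x => (-1 : ℝ) ^ n * iteratedDeriv (n + 3) g x)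
    (fun x hx => (hd _ x hx).continuousAt.continuousWithinAt) ?_ ?_ ?_
  · intro x hx
    rw [interior_Ioi] at hx
    exact (hd _ x hx).hasDerivWithinAt
  · intro x hx
    rw [interior_Ioi] at hx
    exact (hd _ x hx).hasDerivWithinAt
  · intro x hx
    rw [interior_Ioi] at hx
    have := h x hx
    rw [pow_add] at this
    simpa using this

/-- Proposition 2: if `f` is smooth on `(0,∞)`, nonnegative, and satisfies
the Widder conditions up to order `k`, then with `g = x f` and `φ = x^{2k-1} g^{(k)}`:
(i) `(-1)^n g^{(n+1)} ≥ 0` for `n = 0, …, k-1` (so `g'` is `(k-1)`-monotone);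
(ii) `φ^{(j)}(0+) = 0` for `j = 0, …, k-3`;
(iii) `(-1)^{k-1} φ^{(k-2)}(0+)` exists and is nonnegative. -/
theorem stieltjesK_boundary_behaviour (k : ℕ) (hk : 2 ≤ k) (f : ℝ → ℝ)
    (hf : ∀ x > 0, 0 ≤ f x) (hsmooth : ContDiffOn ℝ (⊤ : ℕ∞) f (Ioi 0))
    (hW : ∀ n, 1 ≤ n → n ≤ k → ∀ x > 0,
      0 ≤ (-1 : ℝ) ^ (n - 1) * iteratedDeriv (2 * n - 1) (fun y => y ^ n * f y) x) :
    (∀ n ≤ k - 1, ∀ x > 0,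
      0 ≤ (-1 : ℝ) ^ n * iteratedDeriv (n + 1) (fun y => y * f y) x) ∧
    KMonotoneOn (k - 1) (fun x => deriv (fun y => y * f y) x) (Ioi 0) ∧
    (∀ j, j + 3 ≤ k →
      Tendsto
        (fun x => iteratedDeriv j
          (fun y => y ^ (2 * k - 1) * iteratedDeriv k (fun z => z * f z) y) x)
        (nhdsWithin 0 (Ioi 0)) (nhds 0)) ∧
    (∃ L : ℝ, 0 ≤ L ∧
      Tendsto
        (fun x => (-1 : ℝ) ^ (k - 1) * iteratedDeriv (k - 2)
          (fun y => y ^ (2 * k - 1) * iteratedDeriv k (fun z => z * f z) y) x)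
        (nhdsWithin 0 (Ioi 0)) (nhds L)) := by
  have hg : ContDiffOn ℝ (⊤ : ℕ∞) (fun y => y * f y) (Ioi 0) := contDiff_id.contDiffOn.mul hsmooth
  have hg0 : ∀ x > 0, 0 ≤ x * f x := fun x hx => mul_nonneg (le_of_lt hx) (hf x hx)
  have hW' : ∀ m, m + 1 ≤ k → ∀ x > 0, 0 ≤ (-1 : ℝ) ^ m *
      iteratedDeriv (2 * m + 1) (fun y => y ^ m * (y * f y)) x := by
    intro m hm x hx
    have h := hW (m + 1) (by omega) hm x hx
    have e : (fun y => y ^ (m + 1) * f y) = fun y => y ^ m * (y * f y) := by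
      funext y; ring
    rw [e, show m + 1 - 1 = m by omega, show 2 * (m + 1) - 1 = 2 * m + 1 by omega] at h
    exact h
  have hg1 : ∀ x > 0, 0 ≤ iteratedDeriv 1 (fun y => y * f y) x := by
    intro x hx
    simpa using hW' 0 (by omega) x hx
  have hcore := fun m (hm : m + 1 ≤ k) => core_s4 hg hg0 hg1 m (hW' m hm)
  have hi : ∀ n ≤ k - 1, ∀ x > 0,
      0 ≤ (-1 : ℝ) ^ n * iteratedDeriv (n + 1) (fun y => y * f y) x :=
    fun n hn => (hcore n (by omega)).2
  have hlim : ∀ i, i + 2 ≤ k → Tendsto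
        (fun x => iteratedDeriv i
          (fun y => y ^ (2 * k - 1) * iteratedDeriv k (fun z => z * f z) y) x)
        (nhdsWithin 0 (Ioi 0)) (nhds 0) := by
    intro i hi
    have h := (hcore (k - 1) (by omega)).1 i (by omega)
    rw [show 2 * (k - 1) + 1 = 2 * k - 1 by omega, show k - 1 + 1 = k by omega] at h
    exact h
  refine ⟨hi, ?_, fun j hj => hlim j (by omega), 0, le_rfl, ?_⟩
  · unfold KMonotoneOn
    split_ifs with h1
    · refine ⟨fun x hx => ?_, ?_⟩
      · simpa using hg1 x hx
      · simpa using kmono_aux hg 0 (hi 1 (by omega))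
    · have e : ∀ n, iteratedDeriv n (fun x => deriv (fun y => y * f y) x) =
          iteratedDeriv (n + 1) (fun y => y * f y) := fun n => iteratedDeriv_succ'.symm
      refine ⟨?_, fun n hn => ?_⟩
      · have := sm_iter hg 1
        rw [iteratedDeriv_one] at this
        refine this.of_le ?_
        generalize k - 1 - 2 = r
        exact_mod_cast le_top
      · rw [e]
        exact ⟨hi n (by omega), kmono_aux hg n (hi (n + 1) (by omega)),
          kconv_aux hg n (hi (n + 2) (by omega))⟩
  · simpa using (hlim (k - 2) (by omega)).const_mul ((-1 : ℝ) ^ (k - 1))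
end
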